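/- arXiv:2410.02105 — 5 statements merged into one kernel-verified Lean document; each statement's English description precedes it below -/
import Mathlib

section
/- For integers n ≥ k ≥ d ≥ 1 and any tuple α = (α_1,…,α_k) of k pairwise distinct rational numbers, the set Z_{n,k,d}(α) is finite with cardinality |Z_{n,k,d}(α)| = (k!·d!/(k−d)!)·Stir(n,d). -/
open MvPolynomial

/-- Stirling numbers of the second kind: the number of set partitions of an `n`-element
set into `d` nonempty blocks, via the standard recurrence. -/
def stirling2 : ℕ → ℕ → ℕ
  | 0, 0 => 1
  | 0, _ + 1 => 0
  | _ + 1, 0 => 0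
  | n + 1, d + 1 => (d + 1) * stirling2 n (d + 1) + stirling2 n d

/-- The locus `Z_{n,k,d}(α) ⊆ ℚ^{n+d}`: points whose coordinates all lie in
`{α_1,…,α_k}`, whose last `d` coordinates are pairwise distinct, and whose first `n`
coordinates form the same set as the last `d` coordinates. -/
def Zfin (n k d : ℕ) (α : Fin k → ℚ) : Set ((Fin n ⊕ Fin d) → ℚ) :=
  {z | (∀ i, ∃ j, z i = α j) ∧
    Function.Injective (fun i : Fin d => z (Sum.inr i)) ∧
    Set.range (fun j : Fin n => z (Sum.inl j)) = Set.range (fun i : Fin d => z (Sum.inr i))}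

/-!
A point of the locus is determined by its last `d` coordinates, an injection `e` of the `d` slots
into the `k` values, together with a tuple of `n` values whose range is that of `e`. There are
`k! / (k - d)!` choices for `e`, and for each of them `d! * Stir(n, d)` choices for the tuple: the
number of maps with a prescribed range `s` of size `d` satisfies the Stirling recurrence up to the
factor `d!`, since after removing one argument, with value `b`, the remaining map has range `s` or
`s \ {b}`.
-/

theorem stirling2_eq_stirlingSecond : ∀ n d : ℕ, stirling2 n d = n.stirlingSecond d
  | 0, 0 | 0, _ + 1 | _ + 1, 0 => rfl
  | n + 1, d + 1 => by
    rw [stirling2, Nat.stirlingSecond_succ_succ, stirling2_eq_stirlingSecond n,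
      stirling2_eq_stirlingSecond n]

section PrescribedRange

open Set

variable {α β : Type*}

theorem insert_eq_iff_eq_or_eq_sdiff {b : β} {s t : Set β} :
    insert b t = s ↔ b ∈ s ∧ (t = s ∨ t = s \ {b}) := by
  constructor
  · rintro rfl
    refine ⟨mem_insert b t, ?_⟩
    by_cases hb : b ∈ t
    · exact .inl (insert_eq_of_mem hb).symm
    · exact .inr (insert_sdiff_self_of_notMem hb).symm
  · rintro ⟨hb, rfl | rfl⟩
    · exact insert_eq_of_mem hb
    · rw [insert_sdiff_singleton, insert_eq_of_mem hb]

theorem range_eq_iff_of_option {f : Option α → β} {s : Set β} :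
    range f = s ↔ f none ∈ s ∧ (range (f ∘ some) = s ∨ range (f ∘ some) = s \ {f none}) := by
  rw [Option.range_eq, insert_eq_iff_eq_or_eq_sdiff]

/-- The decomposition of a map `Option α → β` with range `s` into its value at `none` and its
restriction to `α`: the bijection behind the Stirling recurrence. -/
def optionRangeEqEquiv (s : Set β) :
    {f : Option α → β // range f = s} ≃
      Σ b : s, {g : α → β // range g = s ∨ range g = s \ {↑b}} where
  toFun f := ⟨⟨f.1 none, (range_eq_iff_of_option.1 f.2).1⟩,
    f.1 ∘ some, (range_eq_iff_of_option.1 f.2).2⟩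
  invFun p := ⟨fun a => a.elim p.1 p.2.1, range_eq_iff_of_option.2 ⟨p.1.2, p.2.2⟩⟩
  left_inv f := Subtype.ext <| funext <| by rintro (_ | a) <;> rfl
  right_inv _ := rfl

instance finite_range_eq [Finite α] (s : Set β) [Finite s] :
    Finite {f : α → β // range f = s} :=
  have : {f : α → β | range f = s} ⊆ {f | ∀ a, f a ∈ s} := fun _ hf a => hf ▸ mem_range_self a
  (Finite.pi' fun _ => s.toFinite).subset this

theorem disjoint_range_eq_range_eq_sdiff {s : Set β} {b : β} (hb : b ∈ s) :
    Disjoint (fun g : α → β => range g = s) (fun g => range g = s \ {b}) := by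
  refine Pi.disjoint_iff.2 fun g => Prop.disjoint_iff.2 fun ⟨h, h'⟩ => ?_
  have : b ∈ s \ {b} := h' ▸ h ▸ hb
  exact this.2 rfl

theorem card_range_eq_of_option [Finite α] (s : Set β) [Fintype s] :
    Nat.card {f : Option α → β // range f = s} =
      ∑ b : s, (Nat.card {g : α → β // range g = s} +
        Nat.card {g : α → β // range g = s \ {↑b}}) := by
  classical
  rw [Nat.card_congr <| (optionRangeEqEquiv s).trans <| .sigmaCongrRight fun b =>
    subtypeOrEquiv _ _ (disjoint_range_eq_range_eq_sdiff b.2), Nat.card_sigma]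
  simp only [Nat.card_sum]

theorem card_range_eq_of_isEmpty [IsEmpty α] (s : Set β) [Finite s] :
    Nat.card {f : α → β // range f = s} =
      s.ncard.factorial * Nat.stirlingSecond 0 s.ncard := by
  simp only [range_eq_empty]
  rcases s.eq_empty_or_nonempty with rfl | hs
  · simp
  · simp [hs.ne_empty.symm, Nat.stirlingSecond_eq_zero_of_lt ((ncard_pos).2 hs)]

theorem card_range_eq [Finite α] (s : Set β) [Finite s] :
    Nat.card {f : α → β // range f = s} =
      s.ncard.factorial * (Nat.card α).stirlingSecond s.ncard := by
  induction α using Finite.induction_empty_option generalizing s with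
  | of_equiv e ih =>
    rw [← Nat.card_congr e, ← ih s]
    exact Nat.card_congr <| (e.arrowCongr (.refl β)).symm.subtypeEquiv fun f => by
      simp [Equiv.arrowCongr, e.surjective.range_comp]
  | h_empty =>
    rw [card_range_eq_of_isEmpty, Nat.card_of_isEmpty]
  | h_option ih =>
    have := Fintype.ofFinite s
    rw [card_range_eq_of_option, Finite.card_option]
    cases hs : s.ncard with
    | zero =>
      obtain rfl := s.ncard_eq_zero.1 hs
      simp
    | succ d =>
      have ncard_sdiff (b : s) : (s \ {↑b}).ncard = d := by
        rw [ncard_sdiff_singleton_of_mem b.2, hs, Nat.add_sub_cancel]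
      simp only [ih, ncard_sdiff, hs, Finset.sum_const, Finset.card_univ, smul_eq_mul,
        Fintype.card_eq_nat_card, Nat.card_coe_set_eq, Nat.stirlingSecond_succ_succ,
        Nat.factorial_succ]
      ring

end PrescribedRange

section EqualRangeLocus

open Set

variable {ι δ κ R : Type*}

/-- The locus `Z_{n,k,d}(α)` over an arbitrary type `R` of values, with arbitrary index types `ι`,
`κ`, `δ` in place of the sizes `n`, `k`, `d`. -/
def equalRangeLocus (ι δ : Type*) (α : κ → R) : Set (ι ⊕ δ → R) :=
  {z | (∀ i, ∃ j, z i = α j) ∧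
    Function.Injective (fun i : δ => z (Sum.inr i)) ∧
    range (fun j : ι => z (Sum.inl j)) = range (fun i : δ => z (Sum.inr i))}

theorem mem_equalRangeLocus_iff {α : κ → R} (hα : Function.Injective α) {z : ι ⊕ δ → R} :
    z ∈ equalRangeLocus ι δ α ↔
      ∃ (e : δ ↪ κ) (u : ι → R), range u = range (α ∘ e) ∧ Sum.elim u (α ∘ e) = z := by
  constructor
  · rintro ⟨hvalues, hinj, hrange⟩
    choose e he using fun i : δ => hvalues (Sum.inr i)
    have hinr : z ∘ Sum.inr = α ∘ e := funext he
    have e_injective : Function.Injective e := .of_comp (f := α) (hinr ▸ hinj)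
    refine ⟨⟨e, e_injective⟩, z ∘ Sum.inl, hinr ▸ hrange, ?_⟩
    exact hinr ▸ Sum.elim_comp_inl_inr z
  · rintro ⟨e, u, hu, rfl⟩
    refine ⟨?_, hα.comp e.injective, hu⟩
    rintro (i | i)
    · obtain ⟨j, hj⟩ := hu.subset (mem_range_self i)
      exact ⟨e j, hj.symm⟩
    · exact ⟨e i, rfl⟩

/-- The parametrization of `equalRangeLocus ι δ α` by an injection `e` choosing the `δ`-part
`α ∘ e` and an `ι`-part with the same range. -/
def equalRangePoint (α : κ → R)
    (p : Σ e : δ ↪ κ, {u : ι → R // range u = range (α ∘ e)}) : ι ⊕ δ → R :=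
  Sum.elim p.2 (α ∘ p.1)

theorem range_equalRangePoint {α : κ → R} (hα : Function.Injective α) :
    range (equalRangePoint α) = equalRangeLocus ι δ α := by
  ext z
  simp only [mem_equalRangeLocus_iff hα, mem_range, Sigma.exists, Subtype.exists, exists_prop,
    equalRangePoint]

theorem equalRangePoint_injective {α : κ → R} (hα : Function.Injective α) :
    Function.Injective (equalRangePoint (ι := ι) (δ := δ) α) := by
  rintro ⟨e, u, hu⟩ ⟨e', u', hu'⟩ h
  obtain ⟨rfl, he⟩ := Sum.elim_eq_iff.1 h
  obtain rfl : e = e' := DFunLike.coe_injective (hα.comp_left he)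
  rfl

theorem card_sigma_embedding_range_eq [Finite ι] [Finite δ] [Finite κ] {α : κ → R}
    (hα : Function.Injective α) :
    Nat.card (Σ e : δ ↪ κ, {u : ι → R // range u = range (α ∘ e)}) =
      (Nat.card κ).descFactorial (Nat.card δ) *
        ((Nat.card δ).factorial * (Nat.card ι).stirlingSecond (Nat.card δ)) := by
  have := Fintype.ofFinite δ
  have := Fintype.ofFinite κ
  have ncard_range (e : δ ↪ κ) : (range (α ∘ e)).ncard = Nat.card δ :=
    ncard_range_of_injective (hα.comp e.injective)
  simp [Nat.card_sigma, card_range_eq, ncard_range, Fintype.card_embedding_eq]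

theorem Zfin_finite_and_card_general [Finite ι] [Finite δ] [Finite κ] {α : κ → R}
    (hα : Function.Injective α) :
    (equalRangeLocus ι δ α).Finite ∧
      Nat.card (equalRangeLocus ι δ α) =
        (Nat.card κ).descFactorial (Nat.card δ) * (Nat.card δ).factorial *
          (Nat.card ι).stirlingSecond (Nat.card δ) := by
  rw [← range_equalRangePoint hα, Nat.card_range_of_injective (equalRangePoint_injective hα),
    card_sigma_embedding_range_eq hα, mul_assoc]
  exact ⟨finite_range _, rfl⟩

end EqualRangeLocus

theorem Zfin_eq_equalRangeLocus (n k d : ℕ) (α : Fin k → ℚ) :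
    Zfin n k d α = equalRangeLocus (Fin n) (Fin d) α :=
  rfl

/-- For integers `n ≥ k ≥ d ≥ 1` and any tuple of `k` pairwise distinct
rational numbers `α`, the set `Z_{n,k,d}(α)` is finite of cardinality
`(k!·d!/(k−d)!)·Stir(n,d)`. -/
theorem Zfin_finite_and_card (n k d : ℕ) (hd : 1 ≤ d) (hk : d ≤ k) (hn : k ≤ n)
    (α : Fin k → ℚ) (hα : Function.Injective α) :
    (Zfin n k d α).Finite ∧
      Nat.card (Zfin n k d α) =
        Nat.factorial k * Nat.factorial d / Nat.factorial (k - d) * stirling2 n d := by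
  rw [← Nat.div_mul_right_comm (Nat.factorial_dvd_factorial (Nat.sub_le k d)),
    ← Nat.descFactorial_eq_div hk, stirling2_eq_stirlingSecond, Zfin_eq_equalRangeLocus]
  simpa only [Nat.card_fin] using Zfin_finite_and_card_general (ι := Fin n) (δ := Fin d) hα
end

section
/- Let d ≥ 1 and a ≥ 0 be integers and let I ⊆ ℤ[y_1,…,y_d] be the ideal generated by the complete homogeneous symmetric polynomials h_r(y_1,…,y_d) for all r > a. Then for every 1 ≤ i ≤ d, the polynomial h_{a+i}(y_i, y_{i+1}, …, y_d) lies in I. -/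
open MvPolynomial

/-!
Splitting the monomials of degree `r + 1` in the variables `x, σ` according to whether `x` occurs
gives `h_{r+1}(σ) = h_{r+1}(x, σ) - x h_r(x, σ)`. Hence an ideal containing `h_r(x, σ)` for all
`r > n` contains `h_r(σ)` for all `r > n + 1`: every variable dropped costs one degree. Only the
number of dropped variables matters, so the argument applies to an arbitrary subset of the variables
and proceeds by adding the missing ones back.
-/

section OneVariable

variable {σ R : Type*} [Fintype σ] [DecidableEq σ]

theorem hsymm_option_succ [CommSemiring R] (r : ℕ) :
    hsymm (Option σ) R (r + 1) =
      rename some (hsymm σ R (r + 1)) + X none * hsymm (Option σ) R r := by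
  have without_none (s : Sym σ (r + 1)) :
      ((SymOptionSuccEquiv.decode (.inr s)).1.map (X (R := R))).prod =
        rename some (s.1.map X).prod := by
    simp [map_multiset_prod]
  have with_none (s : Sym (Option σ) r) :
      ((SymOptionSuccEquiv.decode (.inl s)).1.map (X (R := R))).prod =
        X none * (s.1.map X).prod := by
    simp only [SymOptionSuccEquiv.decode_inl, Sym.val_eq_coe, Sym.coe_cons, Multiset.map_cons,
      Multiset.prod_cons]
  calc hsymm (Option σ) R (r + 1)
      = ∑ s, ((SymOptionSuccEquiv.decode s).1.map X).prod :=
        (symOptionSuccEquiv.symm.sum_comp fun s => (s.1.map X).prod).symm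
    _ = ∑ s : Sym σ (r + 1), rename some (s.1.map X).prod +
          ∑ s : Sym (Option σ) r, X none * (s.1.map X).prod := by
        simp only [Fintype.sum_sum_type, without_none, with_none, add_comm]
    _ = rename some (hsymm σ R (r + 1)) + X none * hsymm (Option σ) R r := by
        simp only [hsymm, map_sum, Finset.mul_sum]

theorem rename_comp_some_hsymm_succ_mem {τ : Type*} [CommRing R] {J : Ideal (MvPolynomial τ R)}
    (g : Option σ → τ) {r : ℕ} (hr : rename g (hsymm (Option σ) R r) ∈ J)
    (hr_succ : rename g (hsymm (Option σ) R (r + 1)) ∈ J) :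
    rename (g ∘ some) (hsymm σ R (r + 1)) ∈ J := by
  rw [hsymm_option_succ, map_add, map_mul, rename_rename] at hr_succ
  exact (J.add_mem_iff_left (J.mul_mem_left _ hr)).1 hr_succ

end OneVariable

theorem hsymm_tail_mem_span_general {σ τ R : Type*} [Fintype σ] [DecidableEq σ] [Fintype τ]
    [DecidableEq τ] [CommRing R] (f : σ ↪ τ) {a r : ℕ}
    (hr : a + Fintype.card τ < r + Fintype.card σ) :
    rename f (hsymm σ R r) ∈
      Ideal.span {p : MvPolynomial τ R | ∃ s, a < s ∧ p = hsymm τ R s} := by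
  by_cases hf : Function.Surjective f
  · have card_le := Fintype.card_le_of_embedding f
    refine Ideal.subset_span ⟨r, by lia, ?_⟩
    exact rename_hsymm σ R r (Equiv.ofBijective f ⟨f.injective, hf⟩)
  · have card_lt := Fintype.card_lt_of_injective_not_surjective f f.injective hf
    obtain ⟨x, hx⟩ := not_forall.1 hf
    obtain ⟨r, rfl⟩ := Nat.exists_eq_add_one.2 (show 0 < r by lia)
    have card_option : Fintype.card (Option σ) = Fintype.card σ + 1 := Fintype.card_option
    let g : Option σ ↪ τ := f.optionElim x hx
    exact rename_comp_some_hsymm_succ_mem g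
      (hsymm_tail_mem_span_general g (by lia)) (hsymm_tail_mem_span_general g (by lia))
termination_by Fintype.card τ - Fintype.card σ

/-- If `I ⊆ ℤ[y_1,…,y_d]` is the ideal generated by the complete
homogeneous symmetric polynomials `h_r(y_1,…,y_d)` for all `r > a`, then for every
`1 ≤ i ≤ d` (here `i : Fin d`, zero-indexed), the complete homogeneous symmetric
polynomial `h_{a+i}` in the tail variables `y_i, y_{i+1}, …, y_d` lies in `I`. -/
theorem hsymm_tail_mem_span (d a : ℕ) (hd : 1 ≤ d) (i : Fin d) :
    rename (fun j : Fin (d - (i : ℕ)) =>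
        (⟨(i : ℕ) + (j : ℕ), by have h1 := j.isLt; have h2 := i.isLt; omega⟩ : Fin d))
      (hsymm (Fin (d - (i : ℕ))) ℤ (a + ((i : ℕ) + 1))) ∈
    Ideal.span {p : MvPolynomial (Fin d) ℤ | ∃ r, a < r ∧ p = hsymm (Fin d) ℤ r} :=
  hsymm_tail_mem_span_general ⟨_, fun j k hjk => by simpa [Fin.ext_iff] using hjk⟩
    (by simp only [Fintype.card_fin]; lia)
end

section
/- For integers n ≥ k ≥ d ≥ 1, the set of monomials A_{n,k,d} descends to a ℚ-vector space basis of the quotient ring ℚ[x_1,…,x_n,y_1,…,y_d]/J_{n,k,d}^ℚ; in particular this quotient has ℚ-dimension (k!·d!/(k−d)!)·Stir(n,d). -/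
open MvPolynomial

/-- The elementary symmetric polynomial `e_r` in the x-variables `x_1, …, x_n`. -/
noncomputable def eX (n d r : ℕ) : MvPolynomial (Fin n ⊕ Fin d) ℚ :=
  rename Sum.inl (esymm (Fin n) ℚ r)

/-- The complete homogeneous symmetric polynomial `h_r` in the y-variables `y_1, …, y_d`. -/
noncomputable def hY (n d r : ℕ) : MvPolynomial (Fin n ⊕ Fin d) ℚ :=
  rename Sum.inr (hsymm (Fin d) ℚ r)

/-- The elementary symmetric polynomial `e_r` in the y-variables `y_1, …, y_d`. -/
noncomputable def eY (n d r : ℕ) : MvPolynomial (Fin n ⊕ Fin d) ℚ :=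
  rename Sum.inr (esymm (Fin d) ℚ r)

/-- `Σ_{a+b=r} (−1)^b e_a(x_1,…,x_n)·h_b(y_1,…,y_d)`. -/
noncomputable def genXY (n d r : ℕ) : MvPolynomial (Fin n ⊕ Fin d) ℚ :=
  ∑ j ∈ Finset.range (r + 1),
    (-1 : MvPolynomial (Fin n ⊕ Fin d) ℚ) ^ j * (eX n d (r - j) * hY n d j)

/-- `Σ_{j=0}^{d} (−1)^j x_i^{d−j} e_j(y_1,…,y_d)`. -/
noncomputable def genPow (n d : ℕ) (i : Fin n) : MvPolynomial (Fin n ⊕ Fin d) ℚ :=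
  ∑ j ∈ Finset.range (d + 1),
    (-1 : MvPolynomial (Fin n ⊕ Fin d) ℚ) ^ j * (X (Sum.inl i) ^ (d - j) * eY n d j)

/-- The generating set of the ideal `J_{n,k,d}^ℚ ⊆ ℚ[x_1,…,x_n,y_1,…,y_d]`. -/
def JgensQ (n k d : ℕ) : Set (MvPolynomial (Fin n ⊕ Fin d) ℚ) :=
  {p | ∃ r, k - d < r ∧ p = hY n d r} ∪
  {p | ∃ r, n - d < r ∧ p = genXY n d r} ∪
  {p | ∃ i : Fin n, p = genPow n d i}

/-- An `(n,d)`-staircase: a shuffle of the sequence `(0,1,…,d−1)` with `n−d` copies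
of `d−1`, i.e. the values `0, 1, …, d−1` appear in this order at some increasing set of
`d` positions and every other entry equals `d−1`. -/
def IsStaircase (n d : ℕ) (s : Fin n → ℕ) : Prop :=
  ∃ φ : Fin d → Fin n, StrictMono φ ∧ (∀ t, s (φ t) = t) ∧
    ∀ j : Fin n, (∀ t, j ≠ φ t) → s j = d - 1

/-- An `(n,d)`-substaircase sequence: componentwise at most some `(n,d)`-staircase. -/
def IsSubstaircase (n d : ℕ) (a : Fin n → ℕ) : Prop :=
  ∃ s, IsStaircase n d s ∧ ∀ j, a j ≤ s j

/-- The set of monomials `A_{n,k,d}`: products `x^a · y^b` with `a` an `(n,d)`-substaircase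
sequence and `b_i < k−d+i` for `1 ≤ i ≤ d`. -/
def Aset (n k d : ℕ) : Set (MvPolynomial (Fin n ⊕ Fin d) ℚ) :=
  {p | ∃ a : Fin n → ℕ, ∃ b : Fin d → ℕ, IsSubstaircase n d a ∧
    (∀ i : Fin d, b i < k - d + ((i : ℕ) + 1)) ∧
    p = (∏ j, X (Sum.inl j) ^ a j) * ∏ i, X (Sum.inr i) ^ b i}

open scoped PowerSeries

/-!
Multiply the series `∏ 1 / (1 - y_i T)` of the complete symmetric polynomials by a power series `F`
with constant coefficient `1`: this deforms `J_{n,k,d}`, which is the case `F = 1`.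

The monomials of `A_{n,k,d}` span modulo every such deformation. For `y` this is the usual
triangular reduction. For `x`, the mixed relations say that the coefficients of degree larger than
`n` of `T ^ d * ∏ (1 + x_j T) / ∏ (1 + y_i T)` vanish. Removing the factor `1 + x_j T` of one
variable weakens this to a linear recurrence, whose Hankel minors are in the ideal; whether its
order grows depends on the exponent of `x_j`, and this is the substaircase condition read from left
to right.

If `F = ∏ (1 - α_i T)` with `k` distinct nodes `α_i`, the deformed relations vanish at every point
whose `y`-coordinates are distinct nodes and whose `x`-coordinates run through exactly these nodes,
and evaluating at one variable after the other shows that a combination of monomials of `A_{n,k,d}`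
vanishing at all of them is zero. For `α_i = t ^ (i + 1)` over the polynomials in `t`, the monomials
of `A_{n,k,d}` thus span a complement of the deformed ideal. The projection onto it is linear over
the polynomials in `t`, so the complement survives the specialization `t = 0`, where `F = 1`.

Reading substaircases from left to right also gives them the recursion of the words of length `n`
with at least a given number of distinct letters out of `d`.
-/

section GeneratingSeries

variable {A B : Type*} [CommRing A] [CommRing B] {ι κ : Type*}

/-- The generating series `∏ (1 + x_j T)` of the elementary symmetric functions of `x`. -/
noncomputable def elementarySeries [Fintype ι] (x : ι → A) : A⟦X⟧ :=
  ∏ j, (1 + PowerSeries.C (x j) * PowerSeries.X)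

/-- The generating series `∏ 1 / (1 - y_j T)` of the complete homogeneous symmetric functions
of `y`. -/
noncomputable def completeSeries [Fintype ι] (y : ι → A) : A⟦X⟧ :=
  ∏ j, PowerSeries.mk (y j ^ ·)

lemma map_elementarySeries [Fintype ι] (φ : A →+* B) (x : ι → A) :
    (elementarySeries x).map φ = elementarySeries (φ ∘ x) := by
  simp [elementarySeries, map_prod]

lemma map_completeSeries [Fintype ι] (φ : A →+* B) (y : ι → A) :
    (completeSeries y).map φ = completeSeries (φ ∘ y) := by
  simp only [completeSeries, map_prod]
  congr! with j
  ext
  simp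

lemma constantCoeff_elementarySeries [Fintype ι] (x : ι → A) :
    PowerSeries.constantCoeff (elementarySeries x) = 1 := by
  simp [elementarySeries, map_prod]

lemma constantCoeff_completeSeries [Fintype ι] (y : ι → A) :
    PowerSeries.constantCoeff (completeSeries y) = 1 := by
  simp [completeSeries, map_prod, ← PowerSeries.coeff_zero_eq_constantCoeff_apply]

lemma completeSeries_neg [Fintype ι] (y : ι → A) :
    completeSeries (-y) = PowerSeries.rescale (-1) (completeSeries y) := by
  rw [completeSeries, completeSeries, map_prod]
  refine Finset.prod_congr rfl fun j _ => ?_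
  rw [PowerSeries.rescale_mk]
  ext r
  simp [neg_pow (y j)]

lemma geometricSeries_mul_one_add_neg (a : A) :
    PowerSeries.mk (a ^ ·) * (1 + PowerSeries.C (-a) * PowerSeries.X) = 1 := by
  ext (_ | m)
  · simp
  · simp [mul_add, ← mul_assoc, PowerSeries.coeff_succ_mul_X, PowerSeries.coeff_one, pow_succ]

lemma completeSeries_mul_elementarySeries_neg [Fintype ι] (y : ι → A) :
    completeSeries y * elementarySeries (-y) = 1 := by
  rw [completeSeries, elementarySeries, ← Finset.prod_mul_distrib]
  exact Finset.prod_eq_one fun j _ => geometricSeries_mul_one_add_neg (y j)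

lemma completeSeries_neg_mul_elementarySeries [Fintype ι] (y : ι → A) :
    completeSeries (-y) * elementarySeries y = 1 := by
  simpa using completeSeries_mul_elementarySeries_neg (-y)

lemma coeff_succ_mul_one_add_C_mul_X (z : A) (E : A⟦X⟧) (m : ℕ) :
    PowerSeries.coeff (m + 1) (E * (1 + PowerSeries.C z * PowerSeries.X)) =
      PowerSeries.coeff (m + 1) E + z * PowerSeries.coeff m E := by
  rw [mul_add, mul_one, ← mul_assoc, map_add, PowerSeries.coeff_succ_mul_X,
    PowerSeries.coeff_mul_C, mul_comm z]

lemma coeff_prod_one_add_C_mul_X (s : Finset ι) (u : ι → A) (r : ℕ) :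
    PowerSeries.coeff r (∏ i ∈ s, (1 + PowerSeries.C (u i) * PowerSeries.X)) =
      ∑ t ∈ s.powersetCard r, ∏ i ∈ t, u i := by
  simp_rw [Finset.prod_one_add, Finset.prod_mul_distrib, Finset.prod_const, ← map_prod, map_sum,
    PowerSeries.coeff_C_mul, PowerSeries.coeff_X_pow, mul_ite, mul_one, mul_zero,
    ← Finset.sum_filter, Finset.powersetCard_eq_filter, eq_comm]

/-- The denominator `∏ (1 + u (s j) T)` divides the numerator `∏ (1 + u i T)`, so that the quotient
is a polynomial of degree `#ι - #κ`. -/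
lemma coeff_elementarySeries_mul_completeSeries_neg_eq_zero [Fintype ι] [Fintype κ] (u : ι → A)
    {s : κ → ι} (hs : Function.Injective s) {r : ℕ}
    (hr : Fintype.card ι - Fintype.card κ < r) :
    PowerSeries.coeff r (elementarySeries u * completeSeries (-(u ∘ s))) = 0 := by
  classical
  have cancel : elementarySeries u * completeSeries (-(u ∘ s)) =
      ∏ i ∈ Finset.univ \ Finset.univ.image s, (1 + PowerSeries.C (u i) * PowerSeries.X) := by
    have split : elementarySeries u =
        (∏ i ∈ Finset.univ \ Finset.univ.image s, (1 + PowerSeries.C (u i) * PowerSeries.X)) *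
          elementarySeries (u ∘ s) := by
      rw [elementarySeries, ← Finset.prod_sdiff (Finset.subset_univ (Finset.univ.image s)),
        Finset.prod_image hs.injOn]
      rfl
    rw [split, mul_assoc, mul_comm (elementarySeries _), completeSeries_neg_mul_elementarySeries,
      mul_one]
  have card : (Finset.univ \ Finset.univ.image s).card = Fintype.card ι - Fintype.card κ := by
    rw [Finset.card_univ_sdiff, Finset.card_image_of_injective _ hs, Finset.card_univ]
  rw [cancel, coeff_prod_one_add_C_mul_X, Finset.powersetCard_eq_empty.mpr (card.trans_lt hr),
    Finset.sum_empty]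

end GeneratingSeries

section SymmetricPolynomials

variable (σ R : Type*) [CommRing R] [Fintype σ]

lemma coeff_elementarySeries_X (r : ℕ) :
    PowerSeries.coeff r (elementarySeries (X : σ → MvPolynomial σ R)) = esymm σ R r :=
  coeff_prod_one_add_C_mul_X _ _ r

lemma coeff_completeSeries_X [DecidableEq σ] (r : ℕ) :
    PowerSeries.coeff r (completeSeries (X : σ → MvPolynomial σ R)) = hsymm σ R r := by
  rw [completeSeries, PowerSeries.coeff_prod, hsymm, ← Finset.sum_coe_sort]
  symm
  refine Fintype.sum_equiv ((Sym.equivNatSum σ r).trans (Equiv.subtypeEquivRight fun l => by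
    simp [Finsupp.sum_fintype])) _ _ fun s => ?_
  simp only [Sym.val_eq_coe, Finset.prod_multiset_map_count, Equiv.trans_apply,
    Equiv.subtypeEquivRight_apply_coe, Sym.coe_equivNatSum_apply_apply, PowerSeries.coeff_mk]
  refine Finset.prod_subset (Finset.subset_univ _) fun i _ hi => ?_
  simp_all

end SymmetricPolynomials

section LeadingCoefficients

variable {A : Type*} [CommRing A]

lemma coeff_mem_leadingCoeffNth {I : Ideal (Polynomial A)} {p : Polynomial A} (hp : p ∈ I) {m : ℕ}
    (hm : p.natDegree ≤ m) : p.coeff m ∈ I.leadingCoeffNth m :=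
  Submodule.mem_map.2 ⟨p, ⟨Polynomial.mem_degreeLE.2 (Polynomial.degree_le_of_natDegree_le hm), hp⟩,
    rfl⟩

lemma leadingCoeffNth_eq_top_of_monic {I : Ideal (Polynomial A)} {p : Polynomial A} (hp : p ∈ I)
    (hmonic : p.Monic) {m : ℕ} (hm : p.natDegree ≤ m) : I.leadingCoeffNth m = ⊤ := by
  refine top_le_iff.1 (le_trans (le_of_eq ?_) (I.leadingCoeffNth_mono hm))
  exact (((Ideal.eq_top_iff_one _).2 (hmonic.coeff_natDegree ▸
    coeff_mem_leadingCoeffNth hp le_rfl))).symm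

lemma leadingCoeffNth_mono_left {I J : Ideal (Polynomial A)} (h : I ≤ J)
    (c : ℕ) : I.leadingCoeffNth c ≤ J.leadingCoeffNth c :=
  Submodule.map_mono (inf_le_inf_left _ h)

lemma comap_C_le_leadingCoeffNth (I : Ideal (Polynomial A)) (c : ℕ) :
    I.comap Polynomial.C ≤ I.leadingCoeffNth c := fun _ ha =>
  I.leadingCoeffNth_mono c.zero_le ((I.mem_leadingCoeffNth_zero _).2 ha)

lemma degree_sub_monomial_coeff_lt {p : Polynomial A} {m : ℕ}
    (hp : p.degree < (m + 1 : ℕ)) : (p - Polynomial.monomial m (p.coeff m)).degree < m := by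
  rw [Polynomial.degree_lt_iff_coeff_zero] at hp ⊢
  intro i hi
  rw [Polynomial.coeff_sub, Polynomial.coeff_monomial]
  split_ifs with h
  · rw [h, sub_self]
  · rw [hp i (by omega), sub_zero]

variable {R : Type*} [CommRing R] {n : ℕ}

lemma mem_restrictSupport_iff_finSuccEquiv {S : Set (Fin (n + 1) →₀ ℕ)}
    {f : MvPolynomial (Fin (n + 1)) R} :
    f ∈ restrictSupport R S ↔
      ∀ c, (finSuccEquiv R n f).coeff c ∈ restrictSupport R {a | a.cons c ∈ S} := by
  simp only [mem_restrictSupport_iff, Set.subset_def, Finset.mem_coe,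
    mem_support_coeff_finSuccEquiv]
  refine ⟨fun h c a ha => h _ ha, fun h a ha => ?_⟩
  rw [← Finsupp.cons_tail a] at ha ⊢
  exact h _ _ ha

/-- Variable-by-variable spanning: it suffices that, in each degree `c` of the first variable, the
coefficients allowed by `S` and the leading coefficients of `I` span. -/
lemma codisjoint_restrictSupport_of_leadingCoeffNth {S : Set (Fin (n + 1) →₀ ℕ)}
    {I : Ideal (MvPolynomial (Fin (n + 1)) R)}
    (h : ∀ c, Codisjoint (restrictSupport R {a : Fin n →₀ ℕ | a.cons c ∈ S})
      (((I.map (finSuccEquiv R n)).leadingCoeffNth c).restrictScalars R)) :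
    Codisjoint (restrictSupport R S) (I.restrictScalars R) := by
  rw [codisjoint_iff]
  set U := restrictSupport R S ⊔ I.restrictScalars R
  have bounded (m : ℕ) : ∀ p : MvPolynomial (Fin (n + 1)) R,
      (finSuccEquiv R n p).degree < m → p ∈ U := by
    induction m with
    | zero =>
      intro p hp
      obtain rfl : p = 0 := by
        simpa [Polynomial.degree_lt_iff_coeff_zero, ← Polynomial.ext_iff] using hp
      exact zero_mem U
    | succ m ih =>
      intro p hp
      obtain ⟨w, hw, l, hl, sum_eq⟩ := Submodule.mem_sup.1
        ((h m).eq_top.ge (Submodule.mem_top (x := (finSuccEquiv R n p).coeff m)))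
      obtain ⟨_, ⟨degree_q, mem_q⟩, rfl⟩ := Submodule.mem_map.1 hl
      obtain ⟨q, hq, rfl⟩ := (Ideal.mem_map_of_equiv _ _).1 mem_q
      have w_mem : (finSuccEquiv R n).symm (Polynomial.monomial m w) ∈ restrictSupport R S := by
        refine mem_restrictSupport_iff_finSuccEquiv.2 fun c => ?_
        rw [AlgEquiv.apply_symm_apply, Polynomial.coeff_monomial]
        split_ifs with hmc
        exacts [hmc ▸ hw, zero_mem _]
      have lower : (finSuccEquiv R n
          (p - q - (finSuccEquiv R n).symm (Polynomial.monomial m w))).degree < m := by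
        have w_eq : w = (finSuccEquiv R n (p - q)).coeff m := by
          rw [map_sub, Polynomial.coeff_sub, ← sum_eq]
          exact (add_sub_cancel_right _ _).symm
        rw [map_sub _ (p - q), AlgEquiv.apply_symm_apply, w_eq]
        refine degree_sub_monomial_coeff_lt ?_
        rw [map_sub]
        refine (Polynomial.degree_sub_le _ _).trans_lt (max_lt hp ?_)
        exact (Polynomial.mem_degreeLE.1 degree_q).trans_lt (Nat.cast_lt.2 m.lt_succ_self)
      convert add_mem (ih _ lower) (add_mem (Submodule.mem_sup_left w_mem)
        (Submodule.mem_sup_right hq)) using 1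
      abel
  exact top_le_iff.1 fun p _ => bounded _ p
    ((finSuccEquiv R n p).degree_le_natDegree.trans_lt (Nat.cast_lt.2 (Nat.lt_succ_self _)))

end LeadingCoefficients

section HankelMinors

variable {A : Type*} [CommRing A]

/-- The minor of the Hankel matrix `(E_{i+j})` of a power series formed by consecutive entries of
the columns that start at the coefficients of degrees `c j`. -/
noncomputable def hankelMinor (E : A⟦X⟧) {m : ℕ} (c : Fin m → ℕ) : A :=
  (Matrix.of fun i j : Fin m => PowerSeries.coeff (c j + i) E).det

/-- The ideal generated by the `m × m` Hankel minors of a power series that only involve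
coefficients of degree larger than `N`. Over a field it vanishes when the coefficients of degree
larger than `N` satisfy a linear recurrence of order less than `m`. -/
noncomputable def hankelIdeal (E : A⟦X⟧) (N m : ℕ) : Ideal A :=
  Ideal.span {p | ∃ c : Fin m → ℕ, (∀ j, N < c j) ∧ p = hankelMinor E c}

lemma hankelMinor_mem_hankelIdeal (E : A⟦X⟧) {N m : ℕ} {c : Fin m → ℕ} (hc : ∀ j, N < c j) :
    hankelMinor E c ∈ hankelIdeal E N m :=
  Ideal.subset_span ⟨c, hc, rfl⟩

lemma map_hankelMinor {B : Type*} [CommRing B] (φ : A →+* B) (E : A⟦X⟧) {m : ℕ} (c : Fin m → ℕ) :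
    φ (hankelMinor E c) = hankelMinor (E.map φ) c := by
  rw [hankelMinor, RingHom.map_det]
  congr 1

lemma map_hankelIdeal {B : Type*} [CommRing B] (φ : A →+* B) (E : A⟦X⟧) (N m : ℕ) :
    (hankelIdeal E N m).map φ = hankelIdeal (E.map φ) N m := by
  rw [hankelIdeal, Ideal.map_span, hankelIdeal]
  congr 1
  ext p
  constructor
  · rintro ⟨_, ⟨c, hc, rfl⟩, rfl⟩
    exact ⟨c, hc, map_hankelMinor φ E c⟩
  · rintro ⟨c, hc, rfl⟩
    exact ⟨_, ⟨c, hc, rfl⟩, map_hankelMinor φ E c⟩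

/-- Row operations turn all rows but the first into those of `E * (1 + z T)`; expand along the
first one. -/
lemma hankelIdeal_succ_le_mul_one_add (z : A) (E : A⟦X⟧) (N m : ℕ) :
    hankelIdeal E N (m + 1) ≤
      hankelIdeal (E * (1 + PowerSeries.C z * PowerSeries.X)) (N + 1) m := by
  set E' := E * (1 + PowerSeries.C z * PowerSeries.X) with hE'
  refine Ideal.span_le.2 ?_
  rintro _ ⟨c, hc, rfl⟩
  have row_ops : hankelMinor E c = (Matrix.of fun i j : Fin (m + 1) =>
      if i = 0 then PowerSeries.coeff (c j) E else PowerSeries.coeff (c j + i) E').det := by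
    refine Matrix.det_eq_of_forall_row_eq_smul_add_pred (fun _ => -z) (by simp) fun i j => ?_
    simp only [Matrix.of_apply, Fin.val_succ, Fin.succ_ne_zero, if_false, Fin.val_castSucc,
      ← add_assoc, hE', coeff_succ_mul_one_add_C_mul_X]
    ring
  rw [row_ops, Matrix.det_succ_row_zero]
  refine Ideal.sum_mem _ fun j _ => Ideal.mul_mem_left _ _ (Ideal.subset_span
    ⟨fun i => c (j.succAbove i) + 1, fun i => Nat.succ_lt_succ (hc _), ?_⟩)
  rw [hankelMinor]
  congr 1
  ext a b
  simp only [Matrix.submatrix_apply, Matrix.of_apply, Fin.succ_ne_zero, if_false, Fin.val_succ,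
    add_assoc, add_comm 1]

/-- As a polynomial in `z`, a minor of `E * (1 + z T)` has the shifted minor of `E` as leading
coefficient. -/
lemma hankelIdeal_le_leadingCoeffNth (E : A⟦X⟧) (N m : ℕ) :
    hankelIdeal E N m ≤ (hankelIdeal (E.map Polynomial.C *
      (1 + PowerSeries.C Polynomial.X * PowerSeries.X)) (N + 1) m).leadingCoeffNth m := by
  refine Ideal.span_le.2 ?_
  rintro _ ⟨c, hc, rfl⟩
  let M : Matrix (Fin m) (Fin m) A := Matrix.of fun i j => PowerSeries.coeff (c j + i) E
  let M' : Matrix (Fin m) (Fin m) A := Matrix.of fun i j => PowerSeries.coeff (c j + i + 1) E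
  have minor_eq : hankelMinor (E.map Polynomial.C *
        (1 + PowerSeries.C Polynomial.X * PowerSeries.X)) (fun j => c j + 1) =
      ((Polynomial.X : Polynomial A) • M.map Polynomial.C + M'.map Polynomial.C).det := by
    rw [hankelMinor]
    congr 1
    ext1 i j
    rw [Matrix.of_apply, add_right_comm, coeff_succ_mul_one_add_C_mul_X]
    simp [M, M', add_comm]
  have leading : ((Polynomial.X : Polynomial A) • M.map Polynomial.C +
      M'.map Polynomial.C).det.coeff m = hankelMinor E c := by
    simpa only [Fintype.card_fin] using! Polynomial.coeff_det_X_add_C_card M M'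
  have degree_le : ((Polynomial.X : Polynomial A) • M.map Polynomial.C +
      M'.map Polynomial.C).det.natDegree ≤ m := by
    simpa only [Fintype.card_fin] using Polynomial.natDegree_det_X_add_C_le M M'
  rw [SetLike.mem_coe, ← leading]
  exact coeff_mem_leadingCoeffNth
    (minor_eq ▸ hankelMinor_mem_hankelIdeal _ fun j => Nat.succ_lt_succ (hc j)) degree_le

lemma hankelIdeal_eq_top {E : A⟦X⟧} {d N m : ℕ} (hlow : ∀ i < d, PowerSeries.coeff i E = 0)
    (hd : PowerSeries.coeff d E = 1) (hm : N + m ≤ d) : hankelIdeal E N m = ⊤ := by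
  refine (Ideal.eq_top_iff_one _).2 (Ideal.subset_span
    ⟨fun j => d - j, fun j => Nat.lt_sub_of_add_lt (by omega), ?_⟩)
  have triangular : (Matrix.of fun i j : Fin m =>
      PowerSeries.coeff (d - j + i) E).IsLowerTriangular := fun i j hij => by
    have : i < j := hij
    exact hlow _ (by omega)
  rw [hankelMinor, Matrix.det_of_isLowerTriangular _ triangular]
  refine (Finset.prod_eq_one fun i _ => ?_).symm
  rw [Matrix.of_apply, Nat.sub_add_cancel (by omega), hd]

end HankelMinors

section GreedySubstaircases

/-- The height reached when climbing greedily along `a` from height `r`: each entry that does not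
exceed the current height raises it by one. -/
def greedyHeight : {n : ℕ} → ℕ → (Fin n → ℕ) → ℕ
  | 0, r, _ => r
  | _ + 1, r, a => greedyHeight (if a 0 ≤ r then r + 1 else r) (Fin.tail a)

/-- A recursive form of the substaircase condition: the entries are smaller than `d` and the greedy
climb from height `r` reaches height `d`. The `(n, d)`-substaircases are the case `r = 0`. -/
def IsGreedySubstaircase (d r : ℕ) {n : ℕ} (a : Fin n → ℕ) : Prop :=
  (∀ j, a j < d) ∧ d ≤ greedyHeight r a

lemma isGreedySubstaircase_zero_iff {d r : ℕ} {a : Fin 0 → ℕ} :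
    IsGreedySubstaircase d r a ↔ d ≤ r := by
  simp [IsGreedySubstaircase, greedyHeight]

lemma isGreedySubstaircase_succ_iff {d r n : ℕ} {a : Fin (n + 1) → ℕ} :
    IsGreedySubstaircase d r a ↔
      a 0 < d ∧ IsGreedySubstaircase d (if a 0 ≤ r then r + 1 else r) (Fin.tail a) := by
  simp [IsGreedySubstaircase, greedyHeight, Fin.forall_fin_succ, Fin.tail, and_assoc]

lemma isGreedySubstaircase_cons_iff {d r n c : ℕ} {a : Fin n →₀ ℕ} :
    IsGreedySubstaircase d r (a.cons c) ↔
      c < d ∧ IsGreedySubstaircase d (if c ≤ r then r + 1 else r) a :=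
  isGreedySubstaircase_succ_iff

end GreedySubstaircases

section SpanningX

variable {R : Type*} [CommRing R]

/-- The relations left among the variables `x` once the coefficients of degree larger than `n` of
`Q * ∏ (1 + x_j T)` are known to satisfy a linear recurrence of order less than `m`, and each `x_j`
to be a root of `g`. -/
noncomputable def eliminationIdeal (Q : R⟦X⟧) (g : Polynomial R) (n m : ℕ) :
    Ideal (MvPolynomial (Fin n) R) :=
  hankelIdeal (Q.map C * elementarySeries X) n m ⊔
    Ideal.span (Set.range fun j => Polynomial.aeval (X j) g)

variable (Q : R⟦X⟧) (g : Polynomial R) (n m : ℕ)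

lemma finSuccEquiv_aeval_X_succ (j : Fin n) :
    finSuccEquiv R n (Polynomial.aeval (X j.succ) g) =
      Polynomial.C (Polynomial.aeval (X j : MvPolynomial (Fin n) R) g) := by
  rw [← Polynomial.aeval_algHom_apply, finSuccEquiv_X_succ, ← Polynomial.algebraMap_eq,
    Polynomial.aeval_algebraMap_apply]

lemma finSuccEquiv_aeval_X_zero :
    finSuccEquiv R n (Polynomial.aeval (X 0) g) = g.map C := by
  rw [← Polynomial.aeval_algHom_apply, finSuccEquiv_X_zero, Polynomial.aeval_X_left_eq_map]
  rfl

lemma map_finSuccEquiv_mul_elementarySeries_X :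
    (Q.map C * elementarySeries X).map (RingHomClass.toRingHom (finSuccEquiv R n)) =
      (Q.map C * elementarySeries X).map Polynomial.C *
        (1 + PowerSeries.C Polynomial.X * PowerSeries.X) := by
  have scalars : (RingHomClass.toRingHom (finSuccEquiv R n)).comp C = Polynomial.C.comp C := by
    ext1 a
    simp [finSuccEquiv_apply]
  rw [map_mul, map_mul, map_elementarySeries, map_elementarySeries, mul_assoc,
    ← RingHom.comp_apply, ← RingHom.comp_apply, ← PowerSeries.map_comp, ← PowerSeries.map_comp,
    scalars]
  congr 1
  simp [elementarySeries, Fin.prod_univ_succ, finSuccEquiv_X_zero, finSuccEquiv_X_succ, mul_comm]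

lemma hankelIdeal_le_map_eliminationIdeal :
    hankelIdeal ((Q.map C * elementarySeries X).map Polynomial.C *
        (1 + PowerSeries.C Polynomial.X * PowerSeries.X)) (n + 1) m ≤
      (eliminationIdeal Q g (n + 1) m).map (finSuccEquiv R n) := by
  rw [← map_finSuccEquiv_mul_elementarySeries_X]
  exact (map_hankelIdeal (RingHomClass.toRingHom (finSuccEquiv R n)) _ _ _).ge.trans
    (Ideal.map_mono le_sup_left)

lemma span_aeval_le_comap_C_map_eliminationIdeal :
    Ideal.span (Set.range fun j => Polynomial.aeval (X j) g) ≤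
      ((eliminationIdeal Q g (n + 1) m).map (finSuccEquiv R n)).comap Polynomial.C := by
  refine Ideal.span_le.2 ?_
  rintro _ ⟨j, rfl⟩
  simp only [SetLike.mem_coe, Ideal.mem_comap, ← finSuccEquiv_aeval_X_succ]
  exact Ideal.mem_map_of_mem _ (Ideal.mem_sup_right (Ideal.subset_span ⟨j.succ, rfl⟩))

lemma eliminationIdeal_succ_le_leadingCoeffNth (c : ℕ) :
    eliminationIdeal Q g n (m + 1) ≤
      ((eliminationIdeal Q g (n + 1) m).map (finSuccEquiv R n)).leadingCoeffNth c := by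
  refine le_trans (sup_le (Ideal.map_le_iff_le_comap.1 ?_)
    (span_aeval_le_comap_C_map_eliminationIdeal Q g n m)) (comap_C_le_leadingCoeffNth _ c)
  exact (map_hankelIdeal _ _ _ _).le.trans <| (hankelIdeal_succ_le_mul_one_add _ _ _ _).trans <|
    hankelIdeal_le_map_eliminationIdeal Q g n m

lemma eliminationIdeal_le_leadingCoeffNth {c : ℕ} (hc : m ≤ c) :
    eliminationIdeal Q g n m ≤
      ((eliminationIdeal Q g (n + 1) m).map (finSuccEquiv R n)).leadingCoeffNth c :=
  sup_le
    ((hankelIdeal_le_leadingCoeffNth _ n m).trans <|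
      (leadingCoeffNth_mono_left (hankelIdeal_le_map_eliminationIdeal Q g n m) m).trans <|
        Ideal.leadingCoeffNth_mono _ hc)
    ((span_aeval_le_comap_C_map_eliminationIdeal Q g n m).trans (comap_C_le_leadingCoeffNth _ c))

variable {g} in
lemma leadingCoeffNth_map_eliminationIdeal_eq_top (hg : g.Monic) {c : ℕ} (hc : g.natDegree ≤ c) :
    ((eliminationIdeal Q g (n + 1) m).map (finSuccEquiv R n)).leadingCoeffNth c = ⊤ := by
  refine leadingCoeffNth_eq_top_of_monic (p := g.map C) ?_ (hg.map C)
    (Polynomial.natDegree_map_le.trans hc)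
  rw [← finSuccEquiv_aeval_X_zero]
  exact Ideal.mem_map_of_mem _ (Ideal.mem_sup_right (Ideal.subset_span ⟨0, rfl⟩))

variable {Q g} in
theorem codisjoint_greedySubstaircase_eliminationIdeal (hg : g.Monic)
    (hlow : ∀ i < g.natDegree, PowerSeries.coeff i Q = 0)
    (hQ : PowerSeries.coeff g.natDegree Q = 1) (n r : ℕ) :
    Codisjoint (restrictSupport R {a : Fin n →₀ ℕ | IsGreedySubstaircase g.natDegree r a})
      ((eliminationIdeal Q g n (r + 1)).restrictScalars R) := by
  induction n generalizing r with
  | zero =>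
    rcases le_or_gt g.natDegree r with hr | hr
    · simp [isGreedySubstaircase_zero_iff, hr, codisjoint_iff]
    · have minors : hankelIdeal (Q.map C * elementarySeries X) 0 (r + 1) =
          (⊤ : Ideal (MvPolynomial (Fin 0) R)) := by
        refine hankelIdeal_eq_top (d := g.natDegree) (fun i hi => ?_) ?_ (by omega) <;>
        simp_all [elementarySeries]
      simp [eliminationIdeal, minors, codisjoint_iff]
  | succ n ih =>
    refine codisjoint_restrictSupport_of_leadingCoeffNth fun c => ?_
    simp only [Set.mem_ofPred_eq, isGreedySubstaircase_cons_iff]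
    rcases le_or_gt g.natDegree c with hcd | hcd
    · rw [leadingCoeffNth_map_eliminationIdeal_eq_top Q n _ hg hcd]
      simp [codisjoint_iff]
    rcases le_or_gt c r with hcr | hcr
    · simp only [hcd, hcr, true_and, if_true]
      exact (ih (r + 1)).mono_right (eliminationIdeal_succ_le_leadingCoeffNth Q g n (r + 1) c)
    · simp only [hcd, hcr.not_ge, true_and, if_false]
      exact (ih r).mono_right (eliminationIdeal_le_leadingCoeffNth Q g n (r + 1) hcr)

end SpanningX

section SpanningY

variable {R : Type*} [CommRing R] (F : R⟦X⟧)

/-- The ideal generated by the coefficients of degree larger than `e` of `F * ∏ 1 / (1 - y_i T)`.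
For `F = 1` these are the complete homogeneous symmetric polynomials `h_r(y)` with `e < r`. -/
noncomputable def completeIdeal (e d : ℕ) : Ideal (MvPolynomial (Fin d) R) :=
  Ideal.span {p | ∃ r, e < r ∧ p = PowerSeries.coeff r (F.map C * completeSeries X)}

lemma map_finSuccEquiv_mul_completeSeries_X (d : ℕ) :
    (F.map C * completeSeries X).map (RingHomClass.toRingHom (finSuccEquiv R d)) =
      (F.map C * completeSeries X).map Polynomial.C * PowerSeries.mk (Polynomial.X ^ ·) := by
  have scalars : (RingHomClass.toRingHom (finSuccEquiv R d)).comp C = Polynomial.C.comp C := by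
    ext1 a
    simp [finSuccEquiv_apply]
  rw [map_mul, map_mul, map_completeSeries, map_completeSeries, mul_assoc,
    ← RingHom.comp_apply, ← RingHom.comp_apply, ← PowerSeries.map_comp, ← PowerSeries.map_comp,
    scalars]
  congr 1
  simp [completeSeries, Fin.prod_univ_succ, finSuccEquiv_X_zero, finSuccEquiv_X_succ, mul_comm]

lemma coeff_mul_geometricSeries_mem_map_completeIdeal {d e r : ℕ} (hr : e < r) :
    PowerSeries.coeff r
        ((F.map C * completeSeries X).map Polynomial.C * PowerSeries.mk (Polynomial.X ^ ·)) ∈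
      (completeIdeal F e (d + 1)).map (finSuccEquiv R d) := by
  rw [← map_finSuccEquiv_mul_completeSeries_X, PowerSeries.coeff_map]
  exact Ideal.mem_map_of_mem _ (Ideal.subset_span ⟨r, hr, rfl⟩)

lemma coeff_map_C_mul_geometricSeries {A : Type*} [CommRing A] (E : A⟦X⟧) (m : ℕ) :
    PowerSeries.coeff m (E.map Polynomial.C * PowerSeries.mk (Polynomial.X ^ ·)) =
      ∑ ij ∈ Finset.HasAntidiagonal.antidiagonal m,
        Polynomial.C (PowerSeries.coeff ij.1 E) * Polynomial.X ^ ij.2 := by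
  simp [PowerSeries.coeff_mul]

lemma natDegree_coeff_map_C_mul_geometricSeries_le {A : Type*} [CommRing A] (E : A⟦X⟧) (m : ℕ) :
    (PowerSeries.coeff m (E.map Polynomial.C * PowerSeries.mk (Polynomial.X ^ ·))).natDegree ≤
      m := by
  rw [coeff_map_C_mul_geometricSeries]
  exact Polynomial.natDegree_sum_le_of_forall_le _ _ fun ij hij =>
    (Polynomial.natDegree_C_mul_X_pow_le _ _).trans (Finset.HasAntidiagonal.antidiagonal.snd_le hij)

lemma monic_coeff_map_C_mul_geometricSeries {A : Type*} [CommRing A] {E : A⟦X⟧}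
    (hE : PowerSeries.constantCoeff E = 1) (m : ℕ) :
    (PowerSeries.coeff m (E.map Polynomial.C * PowerSeries.mk (Polynomial.X ^ ·))).Monic := by
  refine Polynomial.monic_of_natDegree_le_of_coeff_eq_one m
    (natDegree_coeff_map_C_mul_geometricSeries_le E m) ?_
  rw [coeff_map_C_mul_geometricSeries, Polynomial.finsetSum_coeff,
    Finset.sum_eq_single_of_mem (0, m) (by simp)]
  · simp [hE]
  · rintro ⟨i, j⟩ hij hne
    rw [Polynomial.coeff_C_mul_X_pow, if_neg]
    simp only [Finset.HasAntidiagonal.mem_antidiagonal, ne_eq, Prod.mk.injEq] at hij hne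
    omega

lemma completeIdeal_le_leadingCoeffNth (d e c : ℕ) :
    completeIdeal F (e + 1) d ≤
      ((completeIdeal F e (d + 1)).map (finSuccEquiv R d)).leadingCoeffNth c := by
  refine le_trans (Ideal.span_le.2 ?_) (comap_C_le_leadingCoeffNth _ c)
  rintro _ ⟨_ | r, hr, rfl⟩
  · omega
  rw [SetLike.mem_coe, Ideal.mem_comap, ← PowerSeries.coeff_map]
  set H := (F.map C * completeSeries (X : Fin d → MvPolynomial (Fin d) R)).map Polynomial.C
  have expand : PowerSeries.coeff (r + 1) H =
      PowerSeries.coeff (r + 1) (H * PowerSeries.mk (Polynomial.X ^ ·)) +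
        -Polynomial.X * PowerSeries.coeff r (H * PowerSeries.mk (Polynomial.X ^ ·)) := by
    rw [← coeff_succ_mul_one_add_C_mul_X, mul_assoc, geometricSeries_mul_one_add_neg, mul_one]
  rw [expand]
  exact add_mem (coeff_mul_geometricSeries_mem_map_completeIdeal F (by omega))
    (Ideal.mul_mem_left _ _ (coeff_mul_geometricSeries_mem_map_completeIdeal F (by omega)))

variable {F} in
lemma leadingCoeffNth_map_completeIdeal_eq_top (hF : PowerSeries.constantCoeff F = 1)
    {d e c : ℕ} (hc : e < c) :
    ((completeIdeal F e (d + 1)).map (finSuccEquiv R d)).leadingCoeffNth c = ⊤ := by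
  have constantCoeff_eq : PowerSeries.constantCoeff
      (F.map C * completeSeries (X : Fin d → MvPolynomial (Fin d) R)) = 1 := by
    rw [map_mul, constantCoeff_completeSeries, mul_one,
      ← PowerSeries.coeff_zero_eq_constantCoeff_apply, PowerSeries.coeff_map,
      PowerSeries.coeff_zero_eq_constantCoeff_apply, hF, map_one]
  exact leadingCoeffNth_eq_top_of_monic
    (coeff_mul_geometricSeries_mem_map_completeIdeal F e.lt_succ_self)
    (monic_coeff_map_C_mul_geometricSeries constantCoeff_eq _)
    ((natDegree_coeff_map_C_mul_geometricSeries_le _ _).trans hc)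

variable {F} in
theorem codisjoint_completeIdeal (hF : PowerSeries.constantCoeff F = 1) (d e : ℕ) :
    Codisjoint (restrictSupport R {b : Fin d →₀ ℕ | ∀ i, b i < e + (i + 1)})
      ((completeIdeal F e d).restrictScalars R) := by
  induction d generalizing e with
  | zero => simp [codisjoint_iff]
  | succ d ih =>
    refine codisjoint_restrictSupport_of_leadingCoeffNth fun c => ?_
    rcases le_or_gt c e with hc | hc
    · convert (ih (e + 1)).mono_right
        (Submodule.restrictScalars_mono R (completeIdeal_le_leadingCoeffNth F d e c)) using 2
      ext b
      simp [Fin.forall_fin_succ, Order.lt_add_one_iff, hc, add_right_comm, ← add_assoc]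
    · rw [leadingCoeffNth_map_completeIdeal_eq_top hF hc]
      simp [codisjoint_iff]

end SpanningY

section SumOfVariables

variable {R σ τ : Type*} [CommRing R]

lemma sumAlgEquiv_monomial_sumElim (a : σ →₀ ℕ) (b : τ →₀ ℕ) (c : R) :
    sumAlgEquiv R σ τ (monomial (a.sumElim b) c) = monomial a (monomial b c) := by
  simp only [sumAlgEquiv, monomial, AlgEquiv.trans_apply, AddMonoidAlgebra.lsingle_apply,
    AddMonoidAlgebra.domCongr_single]
  exact (AddMonoidAlgebra.curryAlgEquiv_single (R := R) _ _ c).trans (by congr <;> ext <;> simp)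

lemma coeff_coeff_sumAlgEquiv (f : MvPolynomial (σ ⊕ τ) R) (a : σ →₀ ℕ) (b : τ →₀ ℕ) :
    coeff b (coeff a (sumAlgEquiv R σ τ f)) = coeff (a.sumElim b) f := by
  classical
  induction f using MvPolynomial.induction_on' with
  | monomial u c =>
    obtain ⟨⟨a', b'⟩, rfl⟩ := Finsupp.sumFinsuppEquivProdFinsupp.symm.surjective u
    have inj : a'.sumElim b' = a.sumElim b ↔ a' = a ∧ b' = b :=
      Finsupp.sumFinsuppEquivProdFinsupp.symm.injective.eq_iff.trans Prod.mk_inj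
    change coeff b (coeff a (sumAlgEquiv R σ τ (monomial (a'.sumElim b') c))) =
      coeff (a.sumElim b) (monomial (a'.sumElim b') c)
    rw [sumAlgEquiv_monomial_sumElim, coeff_monomial, coeff_monomial]
    split_ifs <;> simp_all [coeff_monomial]
  | add p q hp hq => simp only [map_add, coeff_add, hp, hq]

/-- The exponents on two blocks of variables whose blocks lie in `S` and `T`. -/
def blockExponents (S : Set (σ →₀ ℕ)) (T : Set (τ →₀ ℕ)) : Set (σ ⊕ τ →₀ ℕ) :=
  Finsupp.sumFinsuppEquivProdFinsupp ⁻¹' (S ×ˢ T)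

lemma sumElim_mem_blockExponents {S : Set (σ →₀ ℕ)} {T : Set (τ →₀ ℕ)} {a : σ →₀ ℕ}
    {b : τ →₀ ℕ} : a.sumElim b ∈ blockExponents S T ↔ a ∈ S ∧ b ∈ T := by
  change Finsupp.sumFinsuppEquivProdFinsupp (Finsupp.sumFinsuppEquivProdFinsupp.symm (a, b)) ∈
    S ×ˢ T ↔ _
  rw [Equiv.apply_symm_apply, Set.mem_prod]

lemma mem_restrictSupport_blockExponents_iff {S : Set (σ →₀ ℕ)} {T : Set (τ →₀ ℕ)}
    {f : MvPolynomial (σ ⊕ τ) R} :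
    f ∈ restrictSupport R (blockExponents S T) ↔
      sumAlgEquiv R σ τ f ∈ restrictSupport (MvPolynomial τ R) S ∧
        ∀ a, coeff a (sumAlgEquiv R σ τ f) ∈ restrictSupport R T := by
  simp only [mem_restrictSupport_iff, Set.subset_def, Finset.mem_coe, mem_support_iff]
  refine ⟨fun h => ⟨fun a ha => ?_, fun a b hb => ?_⟩, fun ⟨hS, hT⟩ u hu => ?_⟩
  · obtain ⟨b, hb⟩ := ne_zero_iff.1 ha
    rw [coeff_coeff_sumAlgEquiv] at hb
    exact (sumElim_mem_blockExponents.1 (h _ hb)).1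
  · rw [coeff_coeff_sumAlgEquiv] at hb
    exact (sumElim_mem_blockExponents.1 (h _ hb)).2
  · obtain ⟨⟨a, b⟩, rfl⟩ := Finsupp.sumFinsuppEquivProdFinsupp.symm.surjective u
    have hab : coeff b (coeff a (sumAlgEquiv R σ τ f)) ≠ 0 := by
      rwa [coeff_coeff_sumAlgEquiv]
    exact sumElim_mem_blockExponents.2 ⟨hS a (ne_zero_iff.2 ⟨b, hab⟩), hT a b hab⟩

/-- Reduce modulo `I` first, then the coefficients modulo `I'`. -/
lemma codisjoint_restrictSupport_blockExponents {S : Set (σ →₀ ℕ)} {T : Set (τ →₀ ℕ)}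
    {I : Ideal (MvPolynomial σ (MvPolynomial τ R))} {I' : Ideal (MvPolynomial τ R)}
    {K : Ideal (MvPolynomial (σ ⊕ τ) R)}
    (hI : Codisjoint (restrictSupport (MvPolynomial τ R) S) (I.restrictScalars _))
    (hI' : Codisjoint (restrictSupport R T) (I'.restrictScalars R))
    (hIK : I ≤ K.map (sumAlgEquiv R σ τ)) (hIK' : I' ≤ (K.map (sumAlgEquiv R σ τ)).comap C) :
    Codisjoint (restrictSupport R (blockExponents S T)) (K.restrictScalars R) := by
  classical
  rw [codisjoint_iff]
  set U := restrictSupport R (blockExponents S T) ⊔ K.restrictScalars R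
  have of_mem_K {q} (hq : q ∈ K.map (sumAlgEquiv R σ τ)) : (sumAlgEquiv R σ τ).symm q ∈ U := by
    obtain ⟨p, hp, rfl⟩ := (Ideal.mem_map_of_equiv _ _).1 hq
    rw [AlgEquiv.symm_apply_apply]
    exact Submodule.mem_sup_right hp
  have of_monomial {a} (ha : a ∈ S) (c) : (sumAlgEquiv R σ τ).symm (monomial a c) ∈ U := by
    obtain ⟨t, ht, l, hl, rfl⟩ := Submodule.mem_sup.1 (hI'.eq_top.ge (Submodule.mem_top (x := c)))
    rw [map_add, map_add]
    refine add_mem (Submodule.mem_sup_left (mem_restrictSupport_blockExponents_iff.2 ?_))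
      (of_mem_K ?_)
    · rw [AlgEquiv.apply_symm_apply]
      refine ⟨(monomial_mem_restrictSupport _).2 (Or.inl ha), fun a' => ?_⟩
      rw [coeff_monomial]
      split_ifs
      exacts [ht, zero_mem _]
    · rw [← mul_one l, ← C_mul_monomial]
      exact Ideal.mul_mem_right _ _ (hIK' hl)
  refine top_le_iff.1 fun p _ => ?_
  obtain ⟨s, hs, l, hl, sum_eq⟩ := Submodule.mem_sup.1
    (hI.eq_top.ge (Submodule.mem_top (x := sumAlgEquiv R σ τ p)))
  rw [← (sumAlgEquiv R σ τ).symm_apply_apply p, ← sum_eq, map_add, ← support_sum_monomial_coeff s,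
    map_sum]
  exact add_mem (sum_mem fun a ha => of_monomial ((mem_restrictSupport_iff _).1 hs ha) _)
    (of_mem_K (hIK hl))

end SumOfVariables

section DeformedRelations

variable {R : Type*} [CommRing R] (F : R⟦X⟧) (n k d : ℕ)

/-- The generators of the deformation of the ideal `J_{n,k,d}` in which the series
`∏ 1 / (1 - y_j T)` of the complete homogeneous symmetric polynomials in `y` is multiplied by `F`.
The case `F = 1` gives the generators of `J_{n,k,d}` itself. -/
def deformedRelations : Set (MvPolynomial (Fin n ⊕ Fin d) R) :=
  {p | ∃ r, k - d < r ∧ p = PowerSeries.coeff r (F.map C * completeSeries (X ∘ Sum.inr))} ∪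
  {p | ∃ r, n - d < r ∧ p =
    PowerSeries.coeff r (elementarySeries (X ∘ Sum.inl) * completeSeries (-(X ∘ Sum.inr)))} ∪
  {p | ∃ i, p = ∏ j, (X (Sum.inl i) - X (Sum.inr j))}

/-- The exponents of the monomials in `A_{n,k,d}`, with the substaircase condition in recursive
form. -/
def admissibleExponents : Set (Fin n ⊕ Fin d →₀ ℕ) :=
  blockExponents {a | IsGreedySubstaircase d 0 a} {b | ∀ i, b i < k - d + (i + 1)}

variable {n k d}

lemma coeff_complete_mem_span_deformedRelations {r : ℕ} (hr : k - d < r) :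
    PowerSeries.coeff r (F.map C * completeSeries (X ∘ Sum.inr)) ∈
      Ideal.span (deformedRelations F n k d) :=
  Ideal.subset_span (Or.inl (Or.inl ⟨r, hr, rfl⟩))

lemma coeff_mixed_mem_span_deformedRelations {r : ℕ} (hr : n - d < r) :
    PowerSeries.coeff r (elementarySeries (X ∘ Sum.inl) * completeSeries (-(X ∘ Sum.inr))) ∈
      Ideal.span (deformedRelations F n k d) :=
  Ideal.subset_span (Or.inl (Or.inr ⟨r, hr, rfl⟩))

lemma prod_sub_mem_span_deformedRelations (i : Fin n) :
    ∏ j, (X (Sum.inl i) - X (Sum.inr j)) ∈ Ideal.span (deformedRelations F n k d) :=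
  Ideal.subset_span (Or.inr ⟨i, rfl⟩)

lemma map_sumAlgEquiv_mul_completeSeries_inr :
    (F.map C * completeSeries (X ∘ Sum.inr)).map
        (RingHomClass.toRingHom (sumAlgEquiv R (Fin n) (Fin d))) =
      (F.map C * completeSeries X).map C := by
  have scalars : (RingHomClass.toRingHom (sumAlgEquiv R (Fin n) (Fin d))).comp C = C.comp C := by
    ext1 a
    simp
  rw [map_mul, map_mul, map_completeSeries, map_completeSeries, ← RingHom.comp_apply,
    ← RingHom.comp_apply, ← PowerSeries.map_comp, ← PowerSeries.map_comp, scalars]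
  congr 2
  ext1 j
  simp

lemma map_sumAlgEquiv_elementarySeries_inl_mul :
    (elementarySeries (X ∘ Sum.inl) * completeSeries (-(X ∘ Sum.inr))).map
        (RingHomClass.toRingHom (sumAlgEquiv R (Fin n) (Fin d))) =
      elementarySeries X * (completeSeries (-X)).map C := by
  rw [map_mul, map_elementarySeries, map_completeSeries, map_completeSeries]
  congr 2 <;> ext1 j <;> simp

lemma completeIdeal_le_comap_C_map_deformedRelations :
    completeIdeal F (k - d) d ≤ ((Ideal.span (deformedRelations F n k d)).map
      (sumAlgEquiv R (Fin n) (Fin d))).comap C := by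
  refine Ideal.span_le.2 ?_
  rintro _ ⟨r, hr, rfl⟩
  rw [SetLike.mem_coe, Ideal.mem_comap, ← PowerSeries.coeff_map,
    ← map_sumAlgEquiv_mul_completeSeries_inr, PowerSeries.coeff_map]
  exact Ideal.mem_map_of_mem _ (coeff_complete_mem_span_deformedRelations F hr)

lemma eliminationIdeal_le_map_deformedRelations (hdn : d ≤ n) :
    eliminationIdeal (PowerSeries.X ^ d * completeSeries (-X))
        (∏ j : Fin d, (Polynomial.X - Polynomial.C (X j : MvPolynomial (Fin d) R))) n 1 ≤
      (Ideal.span (deformedRelations F n k d)).map (sumAlgEquiv R (Fin n) (Fin d)) := by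
  refine sup_le (Ideal.span_le.2 ?_) (Ideal.span_le.2 ?_)
  · rintro _ ⟨c, hc, rfl⟩
    have hc0 := hc 0
    rw [SetLike.mem_coe, hankelMinor, Matrix.det_fin_one, Matrix.of_apply, Fin.val_zero,
      add_zero, map_mul (PowerSeries.map C), map_pow, PowerSeries.map_X, mul_assoc,
      PowerSeries.coeff_X_pow_mul', if_pos (by omega), mul_comm,
      ← map_sumAlgEquiv_elementarySeries_inl_mul, PowerSeries.coeff_map]
    exact Ideal.mem_map_of_mem _ (coeff_mixed_mem_span_deformedRelations F (by omega))
  · rintro _ ⟨i, rfl⟩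
    convert Ideal.mem_map_of_mem (sumAlgEquiv R (Fin n) (Fin d))
      (prod_sub_mem_span_deformedRelations F (k := k) i) using 1
    simp [map_prod]

variable {F} in
theorem codisjoint_deformedRelations [Nontrivial R] (hF : PowerSeries.constantCoeff F = 1)
    (hdn : d ≤ n) :
    Codisjoint (restrictSupport R (admissibleExponents n k d))
      ((Ideal.span (deformedRelations F n k d)).restrictScalars R) := by
  set g := ∏ j : Fin d, (Polynomial.X - Polynomial.C (X j : MvPolynomial (Fin d) R)) with hg
  have degree_g : g.natDegree = d := by
    simp [hg, Polynomial.natDegree_finsetProd_X_sub_C_eq_card]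
  have spanning_x := codisjoint_greedySubstaircase_eliminationIdeal
    (Q := PowerSeries.X ^ d * completeSeries (-X)) (Polynomial.monic_prod_X_sub_C _ _ : g.Monic)
    (fun i hi => by rw [PowerSeries.coeff_X_pow_mul', if_neg (hi.trans_eq degree_g).not_ge])
    (by simp [PowerSeries.coeff_X_pow_mul', constantCoeff_completeSeries]) n 0
  rw [degree_g] at spanning_x
  exact codisjoint_restrictSupport_blockExponents spanning_x (codisjoint_completeIdeal hF d (k - d))
    (eliminationIdeal_le_map_deformedRelations F hdn)
    (completeIdeal_le_comap_C_map_deformedRelations F)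

end DeformedRelations

section Independence

variable {A : Type*} [CommRing A]

lemma eq_zero_of_degree_lt_card_of_eval_eq_zero {ι : Type*} {v : ι → A}
    (hv : Pairwise fun i j => v i - v j ∈ nonZeroDivisors A) (s : Finset ι) {p : Polynomial A}
    (hdeg : p.degree < s.card) (hp : ∀ i ∈ s, p.eval (v i) = 0) : p = 0 := by
  classical
  induction s using Finset.induction_on generalizing p with
  | empty => simpa [Polynomial.degree_lt_iff_coeff_zero, ← Polynomial.ext_iff] using hdeg
  | insert i s hi ih =>
    nontriviality A
    obtain ⟨q, rfl⟩ := Polynomial.dvd_iff_isRoot.2 (hp i (Finset.mem_insert_self i s))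
    have degree_q : q.degree < s.card := by
      rw [mul_comm, (Polynomial.monic_X_sub_C _).degree_mul, Polynomial.degree_X_sub_C,
        Finset.card_insert_of_notMem hi] at hdeg
      exact lt_of_add_lt_add_right (by exact_mod_cast hdeg)
    have eval_q (j : ι) (hj : j ∈ s) : q.eval (v j) = 0 := by
      have hij : j ≠ i := fun h => hi (h ▸ hj)
      have hpj := hp j (Finset.mem_insert_of_mem hj)
      rw [Polynomial.eval_mul, Polynomial.eval_sub, Polynomial.eval_X, Polynomial.eval_C] at hpj
      exact (mul_left_mem_nonZeroDivisors_eq_zero_iff (hv hij)).1 hpj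
    rw [ih degree_q eval_q, mul_zero]

lemma eq_zero_of_isEmpty_of_eval_eq_zero {σ : Type*} [IsEmpty σ] {f : MvPolynomial σ A} {w : σ → A}
    (hf : eval w f = 0) : f = 0 := by
  rw [eq_C_of_isEmpty f, eval_C] at hf
  rw [eq_C_of_isEmpty f, hf, map_zero]

lemma eq_zero_of_coeff_finSuccEquiv_eq_zero {n : ℕ} {f : MvPolynomial (Fin (n + 1)) A}
    (hf : ∀ c, (finSuccEquiv A n f).coeff c = 0) : f = 0 :=
  (finSuccEquiv A n).injective ((Polynomial.ext hf).trans (map_zero _).symm)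

variable {ι : Type*} {v : ι → A} {n : ℕ}

/-- A polynomial of degree less than `#s` in its first variable is determined by its values at
`#s` nodes. -/
lemma eval_coeff_finSuccEquiv_eq_zero
    (hv : Pairwise fun i j => v i - v j ∈ nonZeroDivisors A) (s : Finset ι)
    {f : MvPolynomial (Fin (n + 1)) A} {w : Fin n → A}
    (hdeg : ∀ c ≥ s.card, (finSuccEquiv A n f).coeff c = 0)
    (hf : ∀ i ∈ s, eval (Fin.cons (v i) w : Fin (n + 1) → A) f = 0) (c : ℕ) :
    eval w ((finSuccEquiv A n f).coeff c) = 0 := by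
  have vanish : (finSuccEquiv A n f).map (eval w) = 0 := by
    refine eq_zero_of_degree_lt_card_of_eval_eq_zero hv s ?_ fun i hi => ?_
    · rw [Polynomial.degree_lt_iff_coeff_zero]
      intro c hc
      rw [Polynomial.coeff_map, hdeg c hc, map_zero]
    · rw [← hf i hi, eval_eq_eval_mv_eval']
  rw [← Polynomial.coeff_map, vanish, Polynomial.coeff_zero]

lemma image_univ_cons {ι : Type*} [DecidableEq ι] {n : ℕ} (t : ι) (φ : Fin n → ι) :
    Finset.univ.image (Fin.cons t φ : Fin (n + 1) → ι) = insert t (Finset.univ.image φ) := by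
  ext
  simp [Fin.exists_fin_succ, eq_comm]

/-- Peel off the first variable. At an assignment `φ` of the other variables whose image is large
enough every node may be chosen for the first one; if the image is one element too small, the
`r + 1` missing nodes are left, and only the degrees at most `r` remain to be treated. -/
theorem eq_zero_of_mem_restrictSupport_greedySubstaircase [Fintype ι] [DecidableEq ι]
    (hv : Pairwise fun i j => v i - v j ∈ nonZeroDivisors A) {r : ℕ}
    {f : MvPolynomial (Fin n) A}
    (hf : f ∈ restrictSupport A
      {a : Fin n →₀ ℕ | IsGreedySubstaircase (Fintype.card ι) r a})
    (vanish : ∀ φ : Fin n → ι, Fintype.card ι ≤ (Finset.univ.image φ).card + r →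
      eval (v ∘ φ) f = 0) : f = 0 := by
  induction n generalizing r with
  | zero =>
    rcases le_or_gt (Fintype.card ι) r with hr | hr
    · exact eq_zero_of_isEmpty_of_eval_eq_zero (vanish Fin.elim0 (hr.trans (Nat.le_add_left _ _)))
    · simpa [isGreedySubstaircase_zero_iff, hr.not_ge, mem_restrictSupport_iff] using hf
  | succ n ih =>
    rw [mem_restrictSupport_iff_finSuccEquiv] at hf
    simp only [Set.mem_ofPred_eq, isGreedySubstaircase_cons_iff] at hf
    have coeff_mem {c s} (h : (if c ≤ r then r + 1 else r) = s) : (finSuccEquiv A n f).coeff c ∈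
        restrictSupport A {a : Fin n →₀ ℕ | IsGreedySubstaircase (Fintype.card ι) s a} :=
      restrictSupport_mono _ (fun a ha => h ▸ ha.2) (hf c)
    have vanish_cons {φ : Fin n → ι} {t : ι}
        (hφ : Fintype.card ι ≤ (insert t (Finset.univ.image φ)).card + r) :
        eval (Fin.cons (v t) (v ∘ φ) : Fin (n + 1) → A) f = 0 := by
      rw [← Fin.comp_cons]
      exact vanish _ (by rwa [image_univ_cons])
    have large_image {φ : Fin n → ι} (hφ : Fintype.card ι ≤ (Finset.univ.image φ).card + r) (c) :
        eval (v ∘ φ) ((finSuccEquiv A n f).coeff c) = 0 := by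
      refine eval_coeff_finSuccEquiv_eq_zero hv Finset.univ (fun c hc => ?_) (fun t _ =>
        vanish_cons (hφ.trans (by gcongr; exact Finset.subset_insert _ _))) c
      simpa [mem_restrictSupport_iff, (Finset.card_univ.symm.trans_le hc).not_gt] using hf c
    have high_eq_zero {c} (hc : r < c) : (finSuccEquiv A n f).coeff c = 0 :=
      ih (coeff_mem (if_neg hc.not_ge)) fun φ hφ => large_image hφ c
    have low_eq_zero {c} (hc : c ≤ r) : (finSuccEquiv A n f).coeff c = 0 := by
      refine ih (coeff_mem (if_pos hc)) fun φ hφ => ?_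
      rcases le_or_gt (Fintype.card ι) ((Finset.univ.image φ).card + r) with hr | hr
      · exact large_image hr c
      have card_compl : (Finset.univ.image φ)ᶜ.card = r + 1 := by
        rw [Finset.card_compl]
        omega
      refine eval_coeff_finSuccEquiv_eq_zero hv (Finset.univ.image φ)ᶜ
        (fun c hc => high_eq_zero (card_compl.symm.trans_le hc)) (fun t ht => vanish_cons ?_) c
      rw [Finset.card_insert_of_notMem (Finset.mem_compl.1 ht)]
      omega
    exact eq_zero_of_coeff_finSuccEquiv_eq_zero fun c =>
      (le_or_gt c r).elim low_eq_zero high_eq_zero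

theorem eq_zero_of_mem_restrictSupport_of_injective [Fintype ι]
    (hv : Pairwise fun i j => v i - v j ∈ nonZeroDivisors A) {e d : ℕ}
    (hcard : Fintype.card ι = e + d) {f : MvPolynomial (Fin d) A}
    (hf : f ∈ restrictSupport A {b : Fin d →₀ ℕ | ∀ i, b i < e + (i + 1)})
    (vanish : ∀ g : Fin d → ι, Function.Injective g → eval (v ∘ g) f = 0) : f = 0 := by
  classical
  induction d generalizing e with
  | zero =>
    exact eq_zero_of_isEmpty_of_eval_eq_zero
      (vanish Fin.elim0 (Function.injective_of_subsingleton _))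
  | succ d ih =>
    rw [mem_restrictSupport_iff_finSuccEquiv] at hf
    simp only [Set.mem_ofPred_eq, Fin.forall_fin_succ, Finsupp.cons_zero, Finsupp.cons_succ,
      Fin.val_zero, Fin.val_succ] at hf
    refine eq_zero_of_coeff_finSuccEquiv_eq_zero fun c => ?_
    refine ih (e := e + 1) (by omega) (restrictSupport_mono _ (fun b hb i => ?_) (hf c))
      fun g hg => ?_
    · exact (hb.2 i).trans_eq (by omega)
    have card_compl : (Finset.univ.image g)ᶜ.card = e + 1 := by
      rw [Finset.card_compl, Finset.card_image_of_injective _ hg, Finset.card_fin]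
      omega
    refine eval_coeff_finSuccEquiv_eq_zero hv (Finset.univ.image g)ᶜ (fun c hc => ?_)
      (fun t ht => ?_) c
    · have hce : ¬ c < e + (0 + 1) := by omega
      simpa [mem_restrictSupport_iff, hce] using hf c
    · rw [← Fin.comp_cons]
      refine vanish _ (Fin.cons_injective_iff.2 ⟨?_, hg⟩)
      simpa using ht

lemma eval_sumElim_eq_eval_map_sumAlgEquiv {σ τ : Type*} (u : σ → A) (w : τ → A)
    (f : MvPolynomial (σ ⊕ τ) A) :
    eval (Sum.elim u w) f = eval u (map (eval w) (sumAlgEquiv A σ τ f)) := by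
  induction f using MvPolynomial.induction_on with
  | C a => simp
  | add p q hp hq => simp [hp, hq]
  | mul_X p i hp => rcases i with i | i <;> simp [hp]

variable [Fintype ι] {d : ℕ}

lemma eval_eq_zero_of_mem_span_deformedRelations {φ : Fin n → Fin d}
    (hφ : Function.Surjective φ) {g : Fin d → ι} (hg : Function.Injective g)
    {p : MvPolynomial (Fin n ⊕ Fin d) A}
    (hp : p ∈ Ideal.span (deformedRelations (elementarySeries (-v)) n (Fintype.card ι) d)) :
    eval (Sum.elim (v ∘ g ∘ φ) (v ∘ g)) p = 0 := by
  rw [← RingHom.mem_ker]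
  refine (Ideal.span_le.2 ?_) hp
  rintro _ ((⟨r, hr, rfl⟩ | ⟨r, hr, rfl⟩) | ⟨i, rfl⟩)
  all_goals rw [SetLike.mem_coe, RingHom.mem_ker]
  · have image : ((elementarySeries (-v)).map C * completeSeries (X ∘ Sum.inr)).map
        (eval (Sum.elim (v ∘ g ∘ φ) (v ∘ g))) =
          elementarySeries (-v) * completeSeries (-((-v) ∘ g)) := by
      rw [map_mul, map_elementarySeries, map_elementarySeries, map_completeSeries]
      congr 2 <;> ext1 j <;> simp
    rw [← PowerSeries.coeff_map, image]
    exact coeff_elementarySeries_mul_completeSeries_neg_eq_zero _ hg (by simpa using hr)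
  · have image : (elementarySeries (X ∘ Sum.inl) * completeSeries (-(X ∘ Sum.inr))).map
        (eval (Sum.elim (v ∘ g ∘ φ) (v ∘ g))) =
          elementarySeries (v ∘ g ∘ φ) *
            completeSeries (-((v ∘ g ∘ φ) ∘ Function.surjInv hφ)) := by
      rw [map_mul, map_elementarySeries, map_completeSeries]
      congr 2 <;> ext1 j <;> simp [Function.surjInv_eq hφ]
    rw [← PowerSeries.coeff_map, image]
    exact coeff_elementarySeries_mul_completeSeries_neg_eq_zero _ (Function.injective_surjInv hφ)
      (by simpa using hr)
  · rw [map_prod]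
    exact Finset.prod_eq_zero (Finset.mem_univ (φ i)) (by simp)

/-- Over nodes `v` the deformed relations vanish at the points `(v ∘ g ∘ φ, v ∘ g)`, and these
suffice to separate the admissible monomials. -/
theorem disjoint_deformedRelations_elementarySeries
    (hv : Pairwise fun i j => v i - v j ∈ nonZeroDivisors A) (hd : d ≤ Fintype.card ι) :
    Disjoint (restrictSupport A (admissibleExponents n (Fintype.card ι) d))
      ((Ideal.span (deformedRelations (elementarySeries (-v)) n (Fintype.card ι) d)).restrictScalars
        A) := by
  rw [Submodule.disjoint_def]
  intro f hf hfI
  obtain ⟨hx, hy⟩ := mem_restrictSupport_blockExponents_iff.1 hf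
  have vanish_x {g : Fin d → ι} (hg : Function.Injective g) :
      map (eval (v ∘ g)) (sumAlgEquiv A _ _ f) = 0 := by
    refine eq_zero_of_mem_restrictSupport_greedySubstaircase (v := v ∘ g) (r := 0)
      (fun i j hij => hv (hg.ne hij)) ?_ fun φ hφ => ?_
    · rw [mem_restrictSupport_iff, Fintype.card_fin]
      exact (Finset.coe_subset.2 (support_map_subset _ _)).trans ((mem_restrictSupport_iff _).1 hx)
    · have image_eq : Finset.univ.image φ = Finset.univ :=
        Finset.eq_univ_of_card _ (le_antisymm (Finset.card_le_univ _) hφ)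
      have surjective : Function.Surjective φ := fun j => by
        simpa using Finset.eq_univ_iff_forall.1 image_eq j
      rw [Function.comp_assoc, ← eval_sumElim_eq_eval_map_sumAlgEquiv]
      exact eval_eq_zero_of_mem_span_deformedRelations surjective hg hfI
  have coeff_eq_zero (a) : coeff a (sumAlgEquiv A _ _ f) = 0 :=
    eq_zero_of_mem_restrictSupport_of_injective hv (by omega) (hy a) fun g hg => by
      rw [← coeff_map, vanish_x hg, coeff_zero]
  exact (sumAlgEquiv A _ _).injective ((MvPolynomial.ext _ _ coeff_eq_zero).trans (map_zero _).symm)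

end Independence

section Specialization

variable {A R σ : Type*} [CommRing A] [CommRing R]

lemma map_apply_eq_zero_of_map_eq_zero (ε : A →+* R)
    (π : MvPolynomial σ A →ₗ[A] MvPolynomial σ A) {p : MvPolynomial σ A} (hp : map ε p = 0) :
    map ε (π p) = 0 := by
  have coeff_eq_zero (u : σ →₀ ℕ) : ε (coeff u p) = 0 := by
    rw [← coeff_map, hp, coeff_zero]
  rw [p.as_sum, map_sum, map_sum]
  refine Finset.sum_eq_zero fun u _ => ?_
  rw [← mul_one (coeff u p), ← smul_eq_mul, ← smul_monomial, map_smul, smul_eq_C_mul, map_mul,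
    map_C, coeff_eq_zero, map_zero, zero_mul]

lemma exists_mem_restrictSupport_map_eq {ε : A →+* R} (hε : Function.Surjective ε)
    {S : Set (σ →₀ ℕ)} {f : MvPolynomial σ R} (hf : f ∈ restrictSupport R S) :
    ∃ g ∈ restrictSupport A S, map ε g = f := by
  choose lift hlift using hε
  refine ⟨∑ u ∈ f.support, monomial u (lift (coeff u f)), ?_, ?_⟩
  · exact Submodule.sum_mem _ fun u hu =>
      (monomial_mem_restrictSupport A).2 (Or.inl (((mem_restrictSupport_iff _).1 hf) hu))
  · simp only [map_sum, map_monomial, hlift]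
    exact f.as_sum.symm

/-- The projection onto the restricted support along `I` is `A`-linear, so it preserves the kernel
of the specialization. -/
theorem disjoint_restrictSupport_map_of_isCompl {ε : A →+* R} (hε : Function.Surjective ε)
    {S : Set (σ →₀ ℕ)} {I : Ideal (MvPolynomial σ A)}
    (h : IsCompl (restrictSupport A S) (I.restrictScalars A)) :
    Disjoint (restrictSupport R S) ((I.map (map ε)).restrictScalars R) := by
  rw [Submodule.disjoint_def]
  intro f hfS hfI
  obtain ⟨p, hpS, rfl⟩ := exists_mem_restrictSupport_map_eq hε hfS
  obtain ⟨q, hqI, hqp⟩ := (Ideal.mem_map_iff_of_surjective _ (map_surjective _ hε)).1 hfI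
  have proj_sub : Submodule.projection _ _ h (p - q) = p := by
    rw [map_sub, Submodule.projection_apply_of_mem_left h hpS,
      (Submodule.projection_apply_eq_zero_iff h).2 hqI, sub_zero]
  rw [← proj_sub]
  exact map_apply_eq_zero_of_map_eq_zero ε _ (by rw [map_sub, hqp, sub_self])

lemma span_deformedRelations_map_le (ε : A →+* R) (F : A⟦X⟧) (n k d : ℕ) :
    Ideal.span (deformedRelations (F.map ε) n k d) ≤
      (Ideal.span (deformedRelations F n k d)).map (map ε) := by
  have scalars : (map ε).comp C = (C.comp ε : A →+* MvPolynomial (Fin n ⊕ Fin d) R) := by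
    ext1 a
    simp
  have complete : (F.map C * completeSeries (X ∘ Sum.inr)).map (map ε) =
      (F.map ε).map C * completeSeries (X ∘ Sum.inr : Fin d → MvPolynomial (Fin n ⊕ Fin d) R) := by
    rw [map_mul, map_completeSeries, ← RingHom.comp_apply, ← PowerSeries.map_comp, scalars,
      PowerSeries.map_comp, RingHom.comp_apply]
    congr 2
    ext1 j
    simp
  have mixed : (elementarySeries (X ∘ Sum.inl) * completeSeries (-(X ∘ Sum.inr))).map (map ε) =
      (elementarySeries (X ∘ Sum.inl) * completeSeries (-(X ∘ Sum.inr)) :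
        (MvPolynomial (Fin n ⊕ Fin d) R)⟦X⟧) := by
    rw [map_mul, map_elementarySeries, map_completeSeries]
    congr 2 <;> ext1 j <;> simp
  have prod_sub (i : Fin n) : map ε (∏ j, (X (Sum.inl i) - X (Sum.inr j))) =
      ∏ j : Fin d, (X (Sum.inl i) - X (Sum.inr j)) := by
    simp
  refine Ideal.span_le.2 ?_
  rintro _ ((⟨r, hr, rfl⟩ | ⟨r, hr, rfl⟩) | ⟨i, rfl⟩)
  · rw [← complete, PowerSeries.coeff_map]
    exact Ideal.mem_map_of_mem _ (coeff_complete_mem_span_deformedRelations F hr)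
  · rw [← mixed, PowerSeries.coeff_map]
    exact Ideal.mem_map_of_mem _ (coeff_mixed_mem_span_deformedRelations F hr)
  · rw [← prod_sub]
    exact Ideal.mem_map_of_mem _ (prod_sub_mem_span_deformedRelations F i)

lemma X_pow_sub_X_pow_mem_nonZeroDivisors {a b : ℕ} (hab : a ≠ b) :
    (Polynomial.X ^ a - Polynomial.X ^ b : Polynomial R) ∈ nonZeroDivisors (Polynomial R) := by
  nontriviality R
  wlog hlt : b < a generalizing a b
  · rw [← neg_sub, ← neg_one_mul]
    exact mul_mem (isUnit_one.neg.mem_nonZeroDivisors) (this hab.symm (by omega))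
  exact (Polynomial.monic_X_pow_sub (by simpa using hlt)).mem_nonZeroDivisors

theorem isCompl_deformedRelations_one [Nontrivial R] {n k d : ℕ} (hdk : d ≤ k) (hdn : d ≤ n) :
    IsCompl (restrictSupport R (admissibleExponents n k d))
      ((Ideal.span (deformedRelations (1 : R⟦X⟧) n k d)).restrictScalars R) := by
  refine ⟨?_, codisjoint_deformedRelations (map_one _) hdn⟩
  set v : Fin k → Polynomial R := fun i => Polynomial.X ^ (i + 1 : ℕ)
  have hv : Pairwise fun i j => v i - v j ∈ nonZeroDivisors (Polynomial R) := fun i j hij =>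
    X_pow_sub_X_pow_mem_nonZeroDivisors (by simpa [Fin.ext_iff] using hij)
  have generic : IsCompl (restrictSupport (Polynomial R) (admissibleExponents n k d))
      ((Ideal.span (deformedRelations (elementarySeries (-v)) n k d)).restrictScalars _) := by
    refine ⟨?_, codisjoint_deformedRelations (constantCoeff_elementarySeries _) hdn⟩
    simpa using disjoint_deformedRelations_elementarySeries hv (by simpa using hdk)
  have special : (elementarySeries (-v)).map Polynomial.constantCoeff = 1 := by
    rw [map_elementarySeries]
    simp [elementarySeries, v]
  rw [← special]
  exact (disjoint_restrictSupport_map_of_isCompl Polynomial.constantCoeff_surjective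
    generic).mono_right (span_deformedRelations_map_le _ _ _ _ _)

end Specialization

section Substaircases

variable {n r m : ℕ}

lemma exists_strictMono_eq_succ {φ : Fin m → Fin (n + 1)} (hφ : StrictMono φ)
    (h : ∀ t, φ t ≠ 0) : ∃ ψ : Fin m → Fin n, StrictMono ψ ∧ ∀ t, φ t = (ψ t).succ := by
  choose ψ hψ using fun t => Fin.exists_succ_eq.2 (h t)
  refine ⟨ψ, fun s t hst => Fin.succ_lt_succ_iff.1 ?_, fun t => (hψ t).symm⟩
  rw [hψ, hψ]
  exact hφ hst

lemma exists_strictMono_le_succ_iff_of_lt {a : Fin (n + 1) → ℕ} (h0 : r < a 0) :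
    (∃ φ : Fin m → Fin (n + 1), StrictMono φ ∧ ∀ t, a (φ t) ≤ r + t) ↔
      ∃ φ : Fin m → Fin n, StrictMono φ ∧ ∀ t, Fin.tail a (φ t) ≤ r + t := by
  constructor
  · rintro ⟨φ, hφ, hle⟩
    have ne_zero (t : Fin m) : φ t ≠ 0 := fun ht => by
      have : NeZero m := ⟨t.pos.ne'⟩
      have first : φ 0 = 0 := Fin.le_zero_iff.1 ((hφ.monotone (Fin.zero_le t)).trans_eq ht)
      exact h0.not_ge (by simpa [first] using hle 0)
    obtain ⟨ψ, hψ, eq⟩ := exists_strictMono_eq_succ hφ ne_zero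
    exact ⟨ψ, hψ, fun t => (congrArg a (eq t)).ge.trans (hle t)⟩
  · rintro ⟨ψ, hψ, hle⟩
    exact ⟨_, Fin.strictMono_succ.comp hψ, hle⟩

lemma exists_strictMono_le_succ_iff_of_le {a : Fin (n + 1) → ℕ} (h0 : a 0 ≤ r) :
    (∃ φ : Fin (m + 1) → Fin (n + 1), StrictMono φ ∧ ∀ t, a (φ t) ≤ r + t) ↔
      ∃ φ : Fin m → Fin n, StrictMono φ ∧ ∀ t, Fin.tail a (φ t) ≤ r + 1 + t := by
  constructor
  · rintro ⟨φ, hφ, hle⟩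
    obtain ⟨ψ, hψ, eq⟩ := exists_strictMono_eq_succ (hφ.comp Fin.strictMono_succ) fun t =>
      ((Fin.zero_le _).trans_lt (hφ t.succ_pos)).ne'
    refine ⟨ψ, hψ, fun t => ?_⟩
    have hle_t := hle t.succ
    rw [← Function.comp_apply (f := φ), eq, Fin.val_succ] at hle_t
    exact hle_t.trans_eq (by omega)
  · rintro ⟨ψ, hψ, hle⟩
    refine ⟨Fin.cons 0 (Fin.succ ∘ ψ),
      Fin.strictMono_cons.2 ⟨fun _ => Fin.succ_pos _, Fin.strictMono_succ.comp hψ⟩,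
      Fin.cases h0 fun t => ?_⟩
    exact (hle t).trans_eq (by rw [Fin.val_succ]; omega)

/-- Choosing the positions greedily from the left is optimal. -/
theorem add_le_greedyHeight_iff {a : Fin n → ℕ} :
    r + m ≤ greedyHeight r a ↔ ∃ φ : Fin m → Fin n, StrictMono φ ∧ ∀ t, a (φ t) ≤ r + t := by
  induction n generalizing r m with
  | zero =>
    rw [greedyHeight]
    refine ⟨fun h => ?_, fun ⟨φ, _⟩ => ?_⟩
    · obtain rfl : m = 0 := by omega
      exact ⟨Fin.elim0, fun t => t.elim0, fun t => t.elim0⟩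
    · rcases m with _ | m
      · rfl
      · exact (φ 0).elim0
  | succ n ih =>
    rw [greedyHeight]
    split_ifs with h0
    · rcases m with _ | m
      · have le_height : r + 1 + 0 ≤ greedyHeight (r + 1) (Fin.tail a) :=
          ih.2 ⟨Fin.elim0, fun t => t.elim0, fun t => t.elim0⟩
        exact ⟨fun _ => ⟨Fin.elim0, fun t => t.elim0, fun t => t.elim0⟩, fun _ => by omega⟩
      · rw [exists_strictMono_le_succ_iff_of_le h0, ← ih, add_right_comm, add_assoc]
    · rw [exists_strictMono_le_succ_iff_of_lt (not_le.1 h0), ih]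

lemma isSubstaircase_iff_exists_strictMono {d : ℕ} (hd : 1 ≤ d) {a : Fin n → ℕ} :
    IsSubstaircase n d a ↔
      (∀ j, a j < d) ∧ ∃ φ : Fin d → Fin n, StrictMono φ ∧ ∀ t, a (φ t) ≤ t := by
  constructor
  · rintro ⟨s, ⟨φ, hφ, on_image, off_image⟩, hle⟩
    refine ⟨fun j => (hle j).trans_lt ?_, φ, hφ, fun t => (hle _).trans_eq (on_image t)⟩
    by_cases hj : ∃ t, j = φ t
    · obtain ⟨t, rfl⟩ := hj
      exact (on_image t).trans_lt t.2
    · exact (off_image j (not_exists.1 hj)).trans_lt (by omega)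
  · rintro ⟨hlt, φ, hφ, hle⟩
    have on_image (t : Fin d) : Function.extend φ (fun t => (t : ℕ)) (fun _ => d - 1) (φ t) = t :=
      hφ.injective.extend_apply _ _ t
    have off_image {j : Fin n} (hj : ∀ t, j ≠ φ t) :
        Function.extend φ (fun t => (t : ℕ)) (fun _ => d - 1) j = d - 1 :=
      Function.extend_apply' _ _ _ fun ⟨t, ht⟩ => hj t ht.symm
    refine ⟨_, ⟨φ, hφ, on_image, fun j => off_image⟩, fun j => ?_⟩
    by_cases hj : ∃ t, j = φ t
    · obtain ⟨t, rfl⟩ := hj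
      exact (hle t).trans_eq (on_image t).symm
    · exact (Nat.le_sub_one_of_lt (hlt j)).trans_eq (off_image (not_exists.1 hj)).symm

theorem isGreedySubstaircase_zero_iff_isSubstaircase {d : ℕ} (hd : 1 ≤ d) {a : Fin n → ℕ} :
    IsGreedySubstaircase d 0 a ↔ IsSubstaircase n d a := by
  have climb := add_le_greedyHeight_iff (r := 0) (m := d) (a := a)
  simp only [zero_add] at climb
  rw [isSubstaircase_iff_exists_strictMono hd, IsGreedySubstaircase, climb]

end Substaircases

section Counting

variable {d n : ℕ}

lemma descFactorial_mul_stirling2_succ_succ (d n p : ℕ) :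
    d.descFactorial (p + 1) * stirling2 (n + 1) (p + 1) =
      (p + 1) * (d.descFactorial (p + 1) * stirling2 n (p + 1)) +
        (d - p) * (d.descFactorial p * stirling2 n p) := by
  rw [stirling2, Nat.descFactorial_succ]
  ring

/-- The number of maps from `Fin n` to `Fin d` with at least `q` elements in their image, as a sum
over the size `p` of the image. -/
def imageCardGeCount (d n q : ℕ) : ℕ :=
  ∑ p ∈ Finset.Icc q d, d.descFactorial p * stirling2 n p

lemma imageCardGeCount_eq_add {q : ℕ} (hq : q ≤ d) :
    imageCardGeCount d n q =
      d.descFactorial q * stirling2 n q + imageCardGeCount d n (q + 1) := by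
  rw [imageCardGeCount, imageCardGeCount, ← Finset.insert_Icc_add_one_left_eq_Icc hq,
    Finset.sum_insert (by simp)]

lemma imageCardGeCount_self (d n : ℕ) :
    imageCardGeCount d n d = d.factorial * stirling2 n d := by
  simp [imageCardGeCount, Nat.descFactorial_self]

lemma imageCardGeCount_zero_left (d q : ℕ) :
    imageCardGeCount d 0 q = if q = 0 then 1 else 0 := by
  have positive (q : ℕ) : imageCardGeCount d 0 (q + 1) = 0 := by
    refine Finset.sum_eq_zero fun p hp => ?_
    obtain ⟨p, rfl⟩ :=
      Nat.exists_eq_add_of_le' ((Nat.le_add_left 1 q).trans (Finset.mem_Icc.1 hp).1)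
    rfl
  rcases q with _ | q
  · rw [imageCardGeCount_eq_add (Nat.zero_le d), positive]
    simp [stirling2]
  · exact positive q

lemma imageCardGeCount_succ_succ (d n q : ℕ) :
    imageCardGeCount d (n + 1) (q + 1) = d * imageCardGeCount d n (q + 1) +
      (d - q) * (d.descFactorial q * stirling2 n q) := by
  induction h : d - q generalizing q with
  | zero => simp [imageCardGeCount, Finset.Icc_eq_empty (by omega : ¬ q + 1 ≤ d)]
  | succ m ih =>
    have hq : q + 1 ≤ d := by omega
    rw [imageCardGeCount_eq_add hq, ih (q + 1) (by omega), descFactorial_mul_stirling2_succ_succ,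
      imageCardGeCount_eq_add hq]
    obtain ⟨e, rfl⟩ := Nat.exists_eq_add_of_le hq
    obtain rfl : e = m := by omega
    rw [show q + 1 + e - q = e + 1 by omega]
    ring

lemma imageCardGeCount_succ_zero (d n : ℕ) :
    imageCardGeCount d (n + 1) 0 = d * imageCardGeCount d n 0 := by
  rw [imageCardGeCount_eq_add (Nat.zero_le d), imageCardGeCount_eq_add (Nat.zero_le d),
    imageCardGeCount_succ_succ, stirling2]
  simp
  ring

lemma card_subtype_isGreedySubstaircase_succ (d r n : ℕ) :
    Nat.card {a : Fin (n + 1) → ℕ // IsGreedySubstaircase d r a} =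
      ∑ c : Fin d, Nat.card {a : Fin n → ℕ //
        IsGreedySubstaircase d (if (c : ℕ) ≤ r then r + 1 else r) a} := by
  let consEquiv : {a : Fin (n + 1) → ℕ // IsGreedySubstaircase d r a} ≃
      Σ c : Fin d, {a : Fin n → ℕ //
        IsGreedySubstaircase d (if (c : ℕ) ≤ r then r + 1 else r) a} :=
    { toFun a := ⟨⟨a.1 0, a.2.1 0⟩, Fin.tail a.1, (isGreedySubstaircase_succ_iff.1 a.2).2⟩
      invFun p := ⟨Fin.cons p.1 p.2.1, isGreedySubstaircase_succ_iff.2 ⟨p.1.2, p.2.2⟩⟩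
      left_inv a := Subtype.ext (Fin.cons_self_tail _)
      right_inv _ := rfl }
  have (r' : ℕ) : Finite {a : Fin n → ℕ // IsGreedySubstaircase d r' a} :=
    (Set.Finite.pi fun _ => Set.finite_Iio d).subset fun a ha j _ => ha.1 j
  rw [Nat.card_congr consEquiv, Nat.card_sigma]

lemma sum_ite_val_le (d r a b : ℕ) :
    ∑ c : Fin d, (if (c : ℕ) ≤ r then a else b) = min d (r + 1) * a + (d - (r + 1)) * b := by
  have card_le : (Finset.univ.filter fun c : Fin d => (c : ℕ) ≤ r).card = min d (r + 1) := by
    simp only [← Nat.lt_succ_iff, Fin.card_filter_val_lt]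
  have card_gt : (Finset.univ.filter fun c : Fin d => ¬ (c : ℕ) ≤ r).card = d - (r + 1) := by
    rw [Finset.filter_not, Finset.card_sdiff_of_subset (Finset.filter_subset _ _), card_le,
      Finset.card_fin]
    omega
  rw [Finset.sum_ite, Finset.sum_const, Finset.sum_const, card_le, card_gt, smul_eq_mul,
    smul_eq_mul]

theorem card_subtype_isGreedySubstaircase (d r n : ℕ) :
    Nat.card {a : Fin n → ℕ // IsGreedySubstaircase d r a} = imageCardGeCount d n (d - r) := by
  induction n generalizing r with
  | zero =>
    rw [imageCardGeCount_zero_left]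
    simp only [isGreedySubstaircase_zero_iff, Nat.sub_eq_zero_iff_le]
    split_ifs with h <;> simp [h]
  | succ n ih =>
    rw [card_subtype_isGreedySubstaircase_succ]
    simp only [ih, apply_ite (d - ·), apply_ite (imageCardGeCount d n), sum_ite_val_le]
    rcases le_or_gt d r with hr | hr
    · rw [Nat.sub_eq_zero_of_le hr, Nat.sub_eq_zero_of_le (hr.trans r.le_succ),
        imageCardGeCount_succ_zero, min_eq_left (hr.trans r.le_succ), zero_mul, add_zero]
    · obtain ⟨q, rfl⟩ := Nat.exists_eq_add_of_le' hr
      have sub_eq : q + r.succ - r = q + 1 := by omega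
      rw [sub_eq, Nat.add_sub_cancel, imageCardGeCount_succ_succ,
        imageCardGeCount_eq_add (Nat.le_add_right q _), min_eq_right (Nat.le_add_left _ q),
        Nat.add_sub_cancel_left]
      ring

lemma card_subtype_lt_add_succ (e d : ℕ) :
    Nat.card {b : Fin d → ℕ // ∀ i : Fin d, b i < e + (i + 1)} = (e + 1).ascFactorial d := by
  rw [Nat.card_congr (Equiv.subtypePiEquivPi (p := fun (i : Fin d) (c : ℕ) => c < e + (i + 1))),
    Nat.card_pi, Nat.ascFactorial_eq_prod_range, ← Fin.prod_univ_eq_prod_range]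
  refine Finset.prod_congr rfl fun i _ => ?_
  rw [← Nat.card_congr Fin.equivSubtype, Nat.card_fin]
  ring

lemma card_blockExponents {σ τ : Type*} (S : Set (σ →₀ ℕ)) (T : Set (τ →₀ ℕ)) :
    Nat.card (blockExponents S T) = Nat.card S * Nat.card T := by
  rw [← Nat.card_prod]
  exact Nat.card_congr ((Finsupp.sumFinsuppEquivProdFinsupp.subtypeEquiv fun _ => Iff.rfl).trans
    Equiv.subtypeProdEquivProd)

theorem card_admissibleExponents {k : ℕ} (hdk : d ≤ k) :
    Nat.card (admissibleExponents n k d) =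
      k.factorial * d.factorial / (k - d).factorial * stirling2 n d := by
  have card_x : Nat.card {a : Fin n →₀ ℕ | IsGreedySubstaircase d 0 a} =
      d.factorial * stirling2 n d :=
    (Nat.card_congr (Finsupp.equivFunOnFinite.subtypeEquiv fun _ => Iff.rfl)).trans
      ((card_subtype_isGreedySubstaircase d 0 n).trans (imageCardGeCount_self d n))
  have card_y : Nat.card {b : Fin d →₀ ℕ | ∀ i : Fin d, b i < k - d + (i + 1)} =
      k.factorial / (k - d).factorial := by
    have factorials := Nat.ascFactorial_eq_div (k - d) d
    rw [Nat.sub_add_cancel hdk] at factorials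
    rw [← factorials]
    exact (Nat.card_congr (Finsupp.equivFunOnFinite.subtypeEquiv fun _ => Iff.rfl)).trans
      (card_subtype_lt_add_succ _ _)
  rw [admissibleExponents, card_blockExponents, card_x, card_y, mul_comm k.factorial,
    Nat.mul_div_assoc _ (Nat.factorial_dvd_factorial (Nat.sub_le k d))]
  ring

end Counting

section QuotientBasis

variable {R σ : Type*} [CommRing R] {S : Set (σ →₀ ℕ)} {I : Ideal (MvPolynomial σ R)}

/-- The monomials with exponent in `S`, as a basis of the quotient by an ideal complementary to
their span. -/
noncomputable def quotientMonomialBasis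
    (h : IsCompl (restrictSupport R S) (I.restrictScalars R)) :
    Module.Basis S R (MvPolynomial σ R ⧸ I) :=
  (basisRestrictSupport R S).map ((Submodule.quotientEquivOfIsCompl _ _ h.symm).symm.trans
    (Submodule.Quotient.restrictScalarsEquiv R I))

lemma coe_basisRestrictSupport_apply (u : S) :
    (basisRestrictSupport R S u : MvPolynomial σ R) = monomial u 1 :=
  congrArg (fun f => AddMonoidAlgebra.ofCoeff (f : (σ →₀ ℕ) →₀ R))
    (Finsupp.supportedEquivFinsupp_symm_single S u (1 : R))

lemma quotientMonomialBasis_apply (h : IsCompl (restrictSupport R S) (I.restrictScalars R))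
    (u : S) : quotientMonomialBasis h u = Ideal.Quotient.mk I (monomial u 1) := by
  rw [quotientMonomialBasis, Module.Basis.map_apply, LinearEquiv.trans_apply,
    Submodule.quotientEquivOfIsCompl_symm_apply, Submodule.Quotient.restrictScalarsEquiv_mk,
    coe_basisRestrictSupport_apply]
  rfl

theorem monomials_descend_to_basis [Nontrivial R]
    (h : IsCompl (restrictSupport R S) (I.restrictScalars R)) :
    LinearIndependent R (fun p : (monomial · (1 : R)) '' S => Ideal.Quotient.mk I p) ∧
    Submodule.span R (Ideal.Quotient.mk I '' ((monomial · (1 : R)) '' S)) = ⊤ ∧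
    Module.finrank R (MvPolynomial σ R ⧸ I) = Nat.card S := by
  have injective : Function.Injective ((monomial · 1) : (σ →₀ ℕ) → MvPolynomial σ R) :=
    monomial_left_injective one_ne_zero
  refine ⟨?_, ?_, Module.finrank_eq_nat_card_basis (quotientMonomialBasis h)⟩
  · rw [← linearIndependent_equiv (Equiv.Set.image _ S injective)]
    convert (quotientMonomialBasis h).linearIndependent
    exact funext fun u => (quotientMonomialBasis_apply h u).symm
  · rw [← (quotientMonomialBasis h).span_eq, Set.image_image, Set.image_eq_range,
      funext (quotientMonomialBasis_apply h)]

end QuotientBasis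

section SubstaircaseMonomials

/-- The set of monomials `A_{n,k,d}`, over an arbitrary coefficient ring. -/
def substaircaseMonomials (R : Type*) [CommRing R] (n k d : ℕ) :
    Set (MvPolynomial (Fin n ⊕ Fin d) R) :=
  {p | ∃ a : Fin n → ℕ, ∃ b : Fin d → ℕ, IsSubstaircase n d a ∧
    (∀ i : Fin d, b i < k - d + ((i : ℕ) + 1)) ∧
    p = (∏ j, X (Sum.inl j) ^ a j) * ∏ i, X (Sum.inr i) ^ b i}

lemma prod_X_pow_mul_prod_X_pow_eq_monomial {R σ τ : Type*} [CommRing R] [Fintype σ] [Fintype τ]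
    (a : σ →₀ ℕ) (b : τ →₀ ℕ) :
    (∏ j, X (Sum.inl j) ^ a j) * ∏ i, X (Sum.inr i) ^ b i =
      (monomial (a.sumElim b) 1 : MvPolynomial (σ ⊕ τ) R) := by
  rw [monomial_eq, C_1, one_mul, Finsupp.prod_fintype _ _ fun _ => pow_zero _,
    Fintype.prod_sum_type]
  simp

lemma substaircaseMonomials_eq_image {R : Type*} [CommRing R] {n k d : ℕ} (hd : 1 ≤ d) :
    substaircaseMonomials R n k d = (monomial · 1) '' admissibleExponents n k d := by
  ext p
  constructor
  · rintro ⟨a, b, ha, hb, rfl⟩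
    refine ⟨(Finsupp.equivFunOnFinite.symm a).sumElim (Finsupp.equivFunOnFinite.symm b),
      sumElim_mem_blockExponents.2 ⟨?_, hb⟩, ?_⟩
    · exact (isGreedySubstaircase_zero_iff_isSubstaircase hd).2 ha
    · exact (prod_X_pow_mul_prod_X_pow_eq_monomial _ _).symm
  · rintro ⟨u, hu, rfl⟩
    obtain ⟨⟨a, b⟩, rfl⟩ := Finsupp.sumFinsuppEquivProdFinsupp.symm.surjective u
    obtain ⟨ha, hb⟩ := sumElim_mem_blockExponents.1 hu
    exact ⟨a, b, (isGreedySubstaircase_zero_iff_isSubstaircase hd).1 ha, hb,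
      (prod_X_pow_mul_prod_X_pow_eq_monomial _ _).symm⟩

end SubstaircaseMonomials

section Relations

variable (n d : ℕ)

lemma hY_eq_coeff (r : ℕ) :
    hY n d r = PowerSeries.coeff r (completeSeries (X ∘ Sum.inr)) := by
  let φ : MvPolynomial (Fin d) ℚ →ₐ[ℚ] MvPolynomial (Fin n ⊕ Fin d) ℚ := rename Sum.inr
  rw [hY, ← coeff_completeSeries_X]
  trans PowerSeries.coeff r ((completeSeries X).map φ.toRingHom)
  · exact (PowerSeries.coeff_map _ _ _).symm
  · rw [map_completeSeries]
    exact congrArg _ (congrArg _ (funext fun j => rename_X _ j))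

lemma eX_eq_coeff (r : ℕ) :
    eX n d r = PowerSeries.coeff r (elementarySeries (X ∘ Sum.inl)) := by
  let φ : MvPolynomial (Fin n) ℚ →ₐ[ℚ] MvPolynomial (Fin n ⊕ Fin d) ℚ := rename Sum.inl
  rw [eX, ← coeff_elementarySeries_X]
  trans PowerSeries.coeff r ((elementarySeries X).map φ.toRingHom)
  · exact (PowerSeries.coeff_map _ _ _).symm
  · rw [map_elementarySeries]
    exact congrArg _ (congrArg _ (funext fun j => rename_X _ j))

lemma genXY_eq_coeff (r : ℕ) :
    genXY n d r =
      PowerSeries.coeff r (elementarySeries (X ∘ Sum.inl) * completeSeries (-(X ∘ Sum.inr))) := by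
  rw [mul_comm, completeSeries_neg, PowerSeries.coeff_mul,
    Finset.Nat.sum_antidiagonal_eq_sum_range_succ_mk]
  refine Finset.sum_congr rfl fun j _ => ?_
  rw [PowerSeries.coeff_rescale, ← hY_eq_coeff, ← eX_eq_coeff]
  ring

lemma genPow_eq_prod_sub (i : Fin n) :
    genPow n d i = ∏ j, (X (Sum.inl i) - X (Sum.inr j)) := by
  have eY_eq (j : ℕ) : eY n d j = (Finset.univ.val.map (X ∘ Sum.inr)).esymm j := by
    rw [eY, ← aeval_esymm_eq_multiset_esymm (Fin d) ℚ, ← aeval_rename, aeval_X_left_apply]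
  have vieta := congrArg (Polynomial.eval (X (Sum.inl i))) (Multiset.prod_X_sub_X_eq_sum_esymm
    (Finset.univ.val.map (X ∘ Sum.inr : Fin d → MvPolynomial (Fin n ⊕ Fin d) ℚ)))
  simp only [Polynomial.eval_finsetSum, Polynomial.eval_multiset_prod, Multiset.map_map,
    Multiset.card_map, Finset.card_val, Finset.card_univ, Fintype.card_fin] at vieta
  calc genPow n d i
  _ = _ := Finset.sum_congr rfl fun j _ => by
    rw [eY_eq, mul_comm (X _ ^ _)]
    simp only [Polynomial.eval_mul, Polynomial.eval_pow, Polynomial.eval_neg, Polynomial.eval_one,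
      Polynomial.eval_C, Polynomial.eval_X]
  _ = _ := vieta.symm
  _ = ∏ j, (X (Sum.inl i) - X (Sum.inr j)) := Finset.prod_congr rfl fun j _ => by simp

theorem JgensQ_eq_deformedRelations_one (n k d : ℕ) : JgensQ n k d = deformedRelations 1 n k d := by
  simp only [JgensQ, deformedRelations, map_one, one_mul, hY_eq_coeff, genXY_eq_coeff,
    genPow_eq_prod_sub]

end Relations

theorem Aset_descends_to_basis_general {R : Type*} [CommRing R] [Nontrivial R] (n k d : ℕ)
    (hd : 1 ≤ d) (hk : d ≤ k) (hn : d ≤ n) :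
    LinearIndependent R (fun p : substaircaseMonomials R n k d =>
      Ideal.Quotient.mk (Ideal.span (deformedRelations 1 n k d))
        (p : MvPolynomial (Fin n ⊕ Fin d) R)) ∧
    Submodule.span R
      (⇑(Ideal.Quotient.mk (Ideal.span (deformedRelations 1 n k d))) ''
        substaircaseMonomials R n k d) = ⊤ ∧
    Module.finrank R
        (MvPolynomial (Fin n ⊕ Fin d) R ⧸ Ideal.span (deformedRelations (1 : R⟦X⟧) n k d)) =
      Nat.factorial k * Nat.factorial d / Nat.factorial (k - d) * stirling2 n d := by
  rw [substaircaseMonomials_eq_image hd, ← card_admissibleExponents hk]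
  exact monomials_descend_to_basis (isCompl_deformedRelations_one hk hn)

/-- The monomials of `A_{n,k,d}` descend to a `ℚ`-basis of
`ℚ[x,y]/J_{n,k,d}^ℚ`; in particular this quotient has dimension
`(k!·d!/(k−d)!)·Stir(n,d)` over `ℚ`. -/
theorem Aset_descends_to_basis (n k d : ℕ) (hd : 1 ≤ d) (hk : d ≤ k) (hn : k ≤ n) :
    LinearIndependent ℚ (fun p : Aset n k d =>
      Ideal.Quotient.mk (Ideal.span (JgensQ n k d)) (p : MvPolynomial (Fin n ⊕ Fin d) ℚ)) ∧
    Submodule.span ℚ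
      (⇑(Ideal.Quotient.mk (Ideal.span (JgensQ n k d))) '' Aset n k d) = ⊤ ∧
    Module.finrank ℚ (MvPolynomial (Fin n ⊕ Fin d) ℚ ⧸ Ideal.span (JgensQ n k d)) =
      Nat.factorial k * Nat.factorial d / Nat.factorial (k - d) * stirling2 n d := by
  rw [JgensQ_eq_deformedRelations_one]
  exact Aset_descends_to_basis_general n k d hd hk (hk.trans hn)
end

section
/- Let d ≥ 1, let R be a commutative ℚ-algebra carrying an action of the symmetric group S_d by ℚ-algebra automorphisms, let R^{S_d} ⊆ R be the invariant subalgebra, and let S ⊆ R^{S_d} be a set of S_d-invariant elements. Then the intersection with R^{S_d} of the ideal of R generated by S equals the ideal of R^{S_d} generated by S. -/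
/-!
Averaging over the group is an `R^G`-linear projection of `R` onto `R^G`. It therefore maps the
extension `I R` of an ideal `I` of `R^G` into `I`; since it fixes every invariant element of `I R`,
all of these lie in `I`.
-/

open MvPolynomial

/-- The subalgebra of invariants of an action of a group `G` on a commutative
`ℚ`-algebra `R` by `ℚ`-algebra automorphisms. -/
noncomputable def fixedSubalgebra {R : Type*} [CommRing R] [Algebra ℚ R] {G : Type*}
    [Group G] (ρ : G →* (R ≃ₐ[ℚ] R)) : Subalgebra ℚ R where
  carrier := {x | ∀ g : G, ρ g x = x}
  mul_mem' := fun ha hb g => by rw [map_mul, ha g, hb g]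
  add_mem' := fun ha hb g => by rw [map_add, ha g, hb g]
  one_mem' := fun g => by rw [map_one]
  zero_mem' := fun g => by rw [map_zero]
  algebraMap_mem' := fun r g => by rw [AlgEquiv.commutes]

theorem comap_map_algebraMap_of_isProj_one {A B : Type*} [CommSemiring A] [CommSemiring B]
    [Algebra A B] [FaithfulSMul A B] {f : B →ₗ[A] B}
    (hf : LinearMap.IsProj (1 : Submodule A B) f) (I : Ideal A) :
    (I.map (algebraMap A B)).comap (algebraMap A B) = I := by
  refine le_antisymm (fun a ha => ?_) Ideal.le_comap_map
  have mem_smul_top : algebraMap A B a ∈ I • (⊤ : Submodule A B) := by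
    rwa [Ideal.smul_top_eq_map]
  have map_smul_top_le : (I • ⊤ : Submodule A B).map f ≤ Submodule.map (Algebra.linearMap A B) I :=
    calc
      (I • ⊤ : Submodule A B).map f = I • (⊤ : Submodule A B).map f := Submodule.map_smul'' ..
      _ ≤ I • 1 := smul_mono_right I (Submodule.map_le_iff_le_comap.2 fun x _ => hf.map_mem x)
      _ = Submodule.map (Algebra.linearMap A B) I := by
        rw [Submodule.one_eq_range, LinearMap.range_eq_map, ← Submodule.map_smul'', smul_eq_mul,
          Ideal.mul_top]
  have f_fixes : f (algebraMap A B a) = algebraMap A B a :=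
    hf.map_id _ (Submodule.algebraMap_mem a)
  obtain ⟨b, hb, hba⟩ := map_smul_top_le ⟨_, mem_smul_top, f_fixes⟩
  exact FaithfulSMul.algebraMap_injective A B hba ▸ hb

theorem comap_map_algebraMap_of_invariants_eq_one {A B G : Type*} [CommRing A] [CommRing B]
    [Algebra A B] [FaithfulSMul A B] [Group G] [Finite G] (hG : IsUnit (Nat.card G : A))
    (ρ : Representation A G B) (hρ : ρ.invariants = 1) (I : Ideal A) :
    (I.map (algebraMap A B)).comap (algebraMap A B) = I := by
  have := Fintype.ofFinite G
  rw [Nat.card_eq_fintype_card] at hG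
  have := hG.invertible
  exact comap_map_algebraMap_of_isProj_one (hρ ▸ ρ.isProj_averageMap) I

theorem span_inter_invariants_eq_span_general {A B G : Type*} [CommRing A] [CommRing B]
    [Algebra A B] [FaithfulSMul A B] [Group G] [Finite G] (hG : IsUnit (Nat.card G : A))
    (ρ : Representation A G B) (hρ : ρ.invariants = 1) {S : Set B} (hS : S ⊆ ρ.invariants) :
    (Ideal.span S).comap (algebraMap A B) = Ideal.span (algebraMap A B ⁻¹' S) := by
  have hS_range : S ⊆ Set.range (algebraMap A B) := fun s hs =>
    Submodule.mem_one.1 (hρ ▸ hS hs)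
  have span_eq_map : Ideal.span S = (Ideal.span (algebraMap A B ⁻¹' S)).map (algebraMap A B) := by
    rw [Ideal.map_span, Set.image_preimage_eq_of_subset hS_range]
  rw [span_eq_map, comap_map_algebraMap_of_invariants_eq_one hG ρ hρ]

/-- The action of `G` on `R` by the automorphisms `ρ g`, as a representation over the ring of
invariants. Linearity over that ring, and not only over `ℚ`, is what makes averages compatible with
ideals. -/
noncomputable def fixedSubalgebra.representation {R : Type*} [CommRing R] [Algebra ℚ R]
    {G : Type*} [Group G] (ρ : G →* (R ≃ₐ[ℚ] R)) : Representation (fixedSubalgebra ρ) G R where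
  toFun g :=
    { toFun := ρ g
      map_add' := map_add (ρ g)
      map_smul' a x := by
        rw [Subalgebra.smul_def, smul_eq_mul, map_mul, a.2 g, RingHom.id_apply,
          Subalgebra.smul_def, smul_eq_mul] }
  map_one' := LinearMap.ext fun x => by simp
  map_mul' g h := LinearMap.ext fun x => by simp

theorem fixedSubalgebra.invariants_representation {R : Type*} [CommRing R] [Algebra ℚ R]
    {G : Type*} [Group G] (ρ : G →* (R ≃ₐ[ℚ] R)) :
    (representation ρ).invariants = 1 := by
  ext x
  rw [Submodule.mem_one]
  exact ⟨fun hx => ⟨⟨x, hx⟩, rfl⟩, by rintro ⟨a, rfl⟩; exact a.2⟩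

/-- Let `R` be a commutative `ℚ`-algebra carrying an action of `S_d` by
`ℚ`-algebra automorphisms and let `S` be a set of `S_d`-invariant elements. Then the
intersection with `R^{S_d}` of the ideal of `R` generated by `S` equals the ideal of
`R^{S_d}` generated by `S`. -/
theorem span_inter_invariants_eq_span (d : ℕ) (hd : 1 ≤ d) {R : Type*} [CommRing R]
    [Algebra ℚ R] (ρ : Equiv.Perm (Fin d) →* (R ≃ₐ[ℚ] R)) (S : Set R)
    (hS : S ⊆ (fixedSubalgebra ρ : Set R)) :
    Ideal.comap (fixedSubalgebra ρ).val (Ideal.span S) =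
      Ideal.span (Subtype.val ⁻¹' S : Set ↥(fixedSubalgebra ρ)) := by
  have card_isUnit : IsUnit (Nat.card (Equiv.Perm (Fin d)) : fixedSubalgebra ρ) := by
    rw [Nat.card_perm]
    exact .natCast_factorial_of_algebra ℚ _
  exact span_inter_invariants_eq_span_general card_isUnit (fixedSubalgebra.representation ρ)
    (fixedSubalgebra.invariants_representation ρ) hS
end

section
/- For integers n ≥ k ≥ d ≥ 1, the quotient ℚ[x_1,…,x_n,y_1,…,y_d]^{S_d}/(J_{n,k,d}^ℚ ∩ ℚ[x_1,…,x_n,y_1,…,y_d]^{S_d}) has ℚ-dimension (k!/(k−d)!)·Stir(n,d), where S_d acts by permuting the variables y_1,…,y_d. -/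
open MvPolynomial

/-- The permutation of the variable index set `Fin n ⊕ Fin d` induced by a permutation
of the y-indices. -/
def permY (n d : ℕ) (g : Equiv.Perm (Fin d)) : (Fin n ⊕ Fin d) ≃ (Fin n ⊕ Fin d) :=
  Equiv.sumCongr (Equiv.refl (Fin n)) g

/-- The subalgebra of `S_d`-invariants of `ℚ[x_1,…,x_n,y_1,…,y_d]`, where `S_d` permutes
the variables `y_1,…,y_d` and fixes the x-variables. -/
noncomputable def invQ2 (n d : ℕ) : Subalgebra ℚ (MvPolynomial (Fin n ⊕ Fin d) ℚ) where
  carrier := {f | ∀ g : Equiv.Perm (Fin d), rename (⇑(permY n d g)) f = f}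
  mul_mem' := fun ha hb g => by rw [map_mul, ha g, hb g]
  add_mem' := fun ha hb g => by rw [map_add, ha g, hb g]
  one_mem' := fun g => by rw [map_one]
  zero_mem' := fun g => by rw [map_zero]
  algebraMap_mem' := fun r g => by rw [MvPolynomial.algebraMap_eq, rename_C]

/-!
Put `f(T) = ∏ (T - y_j)`. The relations say that `f` divides `T ^ k` and `∏ (T - x_i)`, and that
`f(x_i) = 0` for all `i`; the quotient is generated by the coefficients of `f` and the `x_i`.

For the upper bound, evaluate `f` at the first of the given points, call the value `γ`, and use
`0 → A / ann γ → A → A / (γ) → 0`. Modulo `γ` the point is a root of `f`, which loses a linear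
factor; modulo `ann γ` the other product loses one. Applied to `T ^ k` this is Pascal's recurrence
and leaves `k.choose d` generators; applied to `∏ (T - x_i)` it is a recurrence for counting
surjections and leaves `d! * stirling2 n d`.

For the lower bound, a word `z` of length `n` in the `k` letters `0, …, k - 1` with exactly `d`
distinct letters gives the point `x = t z`, `y = t (letters of z)`. At these points the relations
of `J` vanish as `t → 0`, even relative to the algebra of values of invariants, so the dimension of
the quotient is at least the number `k! / (k - d)! * stirling2 n d` of such words.
-/

/-! ### Generating series of symmetric functions -/

section GeneratingSeries

variable {σ τ A : Type*} [Fintype σ] [Fintype τ] [CommRing A]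

/-- The polynomial `∏ (1 - y_i u)` in `u`, whose coefficients are the signed elementary symmetric
functions of the family `y`. -/
noncomputable def oneSubProd (y : σ → A) : Polynomial A :=
  ∏ i, (1 - Polynomial.C (y i) * Polynomial.X)

/-- The product of the geometric series `∑ (y_i u)^r`, which is the generating series of the
complete homogeneous symmetric functions of the family `y`. -/
noncomputable def geomProd (y : σ → A) : PowerSeries A :=
  ∏ i, PowerSeries.mk fun r => y i ^ r

theorem coeff_oneSubProd (K : Type*) [CommRing K] [Algebra K A] (y : σ → A) (r : ℕ) :
    (oneSubProd y).coeff r = (-1) ^ r * aeval y (esymm σ K r) := by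
  classical
  have coeff_monomial (t : Finset σ) :
      (∏ i ∈ t, -(Polynomial.C (y i) * Polynomial.X)).coeff r =
        if t.card = r then (-1) ^ r * ∏ i ∈ t, y i else 0 := by
    rw [Finset.prod_neg, Finset.prod_mul_distrib, Finset.prod_const, ← map_prod,
      ← Polynomial.C_1, ← Polynomial.C_neg, ← Polynomial.C_pow, ← mul_assoc, ← Polynomial.C_mul,
      Polynomial.coeff_C_mul_X_pow]
    aesop
  simp only [oneSubProd, sub_eq_add_neg, Finset.prod_one_add, Polynomial.finsetSum_coeff,
    coeff_monomial, ← Finset.sum_filter, esymm, map_sum, map_prod, aeval_X, Finset.mul_sum,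
    Finset.powersetCard_eq_filter]

theorem coeff_geomProd (K : Type*) [CommRing K] [Algebra K A] [DecidableEq σ] (y : σ → A) (r : ℕ) :
    PowerSeries.coeff r (geomProd y) = aeval y (hsymm σ K r) := by
  simp only [geomProd, PowerSeries.coeff_prod, PowerSeries.coeff_mk, hsymm, map_sum]
  symm
  refine Finset.sum_bij' (fun s _ => Multiset.toFinsupp s.1)
    (fun l hl => ⟨Finsupp.toMultiset l, ?_⟩) ?_ (fun _ _ => Finset.mem_univ _) ?_ ?_ ?_
  · rw [Finsupp.card_toMultiset, Finsupp.sum_fintype _ _ fun _ => rfl]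
    exact (Finset.mem_finsuppAntidiag.1 hl).1
  · intro s _
    refine Finset.mem_finsuppAntidiag.2 ⟨?_, Finset.subset_univ _⟩
    exact (Multiset.sum_count_eq_card fun a _ => Finset.mem_univ a).trans s.2
  · exact fun s _ => Subtype.ext (by simp)
  · simp
  · intro s _
    simp only [Multiset.toFinsupp_apply, Finset.prod_multiset_map_count, map_prod, map_pow, aeval_X]
    refine Finset.prod_subset (Finset.subset_univ _) fun i _ hi => ?_
    rw [Multiset.count_eq_zero_of_notMem (by simpa using hi), pow_zero]

theorem oneSubProd_mul_geomProd (y : σ → A) : (oneSubProd y : PowerSeries A) * geomProd y = 1 := by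
  have geom_series (a : A) :
      (1 - PowerSeries.C a * PowerSeries.X) * PowerSeries.mk (fun r => a ^ r) = 1 := by
    have h := congrArg (PowerSeries.rescale a) (PowerSeries.mk_one_mul_one_sub_eq_one A)
    simpa [PowerSeries.rescale_mk, PowerSeries.rescale_X, mul_comm] using h
  rw [oneSubProd, geomProd, ← Polynomial.coeToPowerSeries.ringHom_apply, map_prod,
    ← Finset.prod_mul_distrib]
  exact Finset.prod_eq_one fun i _ => by
    simpa [Polynomial.coeToPowerSeries.ringHom_apply] using geom_series (y i)

theorem coeff_oneSubProd_mul_geomProd (K : Type*) [CommRing K] [Algebra K A] [DecidableEq σ]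
    (x : τ → A) (y : σ → A) (r : ℕ) :
    PowerSeries.coeff r ((oneSubProd x : PowerSeries A) * geomProd y) =
      (-1) ^ r * ∑ j ∈ Finset.range (r + 1),
        (-1) ^ j * (aeval x (esymm τ K (r - j)) * aeval y (hsymm σ K j)) := by
  rw [mul_comm, PowerSeries.coeff_mul, Finset.Nat.sum_antidiagonal_eq_sum_range_succ_mk,
    Finset.mul_sum]
  refine Finset.sum_congr rfl fun j hj => ?_
  rw [Polynomial.coeff_coe, coeff_oneSubProd K, coeff_geomProd K, ← mul_assoc, ← mul_assoc,
    ← pow_add, show r + j = (r - j) + 2 * j by grind, pow_add, pow_mul, neg_one_sq, one_pow]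
  ring

theorem natDegree_prod_le_card {ι : Type*} (s : Finset ι) (f : ι → Polynomial A)
    (hf : ∀ i ∈ s, (f i).natDegree ≤ 1) : (∏ i ∈ s, f i).natDegree ≤ s.card :=
  (Polynomial.natDegree_prod_le s f).trans ((Finset.sum_le_card_nsmul s _ 1 hf).trans (by simp))

theorem reflect_prod {ι : Type*} (s : Finset ι) (f : ι → Polynomial A)
    (hf : ∀ i ∈ s, (f i).natDegree ≤ 1) :
    (∏ i ∈ s, f i).reflect s.card = ∏ i ∈ s, (f i).reflect 1 := by
  classical
  induction s using Finset.induction_on with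
  | empty => simp
  | insert i s hi ih =>
    have hs : ∀ j ∈ s, (f j).natDegree ≤ 1 := fun j hj => hf j (Finset.mem_insert_of_mem hj)
    rw [Finset.prod_insert hi, Finset.prod_insert hi, Finset.card_insert_of_notMem hi, add_comm,
      Polynomial.reflect_mul _ _ (hf i (Finset.mem_insert_self i s))
        (natDegree_prod_le_card s f hs), ih hs]

theorem natDegree_one_sub_C_mul_X_le (a : A) :
    (1 - Polynomial.C a * Polynomial.X).natDegree ≤ 1 := by
  compute_degree

theorem natDegree_oneSubProd_le (y : σ → A) : (oneSubProd y).natDegree ≤ Fintype.card σ :=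
  natDegree_prod_le_card _ _ fun i _ => natDegree_one_sub_C_mul_X_le (y i)

theorem reflect_oneSubProd (y : σ → A) :
    (oneSubProd y).reflect (Fintype.card σ) = ∏ i, (Polynomial.X - Polynomial.C (y i)) := by
  rw [oneSubProd, ← Finset.card_univ,
    reflect_prod _ _ fun i _ => natDegree_one_sub_C_mul_X_le (y i)]
  simp [Polynomial.reflect_sub, Polynomial.reflect_C_mul]

-- `F * H = F / E` is a polynomial of degree at most `N - d`, so `E ∣ F`; reflect this divisibility.
theorem reflect_dvd_reflect_of_coeff_eq_zero {d N : ℕ} (hdN : d ≤ N) {E F : Polynomial A}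
    (hE : E.natDegree ≤ d) {H : PowerSeries A} (hEH : (E : PowerSeries A) * H = 1)
    (h : ∀ r, N - d < r → PowerSeries.coeff r ((F : PowerSeries A) * H) = 0) :
    E.reflect d ∣ F.reflect N := by
  set Q := PowerSeries.trunc (N - d + 1) ((F : PowerSeries A) * H) with hQ
  have coe_Q : (Q : PowerSeries A) = F * H := by
    ext r
    rw [Polynomial.coeff_coe, hQ, PowerSeries.coeff_trunc]
    split_ifs with hr
    · rfl
    · rw [h r (by omega)]
  have hEQ : F = E * Q := by
    apply Polynomial.coe_injective A
    rw [Polynomial.coe_mul, coe_Q]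
    linear_combination -(F : PowerSeries A) * hEH
  have natDegree_Q : Q.natDegree ≤ N - d :=
    Nat.lt_succ_iff.1 (PowerSeries.natDegree_trunc_lt _ _)
  rw [hEQ, ← Nat.add_sub_cancel' hdN, Polynomial.reflect_mul _ _ hE natDegree_Q]
  exact dvd_mul_right _ _

theorem prod_X_sub_C_dvd_prod_X_sub_C (K : Type*) [CommRing K] [Algebra K A] [DecidableEq σ]
    (hcard : Fintype.card σ ≤ Fintype.card τ) (x : τ → A) (y : σ → A)
    (h : ∀ r, Fintype.card τ - Fintype.card σ < r →
      ∑ j ∈ Finset.range (r + 1),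
        (-1) ^ j * (aeval x (esymm τ K (r - j)) * aeval y (hsymm σ K j)) = 0) :
    ∏ i, (Polynomial.X - Polynomial.C (y i)) ∣ ∏ i, (Polynomial.X - Polynomial.C (x i)) := by
  rw [← reflect_oneSubProd, ← reflect_oneSubProd]
  refine reflect_dvd_reflect_of_coeff_eq_zero hcard (natDegree_oneSubProd_le y)
    (oneSubProd_mul_geomProd y) fun r hr => ?_
  rw [coeff_oneSubProd_mul_geomProd K, h r hr, mul_zero]

theorem prod_X_sub_C_dvd_X_pow (K : Type*) [CommRing K] [Algebra K A] [DecidableEq σ] {k : ℕ}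
    (hk : Fintype.card σ ≤ k) (y : σ → A)
    (h : ∀ r, k - Fintype.card σ < r → aeval y (hsymm σ K r) = 0) :
    ∏ i, (Polynomial.X - Polynomial.C (y i)) ∣ Polynomial.X ^ k := by
  rw [← reflect_oneSubProd, ← one_mul (Polynomial.X ^ k), ← Polynomial.C_1,
    ← Polynomial.reflect_C]
  refine reflect_dvd_reflect_of_coeff_eq_zero hk (natDegree_oneSubProd_le y)
    (oneSubProd_mul_geomProd y) fun r hr => ?_
  simp [coeff_geomProd K, h r hr]

-- Here the factors of `oneSubProd y` cancel, leaving a product of `card τ - card σ` factors.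
theorem sum_esymm_mul_hsymm_eq_zero (K : Type*) [CommRing K] [Algebra K A] [DecidableEq σ]
    (x : τ → A) {e : σ → τ} (he : Function.Injective e) {r : ℕ}
    (hr : Fintype.card τ - Fintype.card σ < r) :
    ∑ j ∈ Finset.range (r + 1),
      (-1) ^ j * (aeval x (esymm τ K (r - j)) * aeval (x ∘ e) (hsymm σ K j)) = 0 := by
  classical
  set Q : Polynomial A :=
    ∏ i ∈ (Finset.univ.image e)ᶜ, (1 - Polynomial.C (x i) * Polynomial.X)
  have natDegree_Q : Q.natDegree < r := by
    refine (natDegree_prod_le_card _ _ fun i _ => natDegree_one_sub_C_mul_X_le (x i)).trans_lt ?_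
    rwa [Finset.card_compl, Finset.card_image_of_injective _ he, Finset.card_univ]
  have factor : oneSubProd x = oneSubProd (x ∘ e) * Q := by
    rw [oneSubProd, ← Finset.prod_mul_prod_compl (Finset.univ.image e),
      Finset.prod_image he.injOn]
    rfl
  have quotient : (oneSubProd x : PowerSeries A) * geomProd (x ∘ e) = Q := by
    rw [factor, Polynomial.coe_mul]
    linear_combination (Q : PowerSeries A) * oneSubProd_mul_geomProd (x ∘ e)
  have h := coeff_oneSubProd_mul_geomProd K x (x ∘ e) r
  rw [quotient, Polynomial.coeff_coe, Polynomial.coeff_eq_zero_of_natDegree_lt natDegree_Q] at h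
  exact ((isUnit_one.neg.pow r).mul_right_eq_zero.1 h.symm)

theorem prod_sub_eq_sum_esymm (K : Type*) [CommRing K] [Algebra K A] (a : A) (y : σ → A) :
    ∏ i, (a - y i) = ∑ j ∈ Finset.range (Fintype.card σ + 1),
      (-1) ^ j * (a ^ (Fintype.card σ - j) * aeval y (esymm σ K j)) := by
  have h := congrArg (Polynomial.eval a)
    (Multiset.prod_X_sub_X_eq_sum_esymm (Finset.univ.val.map y))
  simp only [Multiset.map_map, Function.comp_def, Multiset.card_map, Finset.card_val,
    Finset.card_univ] at h
  rw [← Finset.prod_eq_multiset_prod, Polynomial.eval_prod, Polynomial.eval_finsetSum] at h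
  simpa [aeval_esymm_eq_multiset_esymm, mul_comm (a ^ _)] using h

end GeneratingSeries

section MapGenerators

variable {n d : ℕ} {A : Type*} [CommRing A] [Algebra ℚ A]
  (φ : MvPolynomial (Fin n ⊕ Fin d) ℚ →ₐ[ℚ] A)

theorem algHom_rename {σ τ : Type*} (φ : MvPolynomial τ ℚ →ₐ[ℚ] A) (f : σ → τ)
    (p : MvPolynomial σ ℚ) : φ (rename f p) = aeval (fun i => φ (X (f i))) p := by
  conv_lhs => rw [aeval_unique φ, aeval_rename]
  rfl

theorem map_eY (r : ℕ) : φ (eY n d r) = aeval (fun j => φ (X (.inr j))) (esymm (Fin d) ℚ r) :=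
  algHom_rename φ Sum.inr _

theorem map_hY (r : ℕ) : φ (hY n d r) = aeval (fun j => φ (X (.inr j))) (hsymm (Fin d) ℚ r) :=
  algHom_rename φ Sum.inr _

theorem map_genXY (r : ℕ) :
    φ (genXY n d r) = ∑ j ∈ Finset.range (r + 1),
      (-1) ^ j * (aeval (fun i => φ (X (.inl i))) (esymm (Fin n) ℚ (r - j)) *
        aeval (fun j => φ (X (.inr j))) (hsymm (Fin d) ℚ j)) := by
  simp only [genXY, map_sum, map_mul, map_pow, map_neg, map_one, map_hY, eX, algHom_rename φ]

theorem map_genPow (i : Fin n) :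
    φ (genPow n d i) = ∏ j, (φ (X (.inl i)) - φ (X (.inr j))) := by
  simp [genPow, map_eY, prod_sub_eq_sum_esymm ℚ]

end MapGenerators
/-! ### Modules generated by a given number of elements -/

/-- The `S`-module `M` is generated by a family of `N` elements. -/
def GeneratedBy (S M : Type*) [Semiring S] [AddCommMonoid M] [Module S M] (N : ℕ) : Prop :=
  ∃ v : Fin N → M, Submodule.span S (Set.range v) = ⊤

namespace GeneratedBy

section Semiring

variable {S M : Type*} [Semiring S] [AddCommMonoid M] [Module S M]

theorem of_span_eq_top {ι : Type*} [Fintype ι] {v : ι → M}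
    (hv : Submodule.span S (Set.range v) = ⊤) : GeneratedBy S M (Fintype.card ι) :=
  ⟨v ∘ (Fintype.equivFin ι).symm, by rw [(Fintype.equivFin ι).symm.surjective.range_comp, hv]⟩

theorem of_subsingleton [Subsingleton M] (N : ℕ) : GeneratedBy S M N :=
  ⟨0, Subsingleton.elim _ _⟩

theorem of_nontrivial {N : ℕ} (h : Nontrivial M → GeneratedBy S M N) : GeneratedBy S M N :=
  (subsingleton_or_nontrivial M).elim (fun _ => of_subsingleton N) h

theorem of_surjective {M' : Type*} [AddCommMonoid M'] [Module S M'] {f : M →ₗ[S] M'}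
    (hf : Function.Surjective f) {N : ℕ} : GeneratedBy S M N → GeneratedBy S M' N := by
  rintro ⟨v, hv⟩
  refine ⟨f ∘ v, ?_⟩
  rw [Set.range_comp, Submodule.span_image, hv, Submodule.map_top, LinearMap.range_eq_top.2 hf]

theorem self : GeneratedBy S S 1 :=
  ⟨fun _ => 1, by simp⟩

end Semiring

theorem trans {S T M : Type*} [CommSemiring S] [Semiring T] [Algebra S T] [AddCommMonoid M]
    [Module S M] [Module T M] [IsScalarTower S T M] {a b : ℕ} :
    GeneratedBy S T a → GeneratedBy T M b → GeneratedBy S M (a * b) := by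
  rintro ⟨v, hv⟩ ⟨w, hw⟩
  have h : Submodule.span S (Set.range fun p : Fin a × Fin b => v p.1 • w p.2) = ⊤ := by
    have := Submodule.span_smul_of_span_eq_top hv (Set.range w)
    rwa [hw, Submodule.restrictScalars_top, ← Set.image2_smul, Set.image2_range] at this
  simpa using of_span_eq_top h

theorem of_ker_le_range {S M' M M'' : Type*} [Ring S] [AddCommGroup M'] [AddCommGroup M]
    [AddCommGroup M''] [Module S M'] [Module S M] [Module S M''] {f : M' →ₗ[S] M} {g : M →ₗ[S] M''}
    (hg : Function.Surjective g) (hfg : LinearMap.ker g ≤ LinearMap.range f) {a b : ℕ} :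
    GeneratedBy S M'' a → GeneratedBy S M' b → GeneratedBy S M (a + b) := by
  rintro ⟨v, hv⟩ ⟨w, hw⟩
  choose v' hv' using fun i => hg (v i)
  set N := Submodule.span S (Set.range (Sum.elim v' (f ∘ w))) with hN
  have ker_le : LinearMap.ker g ≤ N := by
    rw [← Submodule.map_top, ← hw, Submodule.map_span, ← Set.range_comp] at hfg
    exact hfg.trans (Submodule.span_mono (by simp))
  have map_eq_top : N.map g = ⊤ := by
    rw [eq_top_iff, ← hv, Submodule.map_span]
    refine Submodule.span_mono ?_
    rintro _ ⟨i, rfl⟩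
    exact ⟨v' i, by simp, hv' i⟩
  have h : N = ⊤ := by
    rw [← sup_eq_left.2 ker_le, ← Submodule.comap_map_eq, map_eq_top, Submodule.comap_top]
  simpa using of_span_eq_top (hN.symm.trans h)

theorem of_quotient {S A : Type*} [CommRing S] [CommRing A] [Algebra S A] (γ : A) {a b : ℕ}
    (h₁ : GeneratedBy S (A ⧸ Ideal.span {γ}) a) (h₂ : GeneratedBy S (A ⧸ Ideal.torsionOf A A γ) b) :
    GeneratedBy S A (a + b) := by
  let mulγ : (A ⧸ Ideal.torsionOf A A γ) →ₗ[A] A :=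
    (Submodule.subtype _).comp (Ideal.quotTorsionOfEquivSpanSingleton A A γ).toLinearMap
  refine of_ker_le_range (f := mulγ.restrictScalars S)
    (g := (Ideal.Quotient.mkₐ S (Ideal.span {γ})).toLinearMap)
    (Ideal.Quotient.mkₐ_surjective S _) ?_ h₁ h₂
  intro x hx
  have hx : x ∈ Ideal.span {γ} := Ideal.Quotient.eq_zero_iff_mem.1 hx
  exact ⟨(Ideal.quotTorsionOfEquivSpanSingleton A A γ).symm ⟨x, hx⟩, by simp [mulγ]⟩

section Algebra

variable {S A : Type*} [CommRing S] [CommRing A] [Algebra S A]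

theorem adjoin_singleton {x : A} {g : Polynomial S} (hg : g.Monic)
    (hx : Polynomial.aeval x g = 0) : GeneratedBy S (Algebra.adjoin S {x}) g.natDegree := by
  classical
  let v (i : Fin g.natDegree) : Subalgebra.toSubmodule (Algebra.adjoin S {x}) :=
    ⟨x ^ (i : ℕ), pow_mem (Algebra.self_mem_adjoin_singleton S x) i⟩
  have image_v : Subtype.val '' Set.range v =
      (Finset.image (x ^ ·) (Finset.range g.natDegree) : Set A) := by
    rw [← Set.range_comp]
    ext a
    simp [v, Fin.exists_iff]
  have span_v : Submodule.span S (Set.range v) = ⊤ := by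
    apply Submodule.map_injective_of_injective (Submodule.subtype_injective _)
    rw [Submodule.map_span, Submodule.map_top, Submodule.range_subtype, Submodule.coe_subtype,
      image_v, Submodule.span_range_natDegree_eq_adjoin hg hx]
  exact ⟨v, span_v⟩

theorem one_of_adjoin_eq_top {s : Set A} (hs : Algebra.adjoin S s = ⊤)
    (h : s ⊆ (⊥ : Subalgebra S A)) : GeneratedBy S A 1 :=
  of_surjective (f := Algebra.linearMap S A)
    (Algebra.surjective_algebraMap_iff.2 (hs.symm.trans (le_bot_iff.1 (Algebra.adjoin_le h)))) self

end Algebra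

theorem finrank_le {K V : Type*} [Field K] [AddCommGroup V] [Module K V] {N : ℕ} :
    GeneratedBy K V N → Module.finrank K V ≤ N := by
  rintro ⟨v, hv⟩
  simpa using finrank_le_of_span_eq_top hv

theorem module_finite {S M : Type*} [Semiring S] [AddCommMonoid M] [Module S M] {N : ℕ} :
    GeneratedBy S M N → Module.Finite S M := by
  rintro ⟨v, hv⟩
  exact ⟨hv ▸ Submodule.fg_span (Set.finite_range v)⟩

end GeneratedBy

/-! ### Monic divisors of split polynomials -/

section MonicDivisors

section Root

variable {A : Type*} [CommRing A] {f P : Polynomial A} {a : A}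

theorem monic_divByMonic_X_sub_C (hf : f.Monic) (ha : f.IsRoot a) :
    (f /ₘ (Polynomial.X - Polynomial.C a)).Monic := by
  rw [← Polynomial.mul_divByMonic_eq_iff_isRoot.2 ha] at hf
  exact (Polynomial.monic_X_sub_C a).of_mul_monic_left hf

theorem natDegree_divByMonic_X_sub_C [Nontrivial A] :
    (f /ₘ (Polynomial.X - Polynomial.C a)).natDegree = f.natDegree - 1 := by
  rw [Polynomial.natDegree_divByMonic f (Polynomial.monic_X_sub_C a), Polynomial.natDegree_X_sub_C]

theorem divByMonic_X_sub_C_dvd (ha : f.IsRoot a)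
    (h : f ∣ (Polynomial.X - Polynomial.C a) * P) : f /ₘ (Polynomial.X - Polynomial.C a) ∣ P := by
  rw [← Polynomial.mul_divByMonic_eq_iff_isRoot.2 ha] at h
  obtain ⟨q, hq⟩ := h
  exact ⟨q, (Polynomial.monic_X_sub_C a).isRegular.left (by simpa only [mul_assoc] using hq)⟩

theorem eval_smul_modByMonic_eq_zero (hf : f.Monic)
    (h : f ∣ (Polynomial.X - Polynomial.C a) * P) : f.eval a • (P %ₘ f) = 0 := by
  have h₁ : f ∣ (f - Polynomial.C (f.eval a)) * P :=
    h.trans (mul_dvd_mul_right Polynomial.X_sub_C_dvd_sub_C_eval P)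
  have h₂ : f ∣ Polynomial.C (f.eval a) * P := by
    simpa [sub_mul] using (dvd_mul_right f P).sub h₁
  rwa [← Polynomial.smul_modByMonic, Polynomial.modByMonic_eq_zero_iff_dvd hf,
    Polynomial.smul_eq_C_mul]

theorem map_dvd_map_torsionOf (hf : f.Monic) (h : f ∣ (Polynomial.X - Polynomial.C a) * P) :
    f.map (Ideal.Quotient.mk (Ideal.torsionOf A A (f.eval a))) ∣
      P.map (Ideal.Quotient.mk (Ideal.torsionOf A A (f.eval a))) := by
  rw [← Polynomial.modByMonic_eq_zero_iff_dvd (hf.map _), ← Polynomial.map_modByMonic _ hf]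
  ext i
  rw [Polynomial.coeff_map, Polynomial.coeff_zero, Ideal.Quotient.eq_zero_iff_mem,
    Ideal.mem_torsionOf_iff, smul_eq_mul, mul_comm, ← smul_eq_mul, ← Polynomial.coeff_smul,
    eval_smul_modByMonic_eq_zero hf h, Polynomial.coeff_zero]

end Root

variable {S A : Type*} [CommRing S] [CommRing A] [Algebra S A]

theorem aeval_quotientMk (I : Ideal A) (a : A) (p : Polynomial S) :
    Polynomial.aeval (Ideal.Quotient.mk I a) p = Ideal.Quotient.mk I (Polynomial.aeval a p) :=
  Polynomial.aeval_algHom_apply (Ideal.Quotient.mkₐ S I) a p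

theorem adjoin_image_eq_top {B : Type*} [CommRing B] [Algebra S B] {φ : A →ₐ[S] B}
    (hφ : Function.Surjective φ) {s : Set A} (hs : Algebra.adjoin S s = ⊤) :
    Algebra.adjoin S (φ '' s) = ⊤ := by
  rw [← AlgHom.map_adjoin, hs, Algebra.map_top, (AlgHom.range_eq_top φ).2 hφ]

theorem adjoin_range_coeff_map_mk_eq_top (I : Ideal A) {f : Polynomial A}
    (hf : Algebra.adjoin S (Set.range f.coeff) = ⊤) :
    Algebra.adjoin S (Set.range (f.map (Ideal.Quotient.mk I)).coeff) = ⊤ := by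
  rw [← adjoin_image_eq_top (Ideal.Quotient.mkₐ_surjective S I) hf, ← Set.range_comp]
  congr 2
  ext i
  exact Polynomial.coeff_map _ i

theorem adjoin_range_coeff_divByMonic_eq_top {f : Polynomial A} {a : S}
    (ha : f.IsRoot (algebraMap S A a)) (hf : Algebra.adjoin S (Set.range f.coeff) = ⊤) :
    Algebra.adjoin S
      (Set.range (f /ₘ (Polynomial.X - Polynomial.C (algebraMap S A a))).coeff) = ⊤ := by
  set g := f /ₘ (Polynomial.X - Polynomial.C (algebraMap S A a))
  have hfac : f = (Polynomial.X - Polynomial.C (algebraMap S A a)) * g :=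
    (Polynomial.mul_divByMonic_eq_iff_isRoot.2 ha).symm
  have coeff_mem (i : ℕ) : g.coeff i ∈ Algebra.adjoin S (Set.range g.coeff) :=
    Algebra.subset_adjoin ⟨i, rfl⟩
  rw [eq_top_iff, ← hf]
  refine Algebra.adjoin_le ?_
  rintro _ ⟨i, rfl⟩
  rw [hfac, sub_mul, Polynomial.coeff_sub, Polynomial.coeff_C_mul]
  refine sub_mem ?_ (mul_mem (Subalgebra.algebraMap_mem _ a) (coeff_mem i))
  cases i with
  | zero => simp
  | succ i => simpa using coeff_mem i

theorem generatedBy_one_of_natDegree_eq_zero {f : Polynomial A} (hf : f.Monic)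
    (hd : f.natDegree = 0) (hs : Algebra.adjoin S (Set.range f.coeff) = ⊤) :
    GeneratedBy S A 1 := by
  refine .one_of_adjoin_eq_top hs ?_
  rintro _ ⟨i, rfl⟩
  rw [Polynomial.eq_one_of_monic_natDegree_zero hf hd, Polynomial.coeff_one]
  split_ifs
  exacts [one_mem _, zero_mem _]

theorem natDegree_eq_zero_of_dvd_one {f : Polynomial A} (hf : f.Monic) (h : f ∣ 1) :
    f.natDegree = 0 := by
  rw [hf.eq_one_of_isUnit (isUnit_of_dvd_one h), Polynomial.natDegree_one]

-- `f (a 0) = 0` on `A ⧸ (γ)`, where `f` loses a factor; on `A ⧸ ann γ` the product loses one.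
theorem generatedBy_choose {k : ℕ} (a : Fin k → S) {d : ℕ} {f : Polynomial A} (hf : f.Monic)
    (hd : f.natDegree = d)
    (hdvd : f ∣ ∏ i, (Polynomial.X - Polynomial.C (algebraMap S A (a i))))
    (hs : Algebra.adjoin S (Set.range f.coeff) = ⊤) : GeneratedBy S A (k.choose d) := by
  induction k generalizing A d f with
  | zero =>
    obtain rfl : d = 0 := hd ▸ natDegree_eq_zero_of_dvd_one hf (by simpa using hdvd)
    exact generatedBy_one_of_natDegree_eq_zero hf hd hs
  | succ k ih =>
    cases d with
    | zero => simpa using generatedBy_one_of_natDegree_eq_zero hf hd hs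
    | succ d =>
      rw [Fin.prod_univ_succ] at hdvd
      set γ := f.eval (algebraMap S A (a 0)) with hγ
      refine .of_quotient γ (.of_nontrivial fun _ => ?_) (.of_nontrivial fun _ => ?_)
      · have hroot : (f.map (Ideal.Quotient.mk (Ideal.span {γ}))).IsRoot
            (algebraMap S (A ⧸ Ideal.span {γ}) (a 0)) := by
          have h : γ ∈ Ideal.span {γ} := Ideal.mem_span_singleton_self γ
          rw [Polynomial.IsRoot, IsScalarTower.algebraMap_apply S A, Ideal.Quotient.algebraMap_eq,
            Polynomial.eval_map_apply, ← hγ, Ideal.Quotient.eq_zero_iff_mem.2 h]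
        refine ih (fun i => a i.succ) (monic_divByMonic_X_sub_C (hf.map _) hroot) ?_
          (divByMonic_X_sub_C_dvd hroot ?_)
          (adjoin_range_coeff_divByMonic_eq_top hroot (adjoin_range_coeff_map_mk_eq_top _ hs))
        · rw [natDegree_divByMonic_X_sub_C, hf.natDegree_map, hd, Nat.add_sub_cancel]
        · simpa [Polynomial.map_prod] using
            Polynomial.map_dvd (Ideal.Quotient.mk (Ideal.span {γ})) hdvd
      · refine ih (fun i => a i.succ) (hf.map (Ideal.Quotient.mk (Ideal.torsionOf A A γ)))
          (by rw [hf.natDegree_map, hd]) ?_ (adjoin_range_coeff_map_mk_eq_top _ hs)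
        simpa [Polynomial.map_prod] using map_dvd_map_torsionOf hf hdvd

end MonicDivisors

section CoverCount

/-- The number of maps from an `n`-element set to a `(b + c)`-element set whose range contains a
given `b`-element subset, by recursion on the value at the first point. -/
def coverCount : ℕ → ℕ → ℕ → ℕ
  | 0, 0, _ => 1
  | 0, _ + 1, _ => 0
  | n + 1, b, c => b * coverCount n (b - 1) (c + 1) + c * coverCount n b c

theorem coverCount_add_one (n b c : ℕ) :
    coverCount n b (c + 1) = coverCount n b c + coverCount n (b + 1) c := by
  induction n generalizing b c with
  | zero => cases b <;> simp [coverCount]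
  | succ n ih =>
    cases b with
    | zero =>
      simp only [coverCount, ih, Nat.add_sub_cancel]
      ring
    | succ b =>
      simp only [coverCount, ih, Nat.add_sub_cancel]
      ring

theorem coverCount_zero (n d : ℕ) : coverCount n d 0 = d.factorial * stirling2 n d := by
  induction n generalizing d with
  | zero => cases d <;> simp [coverCount, stirling2]
  | succ n ih =>
    cases d with
    | zero => simp [coverCount, stirling2]
    | succ d =>
      simp only [coverCount, Nat.add_sub_cancel, coverCount_add_one, ih, stirling2,
        Nat.factorial_succ]
      ring

end CoverCount

section CoverPair

universe u

/-- The polynomials `g` and `h` over `S` and the points `x i` of the `S`-algebra `A` form a covering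
pair if the `x i` generate `A`, they are roots of `g * h`, and `g` divides `∏ (X - x i)`. When `g`
and `h` split, this says that `x` maps into their roots and covers the roots of `g`. -/
structure IsCoverPair {S A : Type*} [CommRing S] [CommRing A] [Algebra S A] {n : ℕ}
    (g h : Polynomial S) (x : Fin n → A) : Prop where
  monic_left : g.Monic
  monic_right : h.Monic
  aeval_mul (i : Fin n) : Polynomial.aeval (x i) (g * h) = 0
  map_dvd : g.map (algebraMap S A) ∣ ∏ i, (Polynomial.X - Polynomial.C (x i))
  adjoin_eq_top : Algebra.adjoin S (Set.range x) = ⊤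

namespace IsCoverPair

variable {S A T : Type*} [CommRing S] [CommRing A] [CommRing T] [Algebra S A] [Algebra S T] {n : ℕ}
  {g h : Polynomial S} {x : Fin (n + 1) → A}

theorem adjoin_tail_eq_top {I : Ideal A} [Algebra T (A ⧸ I)] [IsScalarTower S T (A ⧸ I)] {α : T}
    (hα : algebraMap T (A ⧸ I) α = Ideal.Quotient.mk I (x 0))
    (hx : Algebra.adjoin S (Set.range x) = ⊤) :
    Algebra.adjoin T (Set.range fun i : Fin n => Ideal.Quotient.mk I (x i.succ)) = ⊤ := by
  set U := Algebra.adjoin T (Set.range fun i : Fin n => Ideal.Quotient.mk I (x i.succ))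
  suffices h : ⊤ ≤ U.restrictScalars S from top_le_iff.1 fun a _ => h (Algebra.mem_top (x := a))
  rw [← adjoin_image_eq_top (Ideal.Quotient.mkₐ_surjective S I) hx]
  refine Algebra.adjoin_le ?_
  rintro _ ⟨_, ⟨i, rfl⟩, rfl⟩
  cases i using Fin.cases with
  | zero => exact hα ▸ U.algebraMap_mem α
  | succ i => exact Algebra.subset_adjoin (R := T) ⟨i, rfl⟩

theorem tail_of_torsionOf (hgh : IsCoverPair g h x)
    [Algebra T (A ⧸ Ideal.torsionOf A A (Polynomial.aeval (x 0) g))]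
    [IsScalarTower S T (A ⧸ Ideal.torsionOf A A (Polynomial.aeval (x 0) g))] {α : T}
    (hα : algebraMap T (A ⧸ Ideal.torsionOf A A (Polynomial.aeval (x 0) g)) α =
      Ideal.Quotient.mk _ (x 0)) :
    IsCoverPair (g.map (algebraMap S T)) (h.map (algebraMap S T))
      fun i => Ideal.Quotient.mk (Ideal.torsionOf A A (Polynomial.aeval (x 0) g)) (x i.succ) where
  monic_left := hgh.monic_left.map _
  monic_right := hgh.monic_right.map _
  aeval_mul i := by
    rw [← Polynomial.map_mul, Polynomial.aeval_map_algebraMap, aeval_quotientMk, hgh.aeval_mul,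
      map_zero]
  map_dvd := by
    have h := hgh.map_dvd
    rw [Fin.prod_univ_succ] at h
    have h := map_dvd_map_torsionOf (hgh.monic_left.map (algebraMap S A)) h
    rw [Polynomial.eval_map_algebraMap, Polynomial.map_map, Polynomial.map_prod] at h
    rw [Polynomial.map_map, ← IsScalarTower.algebraMap_eq]
    simpa using h
  adjoin_eq_top := adjoin_tail_eq_top hα hgh.adjoin_eq_top

theorem tail_of_isRoot (hgh : IsCoverPair g h x) {I : Ideal A} [Algebra T (A ⧸ I)]
    [IsScalarTower S T (A ⧸ I)] {α : T} (hα : algebraMap T (A ⧸ I) α = Ideal.Quotient.mk I (x 0))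
    (hroot : (g.map (algebraMap S T)).IsRoot α) :
    IsCoverPair (g.map (algebraMap S T) /ₘ (Polynomial.X - Polynomial.C α))
      ((Polynomial.X - Polynomial.C α) * h.map (algebraMap S T))
      fun i => Ideal.Quotient.mk I (x i.succ) where
  monic_left := monic_divByMonic_X_sub_C (hgh.monic_left.map _) hroot
  monic_right := (Polynomial.monic_X_sub_C α).mul (hgh.monic_right.map _)
  aeval_mul i := by
    rw [mul_left_comm, ← mul_assoc, Polynomial.mul_divByMonic_eq_iff_isRoot.2 hroot,
      ← Polynomial.map_mul, Polynomial.aeval_map_algebraMap, aeval_quotientMk, hgh.aeval_mul,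
      map_zero]
  map_dvd := by
    have h := Polynomial.map_dvd (Ideal.Quotient.mk I) hgh.map_dvd
    rw [Fin.prod_univ_succ, Polynomial.map_mul, Polynomial.map_map,
      ← Ideal.Quotient.algebraMap_eq, ← IsScalarTower.algebraMap_eq,
      IsScalarTower.algebraMap_eq S T, ← Polynomial.map_map,
      ← Polynomial.mul_divByMonic_eq_iff_isRoot.2 hroot, Polynomial.map_mul] at h
    obtain ⟨q, hq⟩ := h
    refine ⟨q, (Polynomial.monic_X_sub_C (Ideal.Quotient.mk I (x 0))).isRegular.left ?_⟩
    simpa [hα, mul_assoc, Polynomial.map_prod] using hq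
  adjoin_eq_top := adjoin_tail_eq_top hα hgh.adjoin_eq_top

end IsCoverPair

theorem IsCoverPair.generatedBy {n : ℕ} {S A : Type u} [CommRing S] [CommRing A] [Algebra S A]
    {g h : Polynomial S} {x : Fin n → A} (hgh : IsCoverPair g h x) :
    GeneratedBy S A (coverCount n g.natDegree h.natDegree) := by
  induction n generalizing S A with
  | zero =>
    refine .of_nontrivial fun _ => ?_
    have hg := natDegree_eq_zero_of_dvd_one (hgh.monic_left.map (algebraMap S A))
      (by simpa using hgh.map_dvd)
    have : Nontrivial S := (algebraMap S A).domain_nontrivial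
    rw [hgh.monic_left.natDegree_map] at hg
    rw [hg]
    exact .one_of_adjoin_eq_top hgh.adjoin_eq_top (by simp [Set.range_eq_empty])
  | succ n ih =>
    set γ := Polynomial.aeval (x 0) g with hγ
    refine .of_quotient γ (.of_nontrivial fun _ => ?_) (.of_nontrivial fun _ => ?_)
    · have hroot : Polynomial.aeval (Ideal.Quotient.mk (Ideal.span {γ}) (x 0)) g = 0 := by
        rw [aeval_quotientMk, Ideal.Quotient.eq_zero_iff_mem]
        exact Ideal.mem_span_singleton_self γ
      refine .trans (.adjoin_singleton hgh.monic_left hroot) ?_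
      set α : Algebra.adjoin S {Ideal.Quotient.mk (Ideal.span {γ}) (x 0)} :=
        ⟨_, Algebra.self_mem_adjoin_singleton S _⟩
      have hα : (g.map (algebraMap S _)).IsRoot α := by
        rw [Polynomial.IsRoot, Polynomial.eval_map_algebraMap, Subtype.ext_iff,
          ← Subalgebra.coe_val, ← Polynomial.aeval_algHom_apply]
        exact hroot
      have hcount := ih (hgh.tail_of_isRoot (I := Ideal.span {γ}) (α := α) rfl hα)
      rwa [natDegree_divByMonic_X_sub_C, hgh.monic_left.natDegree_map,
        (Polynomial.monic_X_sub_C α).natDegree_mul (hgh.monic_right.map _),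
        Polynomial.natDegree_X_sub_C, hgh.monic_right.natDegree_map, add_comm 1] at hcount
    · have hroot :
          Polynomial.aeval (Ideal.Quotient.mk (Ideal.torsionOf A A γ) (x 0)) h = 0 := by
        rw [aeval_quotientMk, Ideal.Quotient.eq_zero_iff_mem, Ideal.mem_torsionOf_iff, smul_eq_mul,
          hγ, mul_comm, ← map_mul, hgh.aeval_mul]
      refine .trans (.adjoin_singleton hgh.monic_right hroot) ?_
      set α : Algebra.adjoin S {Ideal.Quotient.mk (Ideal.torsionOf A A γ) (x 0)} :=
        ⟨_, Algebra.self_mem_adjoin_singleton S _⟩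
      have hcount := ih (hgh.tail_of_torsionOf (α := α) rfl)
      rwa [hgh.monic_left.natDegree_map, hgh.monic_right.natDegree_map] at hcount

end CoverPair

/-! ### The ring of invariants -/

theorem comap_map_algebraMap_of_apply_one {B P : Type*} [CommRing B] [CommRing P] [Algebra B P]
    {ρ : P →ₗ[B] B} (hρ : ρ 1 = 1) (I : Ideal B) :
    (I.map (algebraMap B P)).comap (algebraMap B P) = I := by
  refine le_antisymm (fun b hb => ?_) Ideal.le_comap_map
  have hb : algebraMap B P b ∈ I • (⊤ : Submodule B P) := by
    rw [Ideal.smul_top_eq_map]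
    exact hb
  have h : ρ (algebraMap B P b) ∈ I • (⊤ : Submodule B P).map ρ :=
    Submodule.map_smul'' I ⊤ ρ ▸ Submodule.mem_map_of_mem hb
  rw [Algebra.algebraMap_eq_smul_one, map_smul, hρ, smul_eq_mul, smul_eq_mul, mul_one] at h
  exact Ideal.mul_le_left h

section Invariants

variable {n d : ℕ}

theorem rename_permY_rename_inr (g : Equiv.Perm (Fin d)) (q : MvPolynomial (Fin d) ℚ) :
    rename (permY n d g) (rename Sum.inr q) = rename Sum.inr (rename g q) := by
  simp only [rename_rename]
  rfl

theorem rename_inr_mem_invQ2_iff {q : MvPolynomial (Fin d) ℚ} :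
    rename Sum.inr q ∈ invQ2 n d ↔ q.IsSymmetric :=
  forall_congr' fun g => by
    rw [rename_permY_rename_inr, (rename_injective _ Sum.inr_injective).eq_iff]

theorem rename_inl_mem_invQ2 (q : MvPolynomial (Fin n) ℚ) : rename Sum.inl q ∈ invQ2 n d :=
  fun g => by rw [rename_rename]; rfl

theorem X_inl_mem_invQ2 (i : Fin n) : X (Sum.inl i) ∈ invQ2 n d := by
  simpa using rename_inl_mem_invQ2 (d := d) (X i)

theorem hY_mem_invQ2 (r : ℕ) : hY n d r ∈ invQ2 n d :=
  rename_inr_mem_invQ2_iff.2 (hsymm_isSymmetric _ _ r)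

theorem eY_mem_invQ2 (r : ℕ) : eY n d r ∈ invQ2 n d :=
  rename_inr_mem_invQ2_iff.2 (esymm_isSymmetric _ _ r)

theorem genXY_mem_invQ2 (r : ℕ) : genXY n d r ∈ invQ2 n d :=
  sum_mem fun j _ => mul_mem (pow_mem (neg_mem (one_mem _)) _)
    (mul_mem (rename_inl_mem_invQ2 _) (hY_mem_invQ2 j))

theorem genPow_mem_invQ2 (i : Fin n) : genPow n d i ∈ invQ2 n d :=
  sum_mem fun j _ => mul_mem (pow_mem (neg_mem (one_mem _)) _)
    (mul_mem (pow_mem (X_inl_mem_invQ2 i) _) (eY_mem_invQ2 j))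

theorem JgensQ_subset_invQ2 (n k d : ℕ) : JgensQ n k d ⊆ invQ2 n d := by
  rintro p ((⟨r, -, rfl⟩ | ⟨r, -, rfl⟩) | ⟨i, rfl⟩)
  exacts [hY_mem_invQ2 r, genXY_mem_invQ2 r, genPow_mem_invQ2 i]

variable (n d) in
/-- The Reynolds operator `p ↦ (d!)⁻¹ ∑ g • p` of the action of `S_d`, as a map of modules over the
ring of invariants. -/
noncomputable def reynolds : MvPolynomial (Fin n ⊕ Fin d) ℚ →ₗ[invQ2 n d] invQ2 n d where
  toFun p := ⟨(d.factorial : ℚ)⁻¹ • ∑ g, rename (permY n d g) p, fun g => by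
    rw [map_smul, map_sum]
    refine congrArg _ (Fintype.sum_equiv (Equiv.mulLeft g) _ _ fun h => ?_)
    rw [rename_rename]
    congr 2
    ext (i | j) <;> simp [permY]⟩
  map_add' p q := Subtype.ext <| by simp [Finset.sum_add_distrib]
  map_smul' b p := Subtype.ext <| by
    have hb (g) : rename (permY n d g) (b : MvPolynomial (Fin n ⊕ Fin d) ℚ) = b := b.2 g
    simp [Subalgebra.smul_def, hb, Finset.mul_sum]

theorem reynolds_one : reynolds n d 1 = 1 := by
  have hd : (d.factorial : ℚ) ≠ 0 := mod_cast d.factorial_ne_zero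
  apply Subtype.ext
  simp [reynolds, Fintype.card_perm, ← Nat.cast_smul_eq_nsmul ℚ, smul_smul, hd]

theorem reynolds_coe (b : invQ2 n d) : reynolds n d b = b := by
  simpa [Subalgebra.smul_def, reynolds_one] using (reynolds n d).map_smul b 1

theorem exists_reynolds_rename_inr (q : MvPolynomial (Fin d) ℚ) :
    ∃ q' : MvPolynomial (Fin d) ℚ,
      (reynolds n d (rename Sum.inr q) : MvPolynomial (Fin n ⊕ Fin d) ℚ) = rename Sum.inr q' :=
  ⟨(d.factorial : ℚ)⁻¹ • ∑ g : Equiv.Perm (Fin d), rename g q, by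
    simp only [reynolds, LinearMap.coe_mk, AddHom.coe_mk, rename_permY_rename_inr, map_smul,
      map_sum]⟩

theorem comap_span_JgensQ (n k d : ℕ) :
    Ideal.comap (invQ2 n d).val (Ideal.span (JgensQ n k d)) =
      Ideal.span ((invQ2 n d).val ⁻¹' JgensQ n k d) := by
  have h : JgensQ n k d ⊆ Set.range (invQ2 n d).val := by
    simpa using JgensQ_subset_invQ2 n k d
  conv_lhs => rw [← Set.image_preimage_eq_of_subset h]
  rw [← comap_map_algebraMap_of_apply_one (reynolds_one (n := n) (d := d)) (Ideal.span _),
    Ideal.map_span]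
  rfl

variable (n d) in
/-- The monic polynomial `∏ (T - y_j)` in one variable `T`, whose coefficients are the elementary
symmetric polynomials in the `y_j` up to sign. -/
noncomputable def prodXSubY : Polynomial (MvPolynomial (Fin n ⊕ Fin d) ℚ) :=
  ∏ j, (Polynomial.X - Polynomial.C (X (Sum.inr j)))

variable (n d) in
theorem monic_prodXSubY : (prodXSubY n d).Monic :=
  Polynomial.monic_prod_of_monic _ _ fun _ _ => Polynomial.monic_X_sub_C _

variable (n d) in
theorem natDegree_prodXSubY : (prodXSubY n d).natDegree = d := by
  simp [prodXSubY]

theorem coeff_prodXSubY {i : ℕ} (hi : i ≤ d) :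
    (prodXSubY n d).coeff i = (-1) ^ (d - i) * eY n d (d - i) := by
  have h := Multiset.prod_X_sub_C_coeff (k := i)
    (Finset.univ.val.map fun j : Fin d => (X (Sum.inr j) : MvPolynomial (Fin n ⊕ Fin d) ℚ))
    (by simpa using hi)
  rw [Multiset.map_map, Multiset.card_map, Finset.card_val, Finset.card_univ, Fintype.card_fin,
    ← aeval_esymm_eq_multiset_esymm (Fin d) ℚ] at h
  rw [prodXSubY, Finset.prod_eq_multiset_prod, ← AlgHom.id_apply (R := ℚ) (eY n d (d - i)), map_eY]
  exact h

theorem coeff_prodXSubY_mem_invQ2 (i : ℕ) : (prodXSubY n d).coeff i ∈ invQ2 n d := by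
  rcases le_or_gt i d with hi | hi
  · rw [coeff_prodXSubY hi]
    exact mul_mem (pow_mem (neg_mem (one_mem _)) _) (eY_mem_invQ2 _)
  · rw [Polynomial.coeff_eq_zero_of_natDegree_lt (by rwa [natDegree_prodXSubY])]
    exact zero_mem _

theorem rename_inr_mem_adjoin {q : MvPolynomial (Fin d) ℚ} (hq : q.IsSymmetric) :
    rename Sum.inr q ∈ Algebra.adjoin ℚ (Set.range (prodXSubY n d).coeff) := by
  obtain ⟨p, hp⟩ := esymmAlgHom_surjective ℚ (Fintype.card_fin d).le ⟨q, hq⟩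
  have hp : aeval (fun i : Fin d => esymm (Fin d) ℚ (i + 1)) p = q := by
    rw [← esymmAlgHom_apply, hp]
  rw [← hp, ← AlgHom.comp_apply, comp_aeval]
  have mem_range := AlgHom.mem_range_self (aeval fun i : Fin d => eY n d (i + 1)) p
  rw [← Algebra.adjoin_range_eq_range_aeval] at mem_range
  refine Algebra.adjoin_le ?_ mem_range
  refine Set.range_subset_iff.2 fun i => ?_
  have h := coeff_prodXSubY (n := n) (Nat.sub_le d (i + 1))
  rw [Nat.sub_sub_self i.2] at h
  have h' : eY n d (i + 1) = (-1) ^ (i + 1 : ℕ) * (prodXSubY n d).coeff (d - (i + 1)) := by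
    rw [h, ← mul_assoc, ← mul_pow, neg_one_mul, neg_neg, one_pow, one_mul]
  rw [SetLike.mem_coe, h']
  exact mul_mem (pow_mem (neg_mem (one_mem _)) _) (Algebra.subset_adjoin ⟨_, rfl⟩)

theorem range_rename {σ τ : Type*} (f : σ → τ) :
    (rename f : MvPolynomial σ ℚ →ₐ[ℚ] MvPolynomial τ ℚ).range =
      Algebra.adjoin ℚ (Set.range fun i => X (f i)) := by
  rw [← Algebra.map_top, ← adjoin_range_X, AlgHom.map_adjoin, ← Set.range_comp]
  simp only [Function.comp_def, rename_X]

theorem mem_range_rename_inl_mul_range_rename_inr (p : MvPolynomial (Fin n ⊕ Fin d) ℚ) :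
    p ∈ Subalgebra.toSubmodule (rename Sum.inl : MvPolynomial (Fin n) ℚ →ₐ[ℚ] _).range *
      Subalgebra.toSubmodule (rename Sum.inr : MvPolynomial (Fin d) ℚ →ₐ[ℚ] _).range := by
  have range_X : (Set.range fun i => X (Sum.inl i)) ∪ (Set.range fun j => X (Sum.inr j)) =
      Set.range (X : Fin n ⊕ Fin d → MvPolynomial (Fin n ⊕ Fin d) ℚ) := by
    rw [← Set.Sum.elim_range]
    congr 1
    ext (i | j) <;> rfl
  rw [range_rename, range_rename, ← Algebra.adjoin_union_coe_submodule, range_X, adjoin_range_X]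
  exact Submodule.mem_top

theorem adjoin_coeff_union_X_inl :
    Algebra.adjoin ℚ (Set.range (prodXSubY n d).coeff ∪ Set.range fun i => X (Sum.inl i)) =
      invQ2 n d := by
  refine le_antisymm (Algebra.adjoin_le (Set.union_subset ?_ ?_)) fun p hp => ?_
  · exact Set.range_subset_iff.2 coeff_prodXSubY_mem_invQ2
  · exact Set.range_subset_iff.2 X_inl_mem_invQ2
  lift p to invQ2 n d using hp
  rw [← reynolds_coe p]
  refine Submodule.mul_induction_on (mem_range_rename_inl_mul_range_rename_inr p.1)
    (fun a ha b hb => ?_) (fun a b ha hb => ?_)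
  · obtain ⟨q, rfl⟩ := hb
    obtain ⟨q', hq'⟩ := exists_reynolds_rename_inr (n := n) q
    have hq'' : q'.IsSymmetric :=
      rename_inr_mem_invQ2_iff.1 (hq' ▸ (reynolds n d (rename Sum.inr q)).2)
    have ha' : a ∈ invQ2 n d := by
      obtain ⟨p, rfl⟩ := ha
      exact rename_inl_mem_invQ2 p
    have h : reynolds n d (a * rename Sum.inr q) = ⟨a, ha'⟩ * reynolds n d (rename Sum.inr q) :=
      (reynolds n d).map_smul ⟨a, ha'⟩ (rename Sum.inr q)
    rw [Subalgebra.mem_toSubmodule, range_rename] at ha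
    simp only [AlgHom.toRingHom_eq_coe, RingHom.coe_coe]
    rw [h, MulMemClass.coe_mul, hq']
    exact mul_mem (Algebra.adjoin_mono Set.subset_union_right ha)
      (Algebra.adjoin_mono Set.subset_union_left (rename_inr_mem_adjoin hq''))
  · rw [map_add]
    exact add_mem ha hb

end Invariants

/-! ### The upper bound -/

section UpperBound

section Subalgebra

variable {S A : Type*} [CommRing S] [CommRing A] [Algebra S A] {B : Subalgebra S A}

theorem adjoin_eq_top_of_adjoin_image_eq {s : Set B} (h : Algebra.adjoin S (B.val '' s) = B) :
    Algebra.adjoin S s = ⊤ :=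
  Subalgebra.map_injective (f := B.val) Subtype.val_injective <| by
    rw [AlgHom.map_adjoin, h, Algebra.map_top, Subalgebra.range_val]

theorem exists_monic_map_eq {f : Polynomial A} (hf : f.Monic) (hB : ∀ i, f.coeff i ∈ B) :
    ∃ g : Polynomial B, g.Monic ∧ g.map (algebraMap B A) = f := by
  have h : f ∈ Polynomial.lifts (algebraMap B A) :=
    (Polynomial.lifts_iff_coeff_lifts f).2 fun i => ⟨⟨f.coeff i, hB i⟩, rfl⟩
  obtain ⟨g, hg, -, hg'⟩ := Polynomial.lifts_and_natDegree_eq_and_monic h hf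
  exact ⟨g, hg', hg⟩

theorem image_val_range_coeff (g : Polynomial B) :
    B.val '' Set.range g.coeff = Set.range (g.map (algebraMap B A)).coeff := by
  rw [← Set.range_comp]
  congr 1
  ext i
  simp

theorem adjoin_adjoin_eq_top {s t : Set A} (h : Algebra.adjoin S (s ∪ t) = ⊤) :
    Algebra.adjoin (Algebra.adjoin S s) t = ⊤ := by
  rw [Algebra.adjoin_union_eq_adjoin_adjoin] at h
  exact top_le_iff.1 fun a _ => h.ge (Algebra.mem_top (x := a))

end Subalgebra

universe u

theorem generatedBy_choose_mul {S A : Type u} [CommRing S] [CommRing A] [Algebra S A] {n k : ℕ}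
    {f : Polynomial A} {x : Fin n → A} (hf : f.Monic) (hk : f ∣ Polynomial.X ^ k)
    (hx : f ∣ ∏ i, (Polynomial.X - Polynomial.C (x i))) (hroot : ∀ i, f.IsRoot (x i))
    (hs : Algebra.adjoin S (Set.range f.coeff ∪ Set.range x) = ⊤) :
    GeneratedBy S A
      (k.choose f.natDegree * (f.natDegree.factorial * stirling2 n f.natDegree)) := by
  refine .of_nontrivial fun _ => ?_
  set T := Algebra.adjoin S (Set.range f.coeff)
  have coeff_mem (i : ℕ) : f.coeff i ∈ T := Algebra.subset_adjoin ⟨i, rfl⟩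
  obtain ⟨g, hg, hgf⟩ := exists_monic_map_eq hf coeff_mem
  have : Nontrivial T := (algebraMap T A).domain_nontrivial
  rw [← hgf, hg.natDegree_map]
  have generatedBy_T : GeneratedBy S T (k.choose g.natDegree) := by
    refine generatedBy_choose 0 hg rfl ?_ ?_
    · rw [← Polynomial.map_dvd_map (algebraMap T A) Subtype.val_injective hg, hgf]
      simpa using hk
    · exact adjoin_eq_top_of_adjoin_image_eq (by rw [image_val_range_coeff, hgf])
  have hgx : IsCoverPair g 1 x :=
    { monic_left := hg
      monic_right := Polynomial.monic_one
      aeval_mul := fun i => by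
        rw [mul_one, ← Polynomial.eval_map_algebraMap, hgf]
        exact hroot i
      map_dvd := hgf ▸ hx
      adjoin_eq_top := adjoin_adjoin_eq_top hs }
  simpa [coverCount_zero] using generatedBy_T.trans hgx.generatedBy

theorem generatedBy_quotient_comap {S P : Type u} [CommRing S] [CommRing P] [Algebra S P]
    {B : Subalgebra S P} (J : Ideal P) {n k : ℕ} {f : Polynomial P} {x : Fin n → P} (hf : f.Monic)
    (hB : Algebra.adjoin S (Set.range f.coeff ∪ Set.range x) = B)
    (hk : f.map (Ideal.Quotient.mk J) ∣ Polynomial.X ^ k)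
    (hx : f.map (Ideal.Quotient.mk J) ∣
      ∏ i, (Polynomial.X - Polynomial.C (Ideal.Quotient.mk J (x i))))
    (hroot : ∀ i, f.eval (x i) ∈ J) :
    GeneratedBy S (B ⧸ J.comap B.val)
      (k.choose f.natDegree * (f.natDegree.factorial * stirling2 n f.natDegree)) := by
  refine .of_nontrivial fun _ => ?_
  have : Nontrivial B := (Ideal.Quotient.mk (J.comap B.val)).domain_nontrivial
  have : Nontrivial P := Function.Injective.nontrivial (f := B.val) Subtype.val_injective
  set mk := Ideal.Quotient.mkₐ S (J.comap B.val)
  let ι : B ⧸ J.comap B.val →ₐ[S] P ⧸ J := Ideal.quotientMapₐ J B.val le_rfl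
  have hι : Function.Injective ι := Ideal.quotientMap_injective
  have coeff_mem (i : ℕ) : f.coeff i ∈ B := hB ▸ Algebra.subset_adjoin (.inl ⟨i, rfl⟩)
  have x_mem (i : Fin n) : x i ∈ B := hB ▸ Algebra.subset_adjoin (.inr ⟨i, rfl⟩)
  obtain ⟨g, hg, rfl⟩ := exists_monic_map_eq hf coeff_mem
  lift x to Fin n → B using x_mem
  have map_ι : (g.map mk.toRingHom).map ι.toRingHom =
      (g.map (algebraMap B P)).map (Ideal.Quotient.mk J) := by
    rw [Polynomial.map_map, Polynomial.map_map]
    rfl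
  have h := generatedBy_choose_mul (S := S) (x := fun i => mk (x i)) (k := k)
    (hg.map mk.toRingHom) ?_ ?_ ?_ ?_
  · rwa [hg.natDegree_map] at h ⊢
  · rw [← Polynomial.map_dvd_map ι.toRingHom hι (hg.map _), map_ι]
    simpa using hk
  · rw [← Polynomial.map_dvd_map ι.toRingHom hι (hg.map _), map_ι, Polynomial.map_prod]
    simp only [Polynomial.map_sub, Polynomial.map_X, Polynomial.map_C]
    exact hx
  · intro i
    rw [Polynomial.IsRoot]
    refine (Polynomial.eval_map_apply ..).trans (Ideal.Quotient.eq_zero_iff_mem.2 ?_)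
    have h : (g.map (algebraMap B P)).eval (algebraMap B P (x i)) ∈ J := hroot i
    rwa [Polynomial.eval_map_apply] at h
  · rw [← adjoin_image_eq_top (Ideal.Quotient.mkₐ_surjective S (J.comap B.val))
      (adjoin_eq_top_of_adjoin_image_eq (s := Set.range g.coeff ∪ Set.range x) ?_), Set.image_union,
      ← Set.range_comp, ← Set.range_comp]
    · congr 3
      ext i
      simp [mk]
    · rw [Set.image_union, image_val_range_coeff, ← Set.range_comp]
      exact hB

theorem mk_hY_eq_zero {n k d r : ℕ} (hr : k - d < r) :
    Ideal.Quotient.mk (Ideal.span (JgensQ n k d)) (hY n d r) = 0 :=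
  Ideal.Quotient.eq_zero_iff_mem.2 (Ideal.subset_span (.inl (.inl ⟨r, hr, rfl⟩)))

theorem mk_genXY_eq_zero {n k d r : ℕ} (hr : n - d < r) :
    Ideal.Quotient.mk (Ideal.span (JgensQ n k d)) (genXY n d r) = 0 :=
  Ideal.Quotient.eq_zero_iff_mem.2 (Ideal.subset_span (.inl (.inr ⟨r, hr, rfl⟩)))

theorem map_prodXSubY_dvd_X_pow {n k d : ℕ} (hdk : d ≤ k) :
    (prodXSubY n d).map (Ideal.Quotient.mk (Ideal.span (JgensQ n k d))) ∣ Polynomial.X ^ k := by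
  have h := prod_X_sub_C_dvd_X_pow ℚ (by simpa using hdk)
    (fun j => Ideal.Quotient.mk (Ideal.span (JgensQ n k d)) (X (Sum.inr j))) fun r hr => by
      rw [← mk_hY_eq_zero (by simpa using hr)]
      exact (map_hY (Ideal.Quotient.mkₐ ℚ (Ideal.span (JgensQ n k d))) r).symm
  simpa [prodXSubY, Polynomial.map_prod] using h

theorem map_prodXSubY_dvd_prod {n k d : ℕ} (hdn : d ≤ n) :
    (prodXSubY n d).map (Ideal.Quotient.mk (Ideal.span (JgensQ n k d))) ∣
      ∏ i, (Polynomial.X - Polynomial.C (Ideal.Quotient.mk _ (X (Sum.inl i)))) := by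
  have h := prod_X_sub_C_dvd_prod_X_sub_C ℚ (by simpa using hdn)
    (fun i => Ideal.Quotient.mk (Ideal.span (JgensQ n k d)) (X (Sum.inl i)))
    (fun j => Ideal.Quotient.mk (Ideal.span (JgensQ n k d)) (X (Sum.inr j))) fun r hr => by
      rw [← mk_genXY_eq_zero (by simpa using hr)]
      exact (map_genXY (Ideal.Quotient.mkₐ ℚ (Ideal.span (JgensQ n k d))) r).symm
  simpa [prodXSubY, Polynomial.map_prod] using h

theorem eval_prodXSubY {n d : ℕ} (i : Fin n) :
    (prodXSubY n d).eval (X (Sum.inl i)) = genPow n d i := by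
  simpa [prodXSubY, Polynomial.eval_prod] using (map_genPow (AlgHom.id ℚ _) i).symm

theorem generatedBy_invariant_quotient {n k d : ℕ} (hdk : d ≤ k) (hdn : d ≤ n) :
    GeneratedBy ℚ (invQ2 n d ⧸ Ideal.comap (invQ2 n d).val (Ideal.span (JgensQ n k d)))
      (k.choose d * (d.factorial * stirling2 n d)) := by
  have h := generatedBy_quotient_comap (Ideal.span (JgensQ n k d)) (monic_prodXSubY n d)
    adjoin_coeff_union_X_inl (map_prodXSubY_dvd_X_pow hdk) (map_prodXSubY_dvd_prod hdn) fun i => by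
      rw [eval_prodXSubY]
      exact Ideal.subset_span (.inr ⟨i, rfl⟩)
  rwa [natDegree_prodXSubY] at h

end UpperBound

/-! ### The lower bound -/

section Degeneration

open Polynomial

theorem finrank_le_finrank_quotient_of_X_smul {K V M : Type*} [Field K] [AddCommGroup V]
    [Module K V] [AddCommGroup M] [Module K M] [Module K[X] M] [IsScalarTower K K[X] M]
    [Module.Free K[X] M] [Module.Finite K[X] M] {f : V →ₗ[K] M}
    (hf : Submodule.span K[X] (Set.range f) = ⊤) {I : Submodule K V} [Module.Finite K (V ⧸ I)]
    (hI : ∀ v ∈ I, ∃ m : M, f v = (X : K[X]) • m) :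
    Module.finrank K[X] M ≤ Module.finrank K (V ⧸ I) := by
  let b := Module.finBasis K[X] M
  let atZero : M →ₛₗ[evalRingHom (0 : K)] (Fin (Module.finrank K[X] M) → K) :=
    { toFun := fun m i => (b.repr m i).eval 0
      map_add' := fun m m' => by ext i; simp
      map_smul' := fun c m => by ext i; simp }
  let L : V →ₗ[K] (Fin (Module.finrank K[X] M) → K) :=
    { toFun := fun v => atZero (f v)
      map_add' := fun v w => by simp
      map_smul' := fun c v => by
        rw [map_smul, ← algebraMap_smul K[X] c (f v), map_smulₛₗ]
        simp }
  have atZero_mem_range (m : M) : atZero m ∈ LinearMap.range L := by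
    have h : Submodule.span K[X] (Set.range f) ≤ (LinearMap.range L).comap atZero :=
      Submodule.span_le.2 (Set.range_subset_iff.2 fun v => ⟨v, rfl⟩)
    exact h (hf ▸ Submodule.mem_top)
  have surjective_L : Function.Surjective L := fun v => by
    have h : atZero (b.equivFun.symm fun i => C (v i)) = v := by
      ext i
      simp [atZero, -Module.Basis.equivFun_symm_apply, ← Module.Basis.equivFun_apply]
    exact h ▸ atZero_mem_range _
  have I_le_ker : I ≤ LinearMap.ker L := fun v hv => by
    obtain ⟨m, hm⟩ := hI v hv
    rw [LinearMap.mem_ker]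
    change atZero (f v) = 0
    simp [hm]
  have h := LinearMap.finrank_le_finrank_of_surjective (f := I.liftQ L I_le_ker) fun v => by
    obtain ⟨w, hw⟩ := surjective_L v
    exact ⟨I.mkQ w, hw⟩
  simpa using h

theorem module_finite_subalgebra {D A : Type*} [CommRing D] [IsNoetherianRing D] [CommRing A]
    [Algebra D A] [Module.Finite D A] (M : Subalgebra D A) : Module.Finite D M :=
  inferInstanceAs (Module.Finite D (Subalgebra.toSubmodule M))

theorem card_le_finrank_of_separates {D Z : Type*} [CommRing D] [IsDomain D] [IsNoetherianRing D]
    [Fintype Z] (M : Subalgebra D (Z → D)) (hM : ∀ z w, z ≠ w → ∃ m ∈ M, m z ≠ m w) :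
    Fintype.card Z ≤ Module.finrank D M := by
  classical
  have exists_single (z : Z) : ∃ c ≠ 0, Pi.single z c ∈ M := by
    choose m hm hne using fun w : {w // w ≠ z} => hM z w w.2.symm
    set q := ∏ w, (m w - algebraMap D (Z → D) (m w w)) with hq
    have q_mem : q ∈ M := prod_mem fun w _ => sub_mem (hm w) (M.algebraMap_mem _)
    have q_apply_self : q z ≠ 0 := by
      simpa [hq, Finset.prod_ne_zero_iff, sub_ne_zero] using fun w hw => hne ⟨w, hw⟩
    have q_apply (w : Z) (hw : w ≠ z) : q w = 0 := by
      rw [hq, Finset.prod_apply]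
      exact Finset.prod_eq_zero (Finset.mem_univ ⟨w, hw⟩) (by simp)
    refine ⟨q z, q_apply_self, ?_⟩
    convert q_mem
    ext w
    by_cases hw : w = z
    · simp [hw]
    · simp [hw, q_apply w hw]
  choose c hc hcM using exists_single
  have linearIndependent_single :
      LinearIndependent D fun z => (⟨Pi.single z (c z), hcM z⟩ : M) := by
    refine LinearIndependent.of_comp M.val.toLinearMap (Fintype.linearIndependent_iff.2 ?_)
    intro g hg z
    have h := congrFun hg z
    simpa [Finset.sum_apply, Pi.single_apply, hc z] using h
  have := module_finite_subalgebra M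
  exact linearIndependent_single.fintype_card_le_finrank

variable {K R A : Type*} [Field K] [CommRing R] [Algebra K R] [CommRing A] [Algebra K A]
  [Algebra K[X] A] [IsScalarTower K K[X] A]

/-- A `K`-algebra map into a `K[X]`-algebra, with codomain restricted to the `K[X]`-subalgebra that
its image generates. -/
def toAdjoin (ψ : R →ₐ[K] A) : R →ₐ[K] Algebra.adjoin K[X] (Set.range ψ) where
  toFun p := ⟨ψ p, Algebra.subset_adjoin ⟨p, rfl⟩⟩
  map_one' := Subtype.ext (map_one ψ)
  map_mul' p q := Subtype.ext (map_mul ψ p q)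
  map_zero' := Subtype.ext (map_zero ψ)
  map_add' p q := Subtype.ext (map_add ψ p q)
  commutes' c := Subtype.ext (ψ.commutes c)

theorem span_range_toAdjoin (ψ : R →ₐ[K] A) :
    Submodule.span K[X] (Set.range (toAdjoin ψ)) = ⊤ := by
  have h : Subalgebra.toSubmodule (Algebra.adjoin K[X] (Set.range ψ)) =
      Submodule.span K[X] (Set.range ψ) := by
    refine Algebra.adjoin_eq_span_of_subset _ (subset_trans ?_ Submodule.subset_span)
    exact (Submonoid.closure_le (S := MonoidHom.mrange ψ)).2 subset_rfl
  refine Submodule.map_injective_of_injective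
    (f := (Algebra.adjoin K[X] (Set.range ψ)).val.toLinearMap) Subtype.val_injective ?_
  rw [Submodule.map_span, ← Set.range_comp, Submodule.map_top]
  refine h.symm.trans ?_
  ext a
  simp

-- The image of `ψ` degenerates as `X → 0` to a quotient of `R` of dimension `finrank K[X] M`, where
-- `M` is the algebra generated by the image, and `M` has full rank in `Z → K[X]`.
theorem card_le_finrank_quotient_span {Z : Type*} [Fintype Z] {ψ : R →ₐ[K] (Z → K[X])}
    (hψ : ∀ z w, z ≠ w → ∃ p, ψ p z ≠ ψ p w) {s : Set R} [Module.Finite K (R ⧸ Ideal.span s)]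
    (hs : ∀ p ∈ s, algebraMap K[X] (Algebra.adjoin K[X] (Set.range ψ)) X ∣ toAdjoin ψ p) :
    Fintype.card Z ≤ Module.finrank K (R ⧸ Ideal.span s) := by
  have := module_finite_subalgebra (Algebra.adjoin K[X] (Set.range ψ))
  have : Module.Finite K (R ⧸ (Ideal.span s).restrictScalars K) :=
    ‹Module.Finite K (R ⧸ Ideal.span s)›
  refine (card_le_finrank_of_separates (Algebra.adjoin K[X] (Set.range ψ)) fun z w hzw => ?_).trans
    (finrank_le_finrank_quotient_of_X_smul (f := (toAdjoin ψ).toLinearMap)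
      (I := (Ideal.span s).restrictScalars K) (span_range_toAdjoin ψ) fun p hp => ?_)
  · obtain ⟨p, hp⟩ := hψ z w hzw
    exact ⟨ψ p, Algebra.subset_adjoin ⟨p, rfl⟩, hp⟩
  · have h : Ideal.span s ≤ (Ideal.span {algebraMap K[X] _ X}).comap (toAdjoin ψ) :=
      Ideal.span_le.2 fun p hp => Ideal.mem_span_singleton.2 (hs p hp)
    obtain ⟨m, hm⟩ := Ideal.mem_span_singleton.1 (h hp)
    exact ⟨m, hm.trans (Algebra.smul_def _ _).symm⟩

end Degeneration

section Configurations

variable {n k d : ℕ}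

/-- The functions `Fin n → Fin k` with exactly `d` values, viewed as words of length `n` in `k`
letters. They index the points at which invariants are evaluated. -/
abbrev WordWithLetters (n k d : ℕ) : Type :=
  {z : Fin n → Fin k // (Finset.univ.image z).card = d}

/-- The values of `z` in increasing order. -/
def letter (z : WordWithLetters n k d) : Fin d ↪o Fin k :=
  (Finset.univ.image z.1).orderEmbOfFin z.2

theorem range_letter (z : WordWithLetters n k d) : Set.range (letter z) = Set.range z.1 := by
  rw [letter, Finset.range_orderEmbOfFin, Finset.coe_image, Finset.coe_univ, Set.image_univ]

/-- The points `0, t, …, (k - 1) t` of the affine line over `ℚ[t]`; at `t = 0` they collide. -/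
noncomputable def collidingPoint (k : ℕ) (a : Fin k) : Polynomial ℚ :=
  Polynomial.C (a : ℚ) * Polynomial.X

theorem collidingPoint_injective : Function.Injective (collidingPoint k) := fun a b h => by
  simpa [collidingPoint, Fin.ext_iff] using h

theorem X_dvd_aeval_collidingPoint_esymm {r : ℕ} (hr : r ≠ 0) :
    Polynomial.X ∣ aeval (collidingPoint k) (esymm (Fin k) ℚ r) := by
  simp only [esymm, map_sum, map_prod, aeval_X]
  refine Finset.dvd_sum fun t ht => ?_
  obtain ⟨a, ha⟩ := Finset.card_pos.1 ((Finset.mem_powersetCard.1 ht).2 ▸ Nat.pos_of_ne_zero hr)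
  exact (dvd_mul_left _ _).trans (Finset.dvd_prod_of_mem (collidingPoint k) ha)

/-- Evaluation at the point `x = t z`, `y = t (values of z)` over `ℚ[t]`. -/
noncomputable def evalWord (z : WordWithLetters n k d) :
    MvPolynomial (Fin n ⊕ Fin d) ℚ →ₐ[ℚ] Polynomial ℚ :=
  aeval (Sum.elim (collidingPoint k ∘ z.1) (collidingPoint k ∘ letter z))

theorem evalWord_X_inl (z : WordWithLetters n k d) (i : Fin n) :
    evalWord z (X (Sum.inl i)) = collidingPoint k (z.1 i) := by
  simp [evalWord]

theorem evalWord_X_inr (z : WordWithLetters n k d) (j : Fin d) :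
    evalWord z (X (Sum.inr j)) = collidingPoint k (letter z j) := by
  simp [evalWord]

theorem evalWord_hY (r : ℕ) (z : WordWithLetters n k d) :
    evalWord z (hY n d r) = aeval (collidingPoint k ∘ letter z) (hsymm (Fin d) ℚ r) := by
  simp only [map_hY, evalWord_X_inr, Function.comp_def]

theorem evalWord_genXY {r : ℕ} (hr : n - d < r) (z : WordWithLetters n k d) :
    evalWord z (genXY n d r) = 0 := by
  choose e he using fun j => (range_letter z).le (Set.mem_range_self j)
  have e_injective : Function.Injective e := fun i j hij =>
    (letter z).injective (by rw [← he, ← he, hij])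
  have h := sum_esymm_mul_hsymm_eq_zero ℚ (collidingPoint k ∘ z.1) e_injective (by simpa using hr)
  simpa only [map_genXY, evalWord_X_inl, evalWord_X_inr, Function.comp_def, he] using h

theorem evalWord_genPow (i : Fin n) (z : WordWithLetters n k d) :
    evalWord z (genPow n d i) = 0 := by
  obtain ⟨j, hj⟩ := (range_letter z).ge (Set.mem_range_self i)
  rw [map_genPow]
  refine Finset.prod_eq_zero (Finset.mem_univ j) ?_
  rw [evalWord_X_inl, evalWord_X_inr, hj, sub_self]

variable (n k d) in
/-- Evaluation of an invariant at the points of all words at once. -/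
noncomputable def evalWords : invQ2 n d →ₐ[ℚ] (WordWithLetters n k d → Polynomial ℚ) :=
  (AlgHom.pi evalWord).comp (invQ2 n d).val

theorem evalWords_apply (p : invQ2 n d) (z : WordWithLetters n k d) :
    evalWords n k d p z = evalWord z p :=
  rfl

theorem exists_evalWords_ne {z w : WordWithLetters n k d} (h : z ≠ w) :
    ∃ p, evalWords n k d p z ≠ evalWords n k d p w := by
  obtain ⟨i, hi⟩ := Function.ne_iff.1 (Subtype.coe_ne_coe.2 h)
  refine ⟨⟨X (Sum.inl i), X_inl_mem_invQ2 i⟩, ?_⟩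
  rw [evalWords_apply, evalWords_apply, evalWord_X_inl, evalWord_X_inl]
  exact collidingPoint_injective.ne hi

variable (n k d) in
/-- The `ℚ[t]`-algebra generated by the values of the invariants at the points of all words. -/
noncomputable abbrev wordAlgebra :
    Subalgebra (Polynomial ℚ) (WordWithLetters n k d → Polynomial ℚ) :=
  Algebra.adjoin (Polynomial ℚ) (Set.range (evalWords n k d))

theorem toAdjoin_evalWords_apply (p : invQ2 n d) (z : WordWithLetters n k d) :
    (toAdjoin (evalWords n k d) p : WordWithLetters n k d → Polynomial ℚ) z = evalWord z p :=
  rfl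

theorem sum_esymm_mul_evalWords_hY {r : ℕ} (hr : k - d < r) :
    ∑ j ∈ Finset.range (r + 1), (-1) ^ j *
      (algebraMap (Polynomial ℚ) (wordAlgebra n k d)
        (aeval (collidingPoint k) (esymm (Fin k) ℚ (r - j))) *
        toAdjoin (evalWords n k d) ⟨hY n d j, hY_mem_invQ2 j⟩) = 0 := by
  refine Subtype.ext (funext fun z => ?_)
  have h := sum_esymm_mul_hsymm_eq_zero ℚ (collidingPoint k) (letter z).injective
    (r := r) (by simpa using hr)
  simpa only [AddSubmonoidClass.coe_finsetSum, MulMemClass.coe_mul, SubmonoidClass.coe_pow,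
    NegMemClass.coe_neg, OneMemClass.coe_one, ZeroMemClass.coe_zero, Subalgebra.coe_algebraMap,
    Finset.sum_apply, Pi.mul_apply, Pi.pow_apply, Pi.neg_apply, Pi.one_apply, Pi.zero_apply,
    Pi.algebraMap_apply, Algebra.algebraMap_self, RingHom.id_apply,
    toAdjoin_evalWords_apply, evalWord_hY] using h

-- The values of `z` are among the `k` colliding points, so the coefficients of the previous
-- relation do not depend on `z`; all of them except that of `hY n d r` vanish at `t = 0`.
theorem X_dvd_toAdjoin_evalWords_hY {r : ℕ} (hr : k - d < r) :
    algebraMap (Polynomial ℚ) (wordAlgebra n k d) Polynomial.X ∣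
      toAdjoin (evalWords n k d) ⟨hY n d r, hY_mem_invQ2 r⟩ := by
  have relation := sum_esymm_mul_evalWords_hY (n := n) hr
  rw [Finset.sum_range_succ, Nat.sub_self, esymm_zero, map_one, map_one, one_mul] at relation
  refine ((isUnit_one.neg.pow r).dvd_mul_left).1 ((dvd_add_right (Finset.dvd_sum fun j hj => ?_)).1
    (relation ▸ dvd_zero _))
  have X_dvd := map_dvd (algebraMap (Polynomial ℚ) (wordAlgebra n k d))
    (X_dvd_aeval_collidingPoint_esymm (k := k) (Nat.sub_ne_zero_of_lt (Finset.mem_range.1 hj)))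
  exact (X_dvd.mul_right _).mul_left _

theorem X_dvd_toAdjoin_evalWords {p : invQ2 n d} (hp : (p : MvPolynomial _ ℚ) ∈ JgensQ n k d) :
    algebraMap (Polynomial ℚ) (wordAlgebra n k d) Polynomial.X ∣ toAdjoin (evalWords n k d) p := by
  have dvd_of_evalWord_eq_zero (h : ∀ z : WordWithLetters n k d, evalWord z p = 0) :
      algebraMap (Polynomial ℚ) (wordAlgebra n k d) Polynomial.X ∣ toAdjoin (evalWords n k d) p :=
    (dvd_zero _).trans (Subtype.ext (funext h)).symm.dvd
  obtain ⟨p, p_mem⟩ := p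
  rcases hp with (⟨r, hr, rfl⟩ | ⟨r, hr, rfl⟩) | ⟨i, rfl⟩
  · exact X_dvd_toAdjoin_evalWords_hY hr
  · exact dvd_of_evalWord_eq_zero (evalWord_genXY hr)
  · exact dvd_of_evalWord_eq_zero (evalWord_genPow i)

theorem card_wordWithLetters_le_finrank (hdk : d ≤ k) (hdn : d ≤ n) :
    Fintype.card (WordWithLetters n k d) ≤ Module.finrank ℚ
      (invQ2 n d ⧸ Ideal.comap (invQ2 n d).val (Ideal.span (JgensQ n k d))) := by
  have := (generatedBy_invariant_quotient (n := n) hdk hdn).module_finite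
  rw [comap_span_JgensQ] at this ⊢
  exact card_le_finrank_quotient_span (fun _ _ => exists_evalWords_ne) fun _ =>
    X_dvd_toAdjoin_evalWords

end Configurations

/-! ### Counting words by their number of letters -/

section Counting

variable {n k d : ℕ}

theorem image_cons {α : Type*} [DecidableEq α] (a : α) (w : Fin n → α) :
    Finset.univ.image (Fin.cons a w : Fin (n + 1) → α) = insert a (Finset.univ.image w) := by
  ext b
  simp [Fin.exists_fin_succ, eq_comm]

theorem card_wordWithLetters : Fintype.card (WordWithLetters n k d) =
    ∑ z : Fin n → Fin k, if (Finset.univ.image z).card = d then 1 else 0 := by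
  rw [Fintype.card_subtype, Finset.card_filter]

theorem sum_ite_card_insert_eq {α : Type*} [Fintype α] [DecidableEq α] (S : Finset α) (d : ℕ) :
    (∑ a, if (insert a S).card = d + 1 then 1 else 0) =
      (d + 1) * (if S.card = d + 1 then 1 else 0) +
        (Fintype.card α - d) * (if S.card = d then 1 else 0) := by
  have sum_mem : (∑ a ∈ S, if (insert a S).card = d + 1 then 1 else 0) =
      ∑ a ∈ S, if S.card = d + 1 then 1 else 0 :=
    Finset.sum_congr rfl fun a ha => by rw [Finset.insert_eq_of_mem ha]
  have sum_notMem : (∑ a ∈ Sᶜ, if (insert a S).card = d + 1 then 1 else 0) =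
      ∑ a ∈ Sᶜ, if S.card = d then 1 else 0 :=
    Finset.sum_congr rfl fun a ha => by
      simp only [Finset.card_insert_of_notMem (Finset.mem_compl.1 ha), add_left_inj]
  rw [← Finset.sum_add_sum_compl S, sum_mem, sum_notMem, Finset.sum_const, Finset.sum_const,
    Finset.card_compl]
  grind

theorem card_wordWithLetters_succ : Fintype.card (WordWithLetters (n + 1) k (d + 1)) =
    (d + 1) * Fintype.card (WordWithLetters n k (d + 1)) +
      (k - d) * Fintype.card (WordWithLetters n k d) := by
  simp only [card_wordWithLetters]
  rw [← (Fin.consEquiv fun _ : Fin (n + 1) => Fin k).sum_comp, Fintype.sum_prod_type_right,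
    Finset.mul_sum, Finset.mul_sum, ← Finset.sum_add_distrib]
  refine Finset.sum_congr rfl fun w _ => ?_
  have h := sum_ite_card_insert_eq (Finset.univ.image w) d
  simp only [Fintype.card_fin, ← image_cons] at h
  exact h

theorem card_wordWithLetters_eq (n k d : ℕ) :
    Fintype.card (WordWithLetters n k d) = k.descFactorial d * stirling2 n d := by
  induction n generalizing d with
  | zero => cases d <;> simp [card_wordWithLetters, stirling2]
  | succ n ih =>
    cases d with
    | zero => simp [card_wordWithLetters, stirling2, Finset.univ_nonempty.ne_empty]
    | succ d =>
      rw [card_wordWithLetters_succ, ih, ih, Nat.descFactorial_succ, stirling2]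
      ring

end Counting

theorem finrank_invariant_quotient_general (n k d : ℕ) (hdk : d ≤ k) (hdn : d ≤ n) :
    Module.finrank ℚ
      (invQ2 n d ⧸ Ideal.comap (invQ2 n d).val (Ideal.span (JgensQ n k d))) =
      Nat.factorial k / Nat.factorial (k - d) * stirling2 n d := by
  rw [← Nat.descFactorial_eq_div hdk]
  apply le_antisymm
  · rw [Nat.descFactorial_eq_factorial_mul_choose, mul_comm d.factorial, mul_assoc]
    exact (generatedBy_invariant_quotient hdk hdn).finrank_le
  · rw [← card_wordWithLetters_eq]
    exact card_wordWithLetters_le_finrank hdk hdn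

/-- For `n ≥ k ≥ d ≥ 1`, the quotient of the invariant ring
`ℚ[x,y]^{S_d}` by `J_{n,k,d}^ℚ ∩ ℚ[x,y]^{S_d}` has `ℚ`-dimension
`(k!/(k−d)!)·Stir(n,d)`. -/
theorem finrank_invariant_quotient (n k d : ℕ) (hd : 1 ≤ d) (hk : d ≤ k) (hn : k ≤ n) :
    Module.finrank ℚ
      (↥(invQ2 n d) ⧸ Ideal.comap (invQ2 n d).val (Ideal.span (JgensQ n k d))) =
      Nat.factorial k / Nat.factorial (k - d) * stirling2 n d :=
  finrank_invariant_quotient_general n k d hk (hk.trans hn)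
end
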